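/- Let n > 1 be an integer, F and G division rings, φ : F → Mₙ(G) a ring embedding, and a, b positive integers with a + b = n + 1 and a ∈ {1, 2, n−1, n}. Then for every a×b matrix A over G there exist division rings F′ and G′, ring embeddings ι_F : F → F′, ι_G : G → G′, and φ′ : F′ → Mₙ(G′) such that φ′(ι_F(f)) equals φ(f) with ι_G applied entrywise for every f ∈ F, and such that some f′ ∈ F′ has the property that the upper right a×b block of φ′(f′) (rows 1,…,a, columns a,…,n) equals A with ι_G applied entrywise. (That is, Conjecture A holds for a ∈ {1, 2, n−1, n}.) -/

import Mathlib

/-- A witness for Conjecture A: division ring extensions `F ⊆ F′`, `G ⊆ G′` and an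
embedding `φ′ : F′ → Mₙ(G′)` extending `φ` whose image contains a matrix whose
upper-right `a × (n+1-a)` block is the prescribed block of `A`. -/
structure ConjAWitness (n : ℕ) (F G : Type) [DivisionRing F] [DivisionRing G]
    (φ : F →+* Matrix (Fin n) (Fin n) G) (a : ℕ) (A : Matrix (Fin n) (Fin n) G) :
    Type 1 where
  F' : Type
  G' : Type
  [instF' : DivisionRing F']
  [instG' : DivisionRing G']
  ιF : F →+* F'
  ιG : G →+* G'
  injF : Function.Injective ιF
  injG : Function.Injective ιG
  φ' : F' →+* Matrix (Fin n) (Fin n) G'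
  injφ' : Function.Injective φ'
  compat : ∀ x : F, φ' (ιF x) = (φ x).map ⇑ιG
  exists_block : ∃ f' : F', ∀ i j : Fin n,
    (i : ℕ) < a → a ≤ (j : ℕ) + 1 → φ' f' i j = ιG (A i j)

set_option linter.unusedSectionVars false

structure RankDat (Λ : Type) [Ring Λ] where
  good : ∀ (M : Type) [AddCommGroup M] [Module Λ M], Prop
  χ : ∀ (M : Type) [AddCommGroup M] [Module Λ M], ℤ
  good_inj : ∀ {M N : Type} [AddCommGroup M] [Module Λ M] [AddCommGroup N] [Module Λ N]
    (f : M →ₗ[Λ] N), Function.Injective f → good N → good M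
  good_surj : ∀ {M N : Type} [AddCommGroup M] [Module Λ M] [AddCommGroup N] [Module Λ N]
    (f : M →ₗ[Λ] N), Function.Surjective f → good M → good N
  good_prod : ∀ {M N : Type} [AddCommGroup M] [Module Λ M] [AddCommGroup N] [Module Λ N],
    good M → good N → good (M × N)
  fin : ∀ {M : Type} [AddCommGroup M] [Module Λ M], good M → Module.Finite Λ M
  χ_add : ∀ {M : Type} [AddCommGroup M] [Module Λ M] (N : Submodule Λ M), good M →
    χ M = χ N + χ (M ⧸ N)
  χ_eq : ∀ {M N : Type} [AddCommGroup M] [Module Λ M] [AddCommGroup N] [Module Λ N],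
    (M ≃ₗ[Λ] N) → χ M = χ N

namespace RankDat

variable {Λ : Type} [Ring Λ] (R : RankDat Λ)

structure Stab (M : Type) [AddCommGroup M] [Module Λ M] : Prop where
  good : R.good M
  one : R.χ M = 1
  pos : ∀ s : Submodule Λ M, s ≠ ⊥ → 1 ≤ R.χ s

structure Null (M : Type) [AddCommGroup M] [Module Λ M] : Prop where
  good : R.good M
  zero : R.χ M = 0
  nonneg : ∀ s : Submodule Λ M, 0 ≤ R.χ s

structure Loc (U : Type) [AddCommGroup U] [Module Λ U] : Prop where
  null : ∀ (L : Type) [AddCommGroup L] [Module Λ L], R.Null L → ∀ f : L →ₗ[Λ] U, f = 0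
  ext : ∀ (M M' : Type) [AddCommGroup M] [Module Λ M] [AddCommGroup M'] [Module Λ M']
    (j : M →ₗ[Λ] M'), R.good M' → Function.Injective j → R.Null (M' ⧸ LinearMap.range j) →
    ∀ f : M →ₗ[Λ] U, ∃ f' : M' →ₗ[Λ] U, f' ∘ₗ j = f

structure Gen {I V : Type} [AddCommGroup I] [Module Λ I] [AddCommGroup V] [Module Λ V]
    (i : I →ₗ[Λ] V) : Prop where
  stab : R.Stab I
  inj : Function.Injective i
  cov : ∀ S : Submodule Λ V, S.FG → ∃ N : Submodule Λ V, S ≤ N ∧ R.Stab N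
  obj : ∀ (N : Type) [AddCommGroup N] [Module Λ N], R.Stab N → ∀ p : I →ₗ[Λ] N, p ≠ 0 →
    ∃ h : N →ₗ[Λ] V, h ∘ₗ p = i
  univ : ∀ (U : Type) [AddCommGroup U] [Module Λ U], R.Loc U → ∀ g : I →ₗ[Λ] U,
    ∃! h : V →ₗ[Λ] U, h ∘ₗ i = g

variable {R}
variable {M N M' : Type} [AddCommGroup M] [Module Λ M] [AddCommGroup N] [Module Λ N]
  [AddCommGroup M'] [Module Λ M']

theorem good_sub (h : R.good M) (s : Submodule Λ M) : R.good s :=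
  R.good_inj s.subtype s.subtype_injective h

theorem good_quot (h : R.good M) (s : Submodule Λ M) : R.good (M ⧸ s) :=
  R.good_surj s.mkQ s.mkQ_surjective h

theorem noeth (h : R.good M) : IsNoetherian Λ M :=
  ⟨fun s => Module.Finite.iff_fg.1 (R.fin (good_sub h s))⟩

theorem χ_subsing [Subsingleton M] : R.χ M = 0 ∨ ¬ R.good M := by
  by_cases h : R.good M
  · left
    have h1 := R.χ_add (⊤ : Submodule Λ M) h
    rw [R.χ_eq (Submodule.topEquiv : (⊤ : Submodule Λ M) ≃ₗ[Λ] M)] at h1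
    have h2 : R.χ (M ⧸ (⊤ : Submodule Λ M)) = R.χ M := R.χ_eq (
      { toFun := fun _ => 0, invFun := fun _ => 0, map_add' := by simp, map_smul' := by simp,
        left_inv := fun _ => Subsingleton.elim _ _, right_inv := fun _ => Subsingleton.elim _ _ })
    omega
  · exact Or.inr h

theorem χ_bot (h : R.good M) : R.χ (⊥ : Submodule Λ M) = 0 := by
  rcases χ_subsing (R := R) (M := (⊥ : Submodule Λ M)) with h1 | h1
  · exact h1
  · exact absurd (good_sub h _) h1

theorem χ_ker_range (h : R.good M) (f : M →ₗ[Λ] N) :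
    R.χ M = R.χ (LinearMap.ker f) + R.χ (LinearMap.range f) := by
  rw [R.χ_add (LinearMap.ker f) h, R.χ_eq f.quotKerEquivRange]

theorem χ_range (f : M →ₗ[Λ] N) (hf : Function.Injective f) :
    R.χ (LinearMap.range f) = R.χ M := (R.χ_eq (LinearEquiv.ofInjective f hf)).symm

theorem χ_comap_sub (t k : Submodule Λ M) :
    R.χ (k.comap t.subtype) = R.χ (t ⊓ k : Submodule Λ M) := by
  rw [← Submodule.map_comap_subtype]
  exact R.χ_eq (Submodule.equivMapOfInjective _ t.subtype_injective _)

theorem χ_map (t : Submodule Λ M) (f : M →ₗ[Λ] N) (hf : Function.Injective f) :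
    R.χ (t.map f) = R.χ t :=
  (R.χ_eq (Submodule.equivMapOfInjective f hf t)).symm

theorem χ_sub (h : R.good M) (t : Submodule Λ M) (f : M →ₗ[Λ] N) :
    R.χ t = R.χ (t ⊓ LinearMap.ker f : Submodule Λ M) + R.χ (t.map f) := by
  rw [χ_ker_range (good_sub h t) (f.domRestrict t), LinearMap.range_domRestrict,
    LinearMap.ker_domRestrict, χ_comap_sub]

theorem χ_prod (hM : R.good M) (hN : R.good N) : R.χ (M × N) = R.χ M + R.χ N := by
  rw [χ_ker_range (R.good_prod hM hN) (LinearMap.snd Λ M N), LinearMap.range_eq_top.2 LinearMap.snd_surjective,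
    R.χ_eq Submodule.topEquiv, LinearMap.ker_snd, χ_range _ LinearMap.inl_injective]

theorem Stab.ne (h : R.Stab M) : Nontrivial M := by
  by_contra hc
  rw [not_nontrivial_iff_subsingleton] at hc
  rcases χ_subsing (R := R) (M := M) with h1 | h1
  · have := h.one; omega
  · exact h1 h.good

theorem Stab.inj (hM : R.Stab M) (hN : R.Stab N) (f : M →ₗ[Λ] N) (hf : f ≠ 0) :
    Function.Injective f := by
  rw [← LinearMap.ker_eq_bot]
  by_contra hk
  have h1 := hM.pos _ hk
  have h2 := χ_ker_range hM.good f
  have h3 := hN.pos (LinearMap.range f) (by rwa [Ne, LinearMap.range_eq_bot])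
  have := hM.one
  omega

theorem le_comap_mkQ (t : Submodule Λ M) (s : Submodule Λ (M ⧸ t)) : t ≤ s.comap t.mkQ := by
  intro x hx
  simp [(Submodule.Quotient.mk_eq_zero _).2 hx]

theorem Stab.null (hM : R.Stab M) (hN : R.Stab N) (f : M →ₗ[Λ] N) (hf : f ≠ 0) :
    R.Null (N ⧸ LinearMap.range f) := by
  have hi := hM.inj hN f hf
  refine ⟨good_quot hN.good _, ?_, ?_⟩
  · have := R.χ_add (LinearMap.range f) hN.good
    rw [χ_range f hi, hM.one, hN.one] at this
    omega
  · intro s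
    set s' := s.comap (LinearMap.range f).mkQ with hs'
    have h1 := χ_sub hN.good s' (LinearMap.range f).mkQ
    rw [hs', Submodule.map_comap_eq_of_surjective (Submodule.mkQ_surjective _),
      Submodule.ker_mkQ, inf_eq_right.2 (le_comap_mkQ _ _), χ_range f hi, hM.one] at h1
    have h2 : s' ≠ ⊥ := by
      intro h
      have : LinearMap.range f ≤ s' := le_comap_mkQ _ _
      rw [h, le_bot_iff, LinearMap.range_eq_bot] at this
      exact hf this
    have h4 := hN.pos _ h2
    rw [hs'] at h4
    omega

theorem Null.range (h : R.Null M) (f : M →ₗ[Λ] N) : R.χ (LinearMap.range f) ≤ 0 := by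
  have h2 := χ_ker_range h.good f
  have := h.nonneg (LinearMap.ker f)
  rw [h.zero] at h2
  omega

theorem Stab.equiv (h : R.Stab M) (e : M ≃ₗ[Λ] N) : R.Stab N := by
  refine ⟨R.good_surj e.toLinearMap e.surjective h.good, by rw [← R.χ_eq e, h.one], ?_⟩
  intro s hs
  rw [← χ_map s e.symm.toLinearMap e.symm.injective]
  apply h.pos
  intro h0
  apply hs
  rw [Submodule.eq_bot_iff]
  intro x hx
  have : e.symm x ∈ Submodule.map e.symm.toLinearMap s := ⟨x, hx, rfl⟩
  rw [h0, Submodule.mem_bot] at this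
  simpa using this

theorem ore (hN : R.Stab N) (j : M →ₗ[Λ] M') (hM' : R.good M') (hj : Function.Injective j)
    (hL : R.Null (M' ⧸ LinearMap.range j)) (f : M →ₗ[Λ] N) :
    ∃ (N' : Type) (_ : AddCommGroup N') (_ : Module Λ N') (_ : R.Stab N') (a : N →ₗ[Λ] N')
      (b : M' →ₗ[Λ] N'), Function.Injective a ∧ b ∘ₗ j = a ∘ₗ f := by
  let K : Submodule Λ (N × M') := LinearMap.range (f.prod (-j))
  let P := (N × M') ⧸ K
  let a0 : N →ₗ[Λ] P := K.mkQ ∘ₗ LinearMap.inl Λ N M'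
  let b0 : M' →ₗ[Λ] P := K.mkQ ∘ₗ LinearMap.inr Λ N M'
  have hab : b0 ∘ₗ j = a0 ∘ₗ f := by
    ext m
    symm
    refine (Submodule.Quotient.eq K).2 ⟨m, by simp⟩
  have ha0 : Function.Injective a0 := by
    rw [injective_iff_map_eq_zero]
    intro x hx
    obtain ⟨m, hm⟩ := (Submodule.Quotient.mk_eq_zero K).1 hx
    simp only [LinearMap.prod_apply, Function.prod_apply, LinearMap.neg_apply, LinearMap.inl_apply,
      Prod.mk.injEq, neg_eq_zero] at hm
    have : m = 0 := hj (by rw [hm.2, map_zero])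
    rw [← hm.1, this, map_zero]
  have hgP : R.good P := good_quot (R.good_prod hN.good hM') K
  have hgM : R.good M := R.good_inj j hj hM'
  have hKi : Function.Injective (f.prod (-j)) := by
    rw [injective_iff_map_eq_zero]
    intro x hx
    simp only [LinearMap.prod_apply, Function.prod_apply, LinearMap.neg_apply, Prod.mk_eq_zero,
      neg_eq_zero] at hx
    exact hj (by rw [hx.2, map_zero])
  have hP1 : R.χ P = 1 := by
    have h1 := R.χ_add K (R.good_prod hN.good hM')
    rw [χ_prod hN.good hM', χ_range _ hKi, hN.one] at h1
    have h2 := R.χ_add (LinearMap.range j) hM'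
    rw [χ_range _ hj, hL.zero] at h2
    change _ = _ + R.χ P at h1
    omega
  let q : P →ₗ[Λ] M' ⧸ LinearMap.range j :=
    K.liftQ ((LinearMap.range j).mkQ ∘ₗ LinearMap.snd Λ N M') (by
      rintro _ ⟨m, rfl⟩
      simp)
  have hq : LinearMap.ker q = LinearMap.range a0 := by
    ext x
    obtain ⟨⟨u, v⟩, rfl⟩ := Submodule.mkQ_surjective K x
    constructor
    · intro h
      have h : (LinearMap.range j).mkQ v = 0 := h
      rw [Submodule.mkQ_apply, Submodule.Quotient.mk_eq_zero] at h
      obtain ⟨m, rfl⟩ := h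
      refine ⟨u + f m, ?_⟩
      refine (Submodule.Quotient.eq K).2 ⟨m, by simp⟩
    · rintro ⟨n, hn⟩
      rw [← hn]
      change (LinearMap.range j).mkQ 0 = 0
      simp
  have key : ∀ t : Submodule Λ P, 0 ≤ R.χ t ∧ (R.χ t = 0 → t.comap a0 = ⊥) := by
    intro t
    have h1 := χ_sub hgP t q
    have h2 := hL.nonneg (t.map q)
    rw [hq, inf_comm, ← Submodule.map_comap_eq, χ_map _ _ ha0] at h1
    by_cases h0 : t.comap a0 = ⊥
    · rw [h0, χ_bot hN.good] at h1
      exact ⟨by omega, fun _ => h0⟩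
    · have := hN.pos _ h0
      exact ⟨by omega, fun h => by omega⟩
  have := noeth hgP
  obtain ⟨t, ht0, htm⟩ := (set_has_maximal_iff_noetherian (R := Λ) (M := P)).2 this
    {t | R.χ t = 0} ⟨⊥, χ_bot hgP⟩
  have hker : LinearMap.ker (t.mkQ ∘ₗ a0) = ⊥ := by
    rw [LinearMap.ker_comp, Submodule.ker_mkQ]; exact (key t).2 ht0
  refine ⟨P ⧸ t, inferInstance, inferInstance, ⟨good_quot hgP t, ?_, ?_⟩, t.mkQ ∘ₗ a0, t.mkQ ∘ₗ b0,
    LinearMap.ker_eq_bot.1 hker, ?_⟩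
  · have h1 := R.χ_add t hgP
    have : R.χ t = 0 := ht0
    omega
  · intro s hs
    have hle : t ≤ s.comap t.mkQ := le_comap_mkQ _ _
    have h1 := χ_sub hgP (s.comap t.mkQ) t.mkQ
    rw [Submodule.map_comap_eq_of_surjective (Submodule.mkQ_surjective _),
      Submodule.ker_mkQ, inf_eq_right.2 hle] at h1
    have h0 : R.χ t = 0 := ht0
    have h2 := (key (s.comap t.mkQ)).1
    have h3 : R.χ (s.comap t.mkQ) ≠ 0 := by
      intro h
      have h4 := htm _ h
      have h5 : s.comap t.mkQ = t := (eq_of_le_of_not_lt hle h4).symm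
      apply hs
      rw [← Submodule.map_comap_eq_of_surjective (Submodule.mkQ_surjective t) s, h5]
      simp
    omega
  · rw [LinearMap.comp_assoc, hab]; rfl

theorem Loc.uniq {U : Type} [AddCommGroup U] [Module Λ U] (hU : R.Loc U) (j : M →ₗ[Λ] M')
    (hL : R.Null (M' ⧸ LinearMap.range j)) (f g : M' →ₗ[Λ] U) (h : f ∘ₗ j = g ∘ₗ j) : f = g := by
  have h1 : LinearMap.range j ≤ LinearMap.ker (f - g) := by
    rintro _ ⟨m, rfl⟩
    have := LinearMap.congr_fun h m
    simpa [sub_eq_zero] using this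
  have h2 := hU.null _ hL ((LinearMap.range j).liftQ (f - g) h1)
  have h3 : f - g = 0 := by
    rw [← (LinearMap.range j).liftQ_mkQ (f - g) h1, h2]; simp
  exact sub_eq_zero.1 h3

end RankDat

namespace RankDat

variable {Λ : Type} [Ring Λ] {R : RankDat Λ}

theorem Null.hom_zero {L V : Type} [AddCommGroup L] [Module Λ L] [AddCommGroup V] [Module Λ V]
    (cov : ∀ S : Submodule Λ V, S.FG → ∃ N : Submodule Λ V, S ≤ N ∧ R.Stab N)
    (hL : R.Null L) (f : L →ₗ[Λ] V) : f = 0 := by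
  have := R.fin hL.good
  obtain ⟨N, hN, hs⟩ := cov (LinearMap.range f) (by
    rw [LinearMap.range_eq_map]; exact (Module.Finite.fg_top).map f)
  rw [← LinearMap.range_eq_bot]
  by_contra h
  let g : L →ₗ[Λ] N := f.codRestrict N (fun c => hN ⟨c, rfl⟩)
  have h1 : LinearMap.range g ≠ ⊥ := by
    intro h0
    apply h
    rw [LinearMap.range_eq_bot] at h0 ⊢
    ext x
    have := LinearMap.congr_fun h0 x
    simpa [g] using congrArg Subtype.val this
  have h2 := hs.pos _ h1
  have := hL.range g
  omega

namespace Gen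
variable {I V : Type} [AddCommGroup I] [Module Λ I] [AddCommGroup V] [Module Λ V]
    {i : I →ₗ[Λ] V} (h : R.Gen i)
include h

theorem covI (S : Submodule Λ V) (hS : S.FG) : ∃ (N : Submodule Λ V) (i' : I →ₗ[Λ] N), S ≤ N ∧
    R.Stab N ∧ N.subtype ∘ₗ i' = i ∧ i' ≠ 0 := by
  have := R.fin h.stab.good
  have h1 : (LinearMap.range i).FG := by
    rw [LinearMap.range_eq_map]; exact (Module.Finite.fg_top).map i
  obtain ⟨N, hN, hs⟩ := h.cov (S ⊔ LinearMap.range i) (hS.sup h1)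
  refine ⟨N, i.codRestrict N (fun c => hN (le_sup_right (a := S) ⟨c, rfl⟩)), le_sup_left.trans hN,
    hs, by ext; rfl, ?_⟩
  intro h0
  have := h.stab.ne
  obtain ⟨x, hx⟩ := exists_ne (0 : I)
  apply hx
  apply h.inj
  have := LinearMap.congr_fun h0 x
  simpa using congrArg Subtype.val this

theorem loc : R.Loc V := by
  refine ⟨fun L _ _ hL f => hL.hom_zero h.cov f, ?_⟩
  intro M M' _ _ _ _ j hM' hj hL f
  have := R.fin (R.good_inj j hj hM')
  obtain ⟨N, i', hN, hs, hi', hi0⟩ := h.covI (LinearMap.range f) (by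
    rw [LinearMap.range_eq_map]; exact (Module.Finite.fg_top).map f)
  let f' : M →ₗ[Λ] N := f.codRestrict N (fun c => hN ⟨c, rfl⟩)
  obtain ⟨N', _, _, hN', a, b, ha, hab⟩ := ore hs j hM' hj hL f'
  obtain ⟨g, hg⟩ := h.obj N' hN' (a ∘ₗ i') (by
    intro h0
    apply hi0
    ext x
    have := LinearMap.congr_fun h0 x
    simp only [LinearMap.comp_apply, LinearMap.zero_apply] at this
    rw [ha (this.trans (map_zero a).symm)]
    simp)
  have hL2 := h.stab.null hs i' hi0
  have h3 : g ∘ₗ a = N.subtype := by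
    have h4 : g ∘ₗ a - N.subtype = 0 := by
      have h5 : LinearMap.range i' ≤ LinearMap.ker (g ∘ₗ a - N.subtype) := by
        rintro _ ⟨m, rfl⟩
        have h6 := LinearMap.congr_fun hg m
        have h7 := LinearMap.congr_fun hi' m
        simp only [LinearMap.comp_apply] at h6 h7
        simp only [LinearMap.mem_ker, LinearMap.sub_apply, LinearMap.comp_apply, h6, h7, sub_self]
      rw [← (LinearMap.range i').liftQ_mkQ _ h5, hL2.hom_zero h.cov ((LinearMap.range i').liftQ _ h5)]
      simp
    exact sub_eq_zero.1 h4
  refine ⟨g ∘ₗ b, ?_⟩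
  rw [LinearMap.comp_assoc, hab, ← LinearMap.comp_assoc, h3]
  ext; rfl

theorem ext {U : Type} [AddCommGroup U] [Module Λ U] (hU : R.Loc U) {f g : V →ₗ[Λ] U}
    (hfg : f ∘ₗ i = g ∘ₗ i) : f = g := (h.univ U hU (g ∘ₗ i)).unique hfg rfl

theorem one_dim {M : Type} [AddCommGroup M] [Module Λ M] (hM : R.Stab M) (a b : M →ₗ[Λ] V)
    (ha : a ≠ 0) : ∃ d : V →ₗ[Λ] V, d ∘ₗ a = b := by
  have := R.fin hM.good
  obtain ⟨N, i', hN, hs, hi', hi0⟩ := h.covI (LinearMap.range a) (by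
    rw [LinearMap.range_eq_map]; exact (Module.Finite.fg_top).map a)
  let a' : M →ₗ[Λ] N := a.codRestrict N (fun c => hN ⟨c, rfl⟩)
  have haa : N.subtype ∘ₗ a' = a := by ext; rfl
  have ha' : a' ≠ 0 := by
    intro h0; apply ha; rw [← haa, h0]; simp
  obtain ⟨b0, hb0⟩ := h.loc.ext _ _ a' hs.good (hM.inj hs a' ha') (hM.null hs a' ha') b
  obtain ⟨d, hd, -⟩ := h.univ V h.loc (b0 ∘ₗ i')
  have h1 : d ∘ₗ N.subtype = b0 := by
    apply h.loc.uniq i' (h.stab.null hs i' hi0)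
    rw [LinearMap.comp_assoc, hi', hd]
  exact ⟨d, by rw [← haa, ← LinearMap.comp_assoc, h1, hb0]⟩

theorem i_ne : i ≠ 0 := by
  have := h.stab.ne
  obtain ⟨x, hx⟩ := exists_ne (0 : I)
  intro h0
  exact hx (h.inj (by simp [h0]))

theorem left_inv (θ : Module.End Λ V) (hθ : θ ≠ 0) : ∃ d : Module.End Λ V, d * θ = 1 := by
  have h1 : θ ∘ₗ i ≠ 0 := by
    intro h0
    apply hθ
    exact h.ext h.loc (by rw [h0]; simp)
  obtain ⟨d, hd⟩ := h.one_dim h.stab (θ ∘ₗ i) i h1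
  exact ⟨d, h.ext h.loc hd⟩

theorem nontriv : Nontrivial (Module.End Λ V) := by
  refine ⟨⟨1, 0, ?_⟩⟩
  intro h0
  apply h.i_ne
  ext x
  simpa using LinearMap.congr_fun h0 (i x)

theorem isUnit_or (θ : Module.End Λ V) : IsUnit θ ∨ θ = 0 := by
  have := h.nontriv
  by_cases hθ : θ = 0
  · exact Or.inr hθ
  left
  obtain ⟨d, hd⟩ := h.left_inv θ hθ
  obtain ⟨e, he⟩ := h.left_inv d (by rintro rfl; simp at hd)
  have : e = θ := by
    calc e = e * (d * θ) := by rw [hd, mul_one]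
      _ = θ := by rw [← mul_assoc, he, one_mul]
  rw [this] at he
  exact ⟨⟨θ, d, he, hd⟩, rfl⟩

end Gen

/-! existence -/
variable (R) in
structure PObj (I : Type) [AddCommGroup I] [Module Λ I] where
  k : ℕ
  K : Submodule Λ (Fin k → Λ)
  stab : R.Stab ((Fin k → Λ) ⧸ K)
  pt : I →ₗ[Λ] ((Fin k → Λ) ⧸ K)
  ne : pt ≠ 0

namespace PObj
variable {I : Type} [AddCommGroup I] [Module Λ I]

abbrev C (X : PObj R I) : Type := (Fin X.k → Λ) ⧸ X.K

theorem exists_of {N : Type} [AddCommGroup N] [Module Λ N] (hN : R.Stab N) (p : I →ₗ[Λ] N)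
    (hp : p ≠ 0) : ∃ (X : PObj R I) (e : X.C ≃ₗ[Λ] N), e.toLinearMap ∘ₗ X.pt = p := by
  have := R.fin hN.good
  obtain ⟨k, f, hf⟩ := Module.Finite.exists_fin' Λ N
  let e := f.quotKerEquivOfSurjective hf
  refine ⟨⟨k, LinearMap.ker f, hN.equiv e.symm, e.symm.toLinearMap ∘ₗ p, ?_⟩, e, ?_⟩
  · intro h0
    apply hp
    ext x
    simpa using LinearMap.congr_fun h0 x
  · ext x; simp

theorem hom_uniq {X Y : PObj R I} {f g : X.C →ₗ[Λ] Y.C} (h : f ∘ₗ X.pt = g ∘ₗ X.pt) : f = g := by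
  by_contra hn
  have h1 := X.stab.inj Y.stab (f - g) (sub_ne_zero.2 hn)
  apply X.ne
  ext x
  apply h1
  have := LinearMap.congr_fun h x
  simpa [sub_eq_zero] using this

instance : Preorder (PObj R I) where
  le X Y := ∃ f : X.C →ₗ[Λ] Y.C, f ∘ₗ X.pt = Y.pt
  le_refl X := ⟨LinearMap.id, by simp⟩
  le_trans X Y Z := by
    rintro ⟨f, hf⟩ ⟨g, hg⟩
    exact ⟨g ∘ₗ f, by rw [LinearMap.comp_assoc, hf, hg]⟩

noncomputable def tr (X Y : PObj R I) (h : X ≤ Y) : X.C →ₗ[Λ] Y.C := Classical.choose h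

theorem tr_pt (X Y : PObj R I) (h : X ≤ Y) : tr X Y h ∘ₗ X.pt = Y.pt := Classical.choose_spec h

instance : DirectedSystem (fun X : PObj R I => X.C) (fun X Y h => tr X Y h) where
  map_self := by
    intro X x
    have : tr X X le_rfl = LinearMap.id := hom_uniq (by rw [tr_pt]; simp)
    exact LinearMap.congr_fun this x
  map_map := by
    intro Z Y X h1 h2 x
    have : tr Y Z h2 ∘ₗ tr X Y h1 = tr X Z (h1.trans h2) :=
      hom_uniq (by rw [LinearMap.comp_assoc, tr_pt, tr_pt, tr_pt])
    exact LinearMap.congr_fun this x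

theorem tr_inj (X Y : PObj R I) (h : X ≤ Y) : Function.Injective (tr X Y h) := by
  apply X.stab.inj Y.stab
  intro h0
  apply Y.ne
  rw [← tr_pt X Y h, h0]; simp

end PObj

theorem exists_gen {I : Type} [AddCommGroup I] [Module Λ I] (hI : R.Stab I) :
    ∃ (V : Type) (_ : AddCommGroup V) (_ : Module Λ V) (i : I →ₗ[Λ] V), R.Gen i := by
  have hid : (LinearMap.id : I →ₗ[Λ] I) ≠ 0 := by
    intro h0
    have := hI.ne
    obtain ⟨x, hx⟩ := exists_ne (0 : I)
    exact hx (by simpa using LinearMap.congr_fun h0 x)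
  obtain ⟨X0, e0, he0⟩ := PObj.exists_of hI LinearMap.id hid
  have : Nonempty (PObj R I) := ⟨X0⟩
  have : IsDirectedOrder (PObj R I) := ⟨by
    intro X Y
    obtain ⟨N', _, _, hN', a, b, ha, hab⟩ := ore Y.stab X.pt X.stab.good
      (hI.inj X.stab _ X.ne) (hI.null X.stab _ X.ne) Y.pt
    obtain ⟨Z, e, he⟩ := PObj.exists_of hN' (a ∘ₗ Y.pt) (by
      intro h0
      apply Y.ne
      ext x
      apply ha
      simpa using LinearMap.congr_fun h0 x)
    have he' : Z.pt = e.symm.toLinearMap ∘ₗ a ∘ₗ Y.pt := by rw [← he]; ext x; simp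
    exact ⟨Z, ⟨e.symm.toLinearMap ∘ₗ b, by rw [he', LinearMap.comp_assoc, hab]⟩,
      ⟨e.symm.toLinearMap ∘ₗ a, by rw [he', LinearMap.comp_assoc]⟩⟩⟩
  let V := DirectLimit (fun X : PObj R I => X.C) (fun X Y h => PObj.tr X Y h)
  let o : ∀ X : PObj R I, X.C →ₗ[Λ] V := fun X =>
    DirectLimit.Module.of Λ (PObj R I) (fun X : PObj R I => X.C) (fun X Y h => PObj.tr X Y h) X
  have ho : ∀ X Y (h : X ≤ Y), o Y ∘ₗ PObj.tr X Y h = o X := by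
    intro X Y h
    ext x
    exact DirectLimit.Module.of_f
  have hoi : ∀ X, Function.Injective (o X) := by
    intro X x y hxy
    exact DirectLimit.mk_injective (fun X Y h => PObj.tr X Y h) (fun X Y h => PObj.tr_inj X Y h) X hxy
  have hsurj : ∀ a : V, ∃ Y, ∃ y : Y.C, o Y y = a := by
    intro a
    induction a using DirectLimit.induction with | _ Y y
    exact ⟨Y, y, rfl⟩
  let i : I →ₗ[Λ] V := o X0 ∘ₗ X0.pt
  have hi : ∀ X, o X ∘ₗ X.pt = i := by
    intro X
    obtain ⟨Z, h1, h2⟩ := exists_ge_ge X X0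
    simp only [i]
    rw [← ho X Z h1, ← ho X0 Z h2, LinearMap.comp_assoc, LinearMap.comp_assoc, PObj.tr_pt,
      PObj.tr_pt]
  refine ⟨V, inferInstance, inferInstance, i, hI, ?_, ?_, ?_, ?_⟩
  · exact (hoi X0).comp (hI.inj X0.stab _ X0.ne)
  · rintro S ⟨s, rfl⟩
    have key : ∃ X, ∀ x ∈ s, x ∈ LinearMap.range (o X) := by
      classical
      induction s using Finset.induction_on with
      | empty => exact ⟨X0, by simp⟩
      | insert a s ha ih =>
        obtain ⟨X, hX⟩ := ih
        obtain ⟨Y, y, hy⟩ := hsurj a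
        obtain ⟨Z, h1, h2⟩ := exists_ge_ge X Y
        refine ⟨Z, fun x hx => ?_⟩
        rcases Finset.mem_insert.1 hx with rfl | hx
        · exact ⟨PObj.tr Y Z h2 y, by rw [← hy, ← ho Y Z h2]; rfl⟩
        · obtain ⟨w, hw⟩ := hX x hx
          exact ⟨PObj.tr X Z h1 w, by rw [← hw, ← ho X Z h1]; rfl⟩
    obtain ⟨X, hX⟩ := key
    exact ⟨LinearMap.range (o X), Submodule.span_le.2 hX,
      X.stab.equiv (LinearEquiv.ofInjective _ (hoi X))⟩
  · intro N _ _ hN p hp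
    obtain ⟨X, e, he⟩ := PObj.exists_of hN p hp
    refine ⟨o X ∘ₗ e.symm.toLinearMap, ?_⟩
    rw [← hi X, ← he]
    ext x; simp
  · intro U _ _ hU g
    have hn : ∀ X : PObj R I, R.Null (X.C ⧸ LinearMap.range X.pt) := fun X =>
      hI.null X.stab _ X.ne
    choose gX hgX using fun X : PObj R I => hU.ext _ _ X.pt X.stab.good
      (hI.inj X.stab _ X.ne) (hn X) g
    refine ⟨DirectLimit.Module.lift Λ (PObj R I) (fun X : PObj R I => X.C)
      (fun X Y h => PObj.tr X Y h) gX ?_, ?_, ?_⟩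
    · intro X Y h x
      have : gX Y ∘ₗ PObj.tr X Y h = gX X := hU.uniq X.pt (hn X) _ _ (by
        rw [LinearMap.comp_assoc, PObj.tr_pt, hgX, hgX])
      exact LinearMap.congr_fun this x
    · simp only [i]
      rw [← LinearMap.comp_assoc]
      exact hgX X0
    · intro h hh
      apply DirectLimit.Module.hom_ext
      intro X
      apply hU.uniq X.pt (hn X)
      change (h ∘ₗ o X) ∘ₗ X.pt = gX X ∘ₗ X.pt
      rw [LinearMap.comp_assoc, hi, hh, hgX]

end RankDat

section Vt
variable {Λ : Type} [Ring Λ] {K : Type} [DivisionRing K] (s : K →ₙ+* Λ)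
variable (M : Type) [AddCommGroup M] [Module Λ M] {N : Type} [AddCommGroup N] [Module Λ N]

def Vert : AddSubgroup M where
  carrier := {m | s 1 • m = m}
  zero_mem' := by simp
  add_mem' := by
    intro a b ha hb
    simp only [Set.mem_ofPred_eq] at *
    rw [smul_add, ha, hb]
  neg_mem' := by
    intro a ha
    simp only [Set.mem_ofPred_eq] at *
    rw [smul_neg, ha]

abbrev Vt : Type := ↥(Vert s M)

variable {M}

theorem Vt.prop (x : Vt s M) : s 1 • (x : M) = x := x.2

variable (M) in
theorem vert_smul (k : K) (m : M) : s k • m ∈ Vert s M := by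
  change s 1 • s k • m = s k • m
  rw [smul_smul, ← map_mul, one_mul]

instance : Module K (Vt s M) where
  smul k x := ⟨s k • (x : M), vert_smul s M k x⟩
  one_smul x := Subtype.ext x.2
  mul_smul k l x := Subtype.ext (by
    change s (k * l) • (x : M) = s k • s l • (x : M)
    rw [map_mul, mul_smul])
  smul_zero k := Subtype.ext (smul_zero _)
  smul_add k x y := Subtype.ext (smul_add _ _ _)
  add_smul k l x := Subtype.ext (by
    change s (k + l) • (x : M) = s k • (x : M) + s l • (x : M)
    rw [map_add, add_smul])
  zero_smul x := Subtype.ext (by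
    change s 0 • (x : M) = 0
    rw [map_zero, zero_smul])

@[simp] theorem Vt.coe_smul (k : K) (x : Vt s M) : ((k • x : Vt s M) : M) = s k • (x : M) := rfl

def Vt.map (f : M →ₗ[Λ] N) : Vt s M →ₗ[K] Vt s N where
  toFun x := ⟨f x, by
    change s 1 • f x = f x
    rw [← map_smul, Vt.prop]⟩
  map_add' x y := Subtype.ext (by simp)
  map_smul' k x := Subtype.ext (by simp)

@[simp] theorem Vt.coe_map (f : M →ₗ[Λ] N) (x : Vt s M) : (Vt.map s f x : N) = f x := rfl

theorem Vt.map_inj (f : M →ₗ[Λ] N) (hf : Function.Injective f) :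
    Function.Injective (Vt.map s f) := by
  intro x y h
  exact Subtype.ext (hf (congrArg Subtype.val h))

theorem Vt.map_surj (f : M →ₗ[Λ] N) (hf : Function.Surjective f) :
    Function.Surjective (Vt.map s f) := by
  intro y
  obtain ⟨x, hx⟩ := hf y
  refine ⟨⟨s 1 • x, vert_smul s M 1 x⟩, Subtype.ext ?_⟩
  simp [hx, Vt.prop]

noncomputable def Vt.congr (e : M ≃ₗ[Λ] N) : Vt s M ≃ₗ[K] Vt s N :=
  LinearEquiv.ofBijective (Vt.map s e.toLinearMap)
    ⟨Vt.map_inj s _ e.injective, Vt.map_surj s _ e.surjective⟩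

theorem Vt.finrank_add (P : Submodule Λ M) [Module.Finite K (Vt s M)] :
    Module.finrank K (Vt s M) = Module.finrank K (Vt s P) + Module.finrank K (Vt s (M ⧸ P)) := by
  have h1 := LinearMap.finrank_range_add_finrank_ker (Vt.map s P.mkQ)
  have h2 : LinearMap.ker (Vt.map s P.mkQ) = LinearMap.range (Vt.map s P.subtype) := by
    ext x
    constructor
    · intro h
      have h3 : P.mkQ (x : M) = 0 := congrArg Subtype.val h
      rw [Submodule.mkQ_apply, Submodule.Quotient.mk_eq_zero] at h3
      refine ⟨⟨⟨x, h3⟩, Subtype.ext x.2⟩, rfl⟩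
    · rintro ⟨y, rfl⟩
      exact Subtype.ext (by simp)
  rw [h2, LinearMap.finrank_range_of_inj (Vt.map_inj s _ P.subtype_injective),
    LinearMap.range_eq_top.2 (Vt.map_surj s _ P.mkQ_surjective), finrank_top] at h1
  omega

end Vt

section mkRank
variable {Λ : Type} [Ring Λ] {ν : Type} [Fintype ν] {K : ν → Type} [∀ v, DivisionRing (K v)]

noncomputable def mkRank (sc : ∀ v, K v →ₙ+* Λ) (one : ∑ v, sc v 1 = 1) (c : ν → ℤ) :
    RankDat Λ where
  good M _ _ := ∀ v, Module.Finite (K v) (Vt (sc v) M)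
  χ M _ _ := ∑ v, c v * (Module.finrank (K v) (Vt (sc v) M) : ℤ)
  good_inj f hf h v := by
    have := h v
    exact Module.Finite.of_injective _ (Vt.map_inj (sc v) f hf)
  good_surj f hf h v := by
    have := h v
    exact Module.Finite.of_surjective _ (Vt.map_surj (sc v) f hf)
  good_prod {M N} _ _ _ _ h1 h2 v := by
    have := h1 v
    have := h2 v
    let g : Vt (sc v) (M × N) →ₗ[K v] Vt (sc v) M × Vt (sc v) N :=
      (Vt.map (sc v) (LinearMap.fst Λ M N)).prod (Vt.map (sc v) (LinearMap.snd Λ M N))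
    refine Module.Finite.of_injective g ?_
    intro x y hxy
    have h3 := congrArg (fun z => (z.1 : M)) hxy
    have h4 := congrArg (fun z => (z.2 : N)) hxy
    exact Subtype.ext (Prod.ext h3 h4)
  fin {M} _ _ h := by
    classical
    choose S hS using fun v => (h v).fg_top
    let T : Finset M := Finset.univ.biUnion fun v => (S v).image Subtype.val
    refine ⟨⟨T, ?_⟩⟩
    rw [eq_top_iff]
    rintro m -
    have hm : m = ∑ v, sc v 1 • m := by rw [← Finset.sum_smul, one, one_smul]
    rw [hm]
    refine Submodule.sum_mem _ fun v _ => ?_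
    have key : ∀ x : Vt (sc v) M, (x : M) ∈ Submodule.span Λ (T : Set M) := by
      intro x
      have hx : x ∈ Submodule.span (K v) (S v : Set (Vt (sc v) M)) := by rw [hS]; trivial
      induction hx using Submodule.span_induction with
      | mem x hx =>
        apply Submodule.subset_span
        simp only [T, Finset.coe_biUnion, Set.mem_iUnion]
        exact ⟨v, by simp, by simpa using hx⟩
      | zero => simp
      | add x y _ _ hx hy => exact Submodule.add_mem _ hx hy
      | smul k x _ hx => exact Submodule.smul_mem _ _ hx
    exact key ⟨sc v 1 • m, vert_smul _ _ _ _⟩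
  χ_add N h := by
    rw [← Finset.sum_add_distrib]
    refine Finset.sum_congr rfl fun v _ => ?_
    have := h v
    rw [Vt.finrank_add (sc v) N]
    push_cast
    ring
  χ_eq e := by
    refine Finset.sum_congr rfl fun v _ => ?_
    rw [LinearEquiv.finrank_eq (Vt.congr (sc v) e)]

end mkRank

section Quiv
variable {ν : Type} [Fintype ν] [DecidableEq ν] (K : ν → Type) [∀ v, DivisionRing (K v)]
  (α : ν → ν → Type)

inductive QG : Type
  | sc (v : ν) (k : K v) : QG
  | ar {s t : ν} (a : α s t) : QG

abbrev FA : Type := FreeAlgebra ℤ (QG K α)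

variable {K α}

abbrev FA.sc (v : ν) (k : K v) : FA K α := FreeAlgebra.ι ℤ (QG.sc v k)
abbrev FA.ar {s t : ν} (a : α s t) : FA K α := FreeAlgebra.ι ℤ (QG.ar a)

inductive QRel (r0 : FA K α → FA K α → Prop) : FA K α → FA K α → Prop
  | add (v : ν) (k l : K v) : QRel r0 (FA.sc v (k + l)) (FA.sc v k + FA.sc v l)
  | mul (v : ν) (k l : K v) : QRel r0 (FA.sc v (k * l)) (FA.sc v k * FA.sc v l)
  | orth (v w : ν) (h : v ≠ w) (k : K v) (l : K w) : QRel r0 (FA.sc v k * FA.sc w l) 0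
  | one : QRel r0 (∑ v, FA.sc v 1) 1
  | src {s t : ν} (a : α s t) : QRel r0 (FA.ar a * FA.sc s 1) (FA.ar a)
  | tgt {s t : ν} (a : α s t) : QRel r0 (FA.sc t 1 * FA.ar a) (FA.ar a)
  | cust (x y : FA K α) (h : r0 x y) : QRel r0 x y

def QAlg (r0 : FA K α → FA K α → Prop) : Type := RingQuot (QRel r0)

variable (r0 : FA K α → FA K α → Prop)

noncomputable instance : Ring (QAlg r0) := inferInstanceAs (Ring (RingQuot (QRel r0)))

namespace QAlg

noncomputable def mk : FA K α →+* QAlg r0 := RingQuot.mkRingHom (QRel r0)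

theorem mk_rel {x y : FA K α} (h : QRel r0 x y) : mk r0 x = mk r0 y := RingQuot.mkRingHom_rel h

theorem mk_surj : Function.Surjective (mk r0) := RingQuot.mkRingHom_surjective _

noncomputable def sc (v : ν) : K v →ₙ+* QAlg r0 where
  toFun k := mk r0 (FA.sc v k)
  map_add' k l := by rw [mk_rel r0 (.add v k l), map_add]
  map_mul' k l := by rw [mk_rel r0 (.mul v k l), map_mul]
  map_zero' := by
    have := mk_rel r0 (.add v 0 0)
    rw [add_zero, map_add] at this
    simpa using this

theorem mk_sc (v : ν) (k : K v) : mk r0 (FA.sc v k) = sc r0 v k := rfl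

noncomputable def ar {s t : ν} (a : α s t) : QAlg r0 := mk r0 (FA.ar a)

theorem mk_ar {s t : ν} (a : α s t) : mk r0 (FA.ar a) = ar r0 a := rfl

theorem sum_one : ∑ v, sc r0 v 1 = 1 := by
  have := mk_rel r0 (.one)
  rwa [map_sum, map_one] at this

theorem orth (v w : ν) (h : v ≠ w) (k : K v) (l : K w) : sc r0 v k * sc r0 w l = 0 := by
  have := mk_rel r0 (.orth v w h k l)
  rwa [map_mul, map_zero] at this

theorem ar_src {s t : ν} (a : α s t) : ar r0 a * sc r0 s 1 = ar r0 a := by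
  have := mk_rel r0 (.src a)
  rwa [map_mul] at this

theorem ar_tgt {s t : ν} (a : α s t) : sc r0 t 1 * ar r0 a = ar r0 a := by
  have := mk_rel r0 (.tgt a)
  rwa [map_mul] at this

theorem cust {x y : FA K α} (h : r0 x y) : mk r0 x = mk r0 y := mk_rel r0 (.cust _ _ h)

variable {r0}
variable {M N : Type} [AddCommGroup M] [Module (QAlg r0) M] [AddCommGroup N] [Module (QAlg r0) N]

theorem induct (C : QAlg r0 → Prop) (hint : ∀ n : ℤ, C (n : QAlg r0)) (hsc : ∀ v k, C (sc r0 v k))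
    (har : ∀ s t (a : α s t), C (ar r0 a)) (hadd : ∀ x y, C x → C y → C (x + y))
    (hmul : ∀ x y, C x → C y → C (x * y)) (x : QAlg r0) : C x := by
  obtain ⟨x, rfl⟩ := mk_surj r0 x
  induction x using FreeAlgebra.induction with
  | grade0 n =>
    have : mk r0 (algebraMap ℤ _ n) = (n : QAlg r0) := by simp
    rw [this]; exact hint n
  | grade1 x => cases x with
    | sc v k => exact hsc v k
    | ar a => exact har _ _ a
  | mul x y hx hy => rw [map_mul]; exact hmul _ _ hx hy
  | add x y hx hy => rw [map_add]; exact hadd _ _ hx hy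

def mkSub (P : AddSubgroup M) (hsc : ∀ v k m, m ∈ P → sc r0 v k • m ∈ P)
    (har : ∀ s t (a : α s t) m, m ∈ P → ar r0 a • m ∈ P) : Submodule (QAlg r0) M where
  __ := P
  smul_mem' x := by
    induction x using induct with
    | hint n => intro m hm; rw [Int.cast_smul_eq_zsmul]; exact P.zsmul_mem hm n
    | hsc v k => exact fun {m} hm => hsc v k m hm
    | har s t a => exact fun {m} hm => har s t a m hm
    | hadd x y hx hy => intro m hm; rw [add_smul]; exact P.add_mem (hx hm) (hy hm)
    | hmul x y hx hy => intro m hm; rw [mul_smul]; exact hx (hy hm)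

def mkLin (f : M →+ N) (hsc : ∀ v k m, f (sc r0 v k • m) = sc r0 v k • f m)
    (har : ∀ s t (a : α s t) m, f (ar r0 a • m) = ar r0 a • f m) : M →ₗ[QAlg r0] N where
  toFun := f
  map_add' := map_add f
  map_smul' x := by
    simp only [RingHom.id_apply]
    induction x using induct with
    | hint n => intro m; rw [Int.cast_smul_eq_zsmul, Int.cast_smul_eq_zsmul, map_zsmul]
    | hsc v k => exact hsc v k
    | har s t a => exact har s t a
    | hadd x y hx hy => intro m; rw [add_smul, map_add, hx, hy, add_smul]
    | hmul x y hx hy => intro m; rw [mul_smul, hx, hy, mul_smul]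

@[simp] theorem mkLin_apply (f : M →+ N) (hsc) (har) (m : M) :
    mkLin (r0 := r0) f hsc har m = f m := rfl

theorem sum_smul_one (m : M) : ∑ v, sc r0 v 1 • m = m := by
  rw [← Finset.sum_smul, sum_one, one_smul]

theorem smul_vt_ne {v w : ν} (h : w ≠ v) (k : K w) (m : Vt (sc r0 v) M) :
    sc r0 w k • (m : M) = 0 := by
  rw [← Vt.prop _ m, smul_smul, orth r0 _ _ h, zero_smul]

theorem ar_vt_ne {s t v : ν} (h : s ≠ v) (a : α s t) (m : Vt (sc r0 v) M) :
    ar r0 a • (m : M) = 0 := by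
  rw [← ar_src, mul_smul, smul_vt_ne h, smul_zero]

theorem ar_mem {s t : ν} (a : α s t) (m : M) : ar r0 a • m ∈ Vert (sc r0 t) M := by
  change _ • _ = _
  rw [smul_smul, ar_tgt]

theorem sc_mem (v : ν) (k : K v) (m : M) : sc r0 v k • m ∈ Vert (sc r0 v) M := vert_smul _ _ _ _


variable (r0) in
noncomputable def pr (v : ν) : M →+ Vt (sc r0 v) M where
  toFun m := ⟨sc r0 v 1 • m, sc_mem v 1 m⟩
  map_zero' := by ext; simp
  map_add' x y := by ext; simp

theorem coe_pr (v : ν) (m : M) : (pr r0 v m : M) = sc r0 v 1 • m := rfl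

theorem pr_vt (v : ν) (m : Vt (sc r0 v) M) : pr r0 v (m : M) = m := Subtype.ext m.2

theorem sum_pr (m : M) : ∑ v, (pr r0 v m : M) = m := sum_smul_one m

noncomputable def subOf (W : ∀ v, Submodule (K v) (Vt (sc r0 v) M))
    (hW : ∀ s t (a : α s t) (m : Vt (sc r0 s) M), m ∈ W s →
      (⟨ar r0 a • (m : M), ar_mem a _⟩ : Vt (sc r0 t) M) ∈ W t) : Submodule (QAlg r0) M :=
  mkSub
    { carrier := {m | ∀ v, pr r0 v m ∈ W v}
      zero_mem' := by intro v; simp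
      add_mem' := by intro x y hx hy v; rw [map_add]; exact (W v).add_mem (hx v) (hy v)
      neg_mem' := by intro x hx v; rw [map_neg]; exact (W v).neg_mem (hx v) }
    (by
      intro v k m hm w
      by_cases h : w = v
      · subst h
        have : pr r0 w (sc r0 w k • m) = k • pr r0 w m := by
          ext
          rw [coe_pr, Vt.coe_smul, coe_pr, smul_smul, smul_smul, ← map_mul, ← map_mul, one_mul,
            mul_one]
        rw [this]; exact (W w).smul_mem _ (hm w)
      · have : pr r0 w (sc r0 v k • m) = 0 := by
          ext
          rw [coe_pr, smul_smul, orth r0 _ _ h, zero_smul]; rfl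
        rw [this]; exact (W w).zero_mem)
    (by
      intro s t a m hm w
      by_cases h : w = t
      · subst h
        have : pr r0 w (ar r0 a • m) = (⟨ar r0 a • (pr r0 s m : M), ar_mem a _⟩ : Vt (sc r0 w) M) := by
          ext
          change sc r0 w 1 • ar r0 a • m = ar r0 a • sc r0 s 1 • m
          rw [smul_smul, ar_tgt, smul_smul, ar_src]
        rw [this]; exact hW _ _ _ _ (hm s)
      · have : pr r0 w (ar r0 a • m) = 0 := by
          ext
          rw [coe_pr, ← ar_tgt, mul_smul, smul_smul, orth r0 _ _ h, zero_smul]; rfl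
        rw [this]; exact (W w).zero_mem)

theorem finrank_subOf (W : ∀ v, Submodule (K v) (Vt (sc r0 v) M)) (hW) (v : ν) :
    Module.finrank (K v) (Vt (sc r0 v) (subOf W hW)) = Module.finrank (K v) (W v) := by
  have h : LinearMap.range (Vt.map (sc r0 v) (subOf W hW).subtype) = W v := by
    ext x
    constructor
    · rintro ⟨y, rfl⟩
      have := y.1.2 v
      rw [← pr_vt v (Vt.map (sc r0 v) (subOf W hW).subtype y)]
      exact this
    · intro hx
      have hm : (x : M) ∈ subOf W hW := by
        intro w
        by_cases h : w = v
        · subst h; rw [pr_vt]; exact hx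
        · have : pr r0 w (x : M) = 0 := by
            ext
            rw [coe_pr, smul_vt_ne h]; rfl
          rw [this]; exact (W w).zero_mem
      exact ⟨⟨⟨x, hm⟩, Subtype.ext x.2⟩, rfl⟩
  rw [← h, LinearMap.finrank_range_of_inj (Vt.map_inj _ _ (Submodule.subtype_injective _))]

end QAlg

/-! representations -/

noncomputable def repρ (M : ν → Type) [∀ v, AddCommGroup (M v)] [∀ v, Module (K v) (M v)]
    (act : ∀ {s t : ν}, α s t → (M s →+ M t)) : QG K α → AddMonoid.End (∀ v, M v)
  | .sc v k => (AddMonoidHom.single M v).comp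
      ((DistribSMul.toAddMonoidHom (M v) k).comp (Pi.evalAddMonoidHom M v))
  | @QG.ar _ _ _ s t a => (AddMonoidHom.single M t).comp ((act a).comp (Pi.evalAddMonoidHom M s))

structure QRep where
  M : ν → Type
  [iA : ∀ v, AddCommGroup (M v)]
  [iM : ∀ v, Module (K v) (M v)]
  act : ∀ {s t : ν}, α s t → (M s →+ M t)
  rel : ∀ x y, r0 x y → FreeAlgebra.lift ℤ (repρ M act) x = FreeAlgebra.lift ℤ (repρ M act) y

attribute [instance] QRep.iA QRep.iM

namespace QRep
variable {r0} (A : QRep r0)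

def X : Type := ∀ v, A.M v
instance : AddCommGroup A.X := inferInstanceAs (AddCommGroup (∀ v, A.M v))

noncomputable def toEnd : QAlg r0 →+* AddMonoid.End (∀ v, A.M v) :=
  RingQuot.lift ⟨(FreeAlgebra.lift ℤ (repρ A.M A.act)).toRingHom, by
    intro x y h
    change FreeAlgebra.lift ℤ (repρ A.M A.act) x = FreeAlgebra.lift ℤ (repρ A.M A.act) y
    induction h with
    | add v k l =>
      rw [map_add]; simp only [FreeAlgebra.lift_ι_apply]
      refine AddMonoidHom.ext fun x => ?_
      change Pi.single v ((k + l) • x v) = (Pi.single v (k • x v) + Pi.single v (l • x v) : ∀ v, A.M v)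
      rw [add_smul, Pi.single_add]
    | mul v k l =>
      rw [map_mul]; simp only [FreeAlgebra.lift_ι_apply]
      refine AddMonoidHom.ext fun x => ?_
      change Pi.single v ((k * l) • x v)
        = (Pi.single v (k • (Pi.single v (l • x v) : ∀ v, A.M v) v) : ∀ v, A.M v)
      rw [mul_smul, Pi.single_eq_same]
    | orth v w h k l =>
      rw [map_mul, map_zero]; simp only [FreeAlgebra.lift_ι_apply]
      refine AddMonoidHom.ext fun x => ?_
      change (Pi.single v (k • (Pi.single w (l • x w) : ∀ v, A.M v) v) : ∀ v, A.M v) = 0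
      rw [Pi.single_eq_of_ne h, smul_zero, Pi.single_zero]
    | one =>
      rw [map_sum, map_one]; simp only [FreeAlgebra.lift_ι_apply]
      refine AddMonoidHom.ext fun x => ?_
      refine (AddMonoidHom.finsetSum_apply _ _ _).trans ?_
      refine Eq.trans ?_ (Finset.univ_sum_single x)
      refine Finset.sum_congr rfl fun v _ => ?_
      change Pi.single v ((1 : K v) • x v) = _
      rw [one_smul]
    | @src s t a =>
      rw [map_mul]; simp only [FreeAlgebra.lift_ι_apply]
      refine AddMonoidHom.ext fun x => ?_
      change (Pi.single t (A.act a ((Pi.single s ((1 : K s) • x s) : ∀ v, A.M v) s)) : ∀ v, A.M v)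
        = Pi.single t (A.act a (x s))
      rw [Pi.single_eq_same, one_smul]
    | @tgt s t a =>
      rw [map_mul]; simp only [FreeAlgebra.lift_ι_apply]
      refine AddMonoidHom.ext fun x => ?_
      change (Pi.single t ((1 : K t) • (Pi.single t (A.act a (x s)) : ∀ v, A.M v) t) : ∀ v, A.M v)
        = Pi.single t (A.act a (x s))
      rw [Pi.single_eq_same, one_smul]
    | cust x y h => exact A.rel x y h⟩

noncomputable instance : Module (QAlg r0) A.X := Module.compHom (∀ v, A.M v) A.toEnd

def single (v : ν) : A.M v →+ A.X := AddMonoidHom.single A.M v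

theorem toEnd_mk (x : FA K α) : A.toEnd (QAlg.mk r0 x) = FreeAlgebra.lift ℤ (repρ A.M A.act) x :=
  RingQuot.lift_mkRingHom_apply _ _ _

theorem sc_smul (v : ν) (k : K v) (x : A.X) : QAlg.sc r0 v k • x = A.single v (k • x v) := by
  change A.toEnd (QAlg.mk r0 (FA.sc v k)) x = _
  rw [toEnd_mk, FreeAlgebra.lift_ι_apply]; rfl

theorem ar_smul {s t : ν} (a : α s t) (x : A.X) :
    QAlg.ar r0 a • x = A.single t (A.act a (x s)) := by
  change A.toEnd (QAlg.mk r0 (FA.ar a)) x = _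
  rw [toEnd_mk, FreeAlgebra.lift_ι_apply]; rfl

theorem single_same (v : ν) (m : A.M v) : A.single v m v = m := Pi.single_eq_same _ _
theorem single_ne {v w : ν} (h : w ≠ v) (m : A.M v) : A.single v m w = 0 := Pi.single_eq_of_ne h _

theorem sc_single (v : ν) (k : K v) (m : A.M v) :
    QAlg.sc r0 v k • A.single v m = A.single v (k • m) := by
  rw [sc_smul, single_same]

theorem ar_single {s t : ν} (a : α s t) (m : A.M s) :
    QAlg.ar r0 a • A.single s m = A.single t (A.act a m) := by
  rw [ar_smul, single_same]

theorem sum_single (x : A.X) : ∑ v, A.single v (x v) = x := Finset.univ_sum_single x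

theorem single_mem (v : ν) (m : A.M v) : A.single v m ∈ Vert (QAlg.sc r0 v) A.X := by
  change _ • _ = _
  rw [sc_single, one_smul]

theorem single_inj (v : ν) : Function.Injective (A.single v) := Pi.single_injective v

noncomputable def vtEquiv (v : ν) : A.M v ≃ₗ[K v] Vt (QAlg.sc r0 v) A.X where
  toFun m := ⟨A.single v m, A.single_mem v m⟩
  invFun x := x.1 v
  map_add' x y := Subtype.ext (map_add _ _ _)
  map_smul' k x := Subtype.ext (A.sc_single v k x).symm
  left_inv m := A.single_same v m
  right_inv x := Subtype.ext (by
    have := x.2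
    change _ • _ = _ at this
    rw [sc_smul, one_smul] at this
    exact this)

theorem hom_ext {N : Type} [AddCommGroup N] [Module (QAlg r0) N] {f g : A.X →ₗ[QAlg r0] N}
    (h : ∀ v m, f (A.single v m) = g (A.single v m)) : f = g := by
  ext x
  rw [← A.sum_single x, map_sum, map_sum]
  exact Finset.sum_congr rfl fun v _ => h v _

noncomputable def lift {N : Type} [AddCommGroup N] [Module (QAlg r0) N] (h : ∀ v, A.M v →+ N)
    (hsc : ∀ v (k : K v) m, h v (k • m) = QAlg.sc r0 v k • h v m)
    (har : ∀ s t (a : α s t) m, h t (A.act a m) = QAlg.ar r0 a • h s m) :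
    A.X →ₗ[QAlg r0] N :=
  have hmem : ∀ v m, h v m ∈ Vert (QAlg.sc r0 v) N := fun v m => by
    change _ • _ = _
    rw [← hsc, one_smul]
  have hs : ∀ v m, (∑ w, h w (A.single v m w)) = h v m := fun v m => by
    rw [Finset.sum_eq_single v]
    · rw [single_same]
    · intro w _ hw; rw [single_ne _ hw, map_zero]
    · simp
  QAlg.mkLin
    { toFun := fun x => ∑ v, h v (x v)
      map_zero' := Finset.sum_eq_zero fun v _ => map_zero (h v)
      map_add' := fun x y => by
        rw [← Finset.sum_add_distrib]
        exact Finset.sum_congr rfl fun v _ => map_add (h v) _ _ }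
    (by
      intro v k x
      change ∑ w, h w _ = _ • ∑ w, h w _
      rw [sc_smul, hs, Finset.smul_sum, Finset.sum_eq_single v, hsc]
      · intro w _ hw
        exact QAlg.smul_vt_ne hw.symm k ⟨h w (x w), hmem _ _⟩
      · simp)
    (by
      intro s t a x
      change ∑ w, h w _ = _ • ∑ w, h w _
      rw [ar_smul, hs, Finset.smul_sum, Finset.sum_eq_single s, har]
      · intro w _ hw
        exact QAlg.ar_vt_ne hw.symm a ⟨h w (x w), hmem _ _⟩
      · simp)

theorem lift_single {N : Type} [AddCommGroup N] [Module (QAlg r0) N] (h : ∀ v, A.M v →+ N)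
    (hsc har) (v : ν) (m : A.M v) : A.lift h hsc har (A.single v m) = h v m := by
  change ∑ w, h w (A.single v m w) = _
  rw [Finset.sum_eq_single v]
  · rw [single_same]
  · intro w _ hw; rw [single_ne _ hw, map_zero]
  · simp

/-- components of a submodule -/
def part (S : Submodule (QAlg r0) A.X) (v : ν) : Submodule (K v) (A.M v) where
  carrier := {m | A.single v m ∈ S}
  zero_mem' := by simp
  add_mem' := by
    intro x y hx hy
    change A.single v (x + y) ∈ S
    rw [map_add]; exact S.add_mem hx hy
  smul_mem' := by
    intro k x hx
    change A.single v (k • x) ∈ S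
    rw [← sc_single]; exact S.smul_mem _ hx

theorem part_act (S : Submodule (QAlg r0) A.X) {s t : ν} (a : α s t) (m : A.M s)
    (hm : m ∈ A.part S s) : A.act a m ∈ A.part S t := by
  change A.single _ _ ∈ S
  rw [← ar_single]; exact S.smul_mem _ hm

theorem part_ne (S : Submodule (QAlg r0) A.X) (h : S ≠ ⊥) : ∃ v, A.part S v ≠ ⊥ := by
  by_contra! hc
  apply h
  rw [Submodule.eq_bot_iff]
  intro x hx
  rw [← A.sum_single x]
  refine Finset.sum_eq_zero fun v _ => ?_
  have h1 : x v ∈ A.part S v := by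
    change A.single v (x v) ∈ S
    rw [← one_smul (K v) (x v), ← sc_smul]; exact S.smul_mem _ hx
  rw [hc, Submodule.mem_bot] at h1
  rw [h1, map_zero]

theorem finrank_part (S : Submodule (QAlg r0) A.X) (v : ν) :
    Module.finrank (K v) (Vt (QAlg.sc r0 v) S) = Module.finrank (K v) (A.part S v) := by
  have h : LinearMap.range ((A.vtEquiv v).symm.toLinearMap ∘ₗ Vt.map (QAlg.sc r0 v) S.subtype)
      = A.part S v := by
    ext m
    constructor
    · rintro ⟨y, rfl⟩
      have h1 : A.single v ((A.vtEquiv v).symm (Vt.map (QAlg.sc r0 v) S.subtype y)) = y.1.1 :=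
        congrArg Subtype.val ((A.vtEquiv v).apply_symm_apply _)
      change A.single v ((A.vtEquiv v).symm (Vt.map (QAlg.sc r0 v) S.subtype y)) ∈ S
      rw [h1]; exact y.1.2
    · intro hm
      exact ⟨⟨⟨A.single v m, hm⟩, Subtype.ext (A.single_mem v m)⟩, A.single_same v m⟩
  rw [← h, LinearMap.finrank_range_of_inj]
  exact (A.vtEquiv v).symm.injective.comp (Vt.map_inj _ _ S.subtype_injective)

end QRep

/-- the rank datum -/
noncomputable def qRank (c : ν → ℤ) : RankDat (QAlg r0) := mkRank (QAlg.sc r0) (QAlg.sum_one r0) c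

variable {r0}

theorem qRank_good {c : ν → ℤ} {M : Type} [AddCommGroup M] [Module (QAlg r0) M] :
    (qRank r0 c).good M ↔ ∀ v, Module.Finite (K v) (Vt (QAlg.sc r0 v) M) := Iff.rfl

theorem qRank_χ {c : ν → ℤ} {M : Type} [AddCommGroup M] [Module (QAlg r0) M] :
    (qRank r0 c).χ M = ∑ v, c v * (Module.finrank (K v) (Vt (QAlg.sc r0 v) M) : ℤ) := rfl

namespace QRep
variable (A : QRep r0) {c : ν → ℤ}

theorem good_iff : (qRank r0 c).good A.X ↔ ∀ v, Module.Finite (K v) (A.M v) := by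
  rw [qRank_good]
  exact forall_congr' fun v => (Module.Finite.equiv_iff (A.vtEquiv v)).symm

theorem χ_X : (qRank r0 c).χ A.X = ∑ v, c v * (Module.finrank (K v) (A.M v) : ℤ) := by
  rw [qRank_χ]
  exact Finset.sum_congr rfl fun v _ => by rw [(A.vtEquiv v).finrank_eq]

theorem χ_sub (S : Submodule (QAlg r0) A.X) :
    (qRank r0 c).χ S = ∑ v, c v * (Module.finrank (K v) (A.part S v) : ℤ) := by
  rw [qRank_χ]
  exact Finset.sum_congr rfl fun v _ => by rw [A.finrank_part]

theorem stab (hf : ∀ v, Module.Finite (K v) (A.M v))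
    (h1 : ∑ v, c v * (Module.finrank (K v) (A.M v) : ℤ) = 1)
    (h2 : ∀ W : ∀ v, Submodule (K v) (A.M v),
      (∀ s t (a : α s t) m, m ∈ W s → A.act a m ∈ W t) → (∃ v, W v ≠ ⊥) →
      1 ≤ ∑ v, c v * (Module.finrank (K v) (W v) : ℤ)) : (qRank r0 c).Stab A.X := by
  refine ⟨A.good_iff.2 hf, by rw [χ_X, h1], fun S hS => ?_⟩
  rw [χ_sub]
  exact h2 (A.part S) (fun s t a m hm => A.part_act S a m hm) (A.part_ne S hS)

theorem null (hf : ∀ v, Module.Finite (K v) (A.M v))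
    (h1 : ∑ v, c v * (Module.finrank (K v) (A.M v) : ℤ) = 0)
    (h2 : ∀ W : ∀ v, Submodule (K v) (A.M v),
      (∀ s t (a : α s t) m, m ∈ W s → A.act a m ∈ W t) →
      0 ≤ ∑ v, c v * (Module.finrank (K v) (W v) : ℤ)) : (qRank r0 c).Null A.X := by
  refine ⟨A.good_iff.2 hf, by rw [χ_X, h1], fun S => ?_⟩
  rw [χ_sub]
  exact h2 (A.part S) (fun s t a m hm => A.part_act S a m hm)

end QRep

theorem null_sub {c : ν → ℤ} {M : Type} [AddCommGroup M] [Module (QAlg r0) M]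
    (h : (qRank r0 c).Null M) (W : ∀ v, Submodule (K v) (Vt (QAlg.sc r0 v) M))
    (hW : ∀ s t (a : α s t) (m : Vt (QAlg.sc r0 s) M), m ∈ W s →
      (⟨QAlg.ar r0 a • (m : M), QAlg.ar_mem a _⟩ : Vt (QAlg.sc r0 t) M) ∈ W t) :
    0 ≤ ∑ v, c v * (Module.finrank (K v) (W v) : ℤ) := by
  have h1 := h.nonneg (QAlg.subOf W hW)
  rw [qRank_χ] at h1
  simpa only [QAlg.finrank_subOf] using h1

end Quiv

namespace RankDat
variable {Λ : Type} [Ring Λ] {R : RankDat Λ}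
variable {M N M' : Type} [AddCommGroup M] [Module Λ M] [AddCommGroup N] [Module Λ N]
  [AddCommGroup M'] [Module Λ M']

theorem Null.equiv (h : R.Null M) (e : M ≃ₗ[Λ] N) : R.Null N := by
  refine ⟨R.good_surj e.toLinearMap e.surjective h.good, by rw [← R.χ_eq e, h.zero], ?_⟩
  intro s
  rw [← χ_map s e.symm.toLinearMap e.symm.injective]
  exact h.nonneg _

theorem null_quot (j : M →ₗ[Λ] M') (hM' : R.good M') (hj : Function.Injective j)
    (hχ : R.χ M' = R.χ M) (h : ∀ s : Submodule Λ M', LinearMap.range j ≤ s → R.χ M ≤ R.χ s) :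
    R.Null (M' ⧸ LinearMap.range j) := by
  refine ⟨good_quot hM' _, ?_, ?_⟩
  · have := R.χ_add (LinearMap.range j) hM'
    rw [χ_range j hj] at this
    omega
  · intro s
    have h1 := χ_sub hM' (s.comap (LinearMap.range j).mkQ) (LinearMap.range j).mkQ
    rw [Submodule.map_comap_eq_of_surjective (Submodule.mkQ_surjective _),
      Submodule.ker_mkQ, inf_eq_right.2 (le_comap_mkQ _ _), χ_range j hj] at h1
    have := h _ (le_comap_mkQ _ s)
    omega
end RankDat

/-- extension data -/
structure ExtD {ν : Type} [Fintype ν] [DecidableEq ν] {K : ν → Type} [∀ v, DivisionRing (K v)]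
    {α : ν → ν → Type} (r0 : FA K α → FA K α → Prop) (νX : Type) where
  KX : νX → Type
  [iK : ∀ x, DivisionRing (KX x)]
  τ : νX → ν
  σ : ∀ x, KX x →+* K (τ x)
  δ : νX → νX → Type
  σδ : ∀ {x y}, δ x y → (KX x →+* KX y)
  w : ∀ {x y}, δ x y → FA K α
  hw : ∀ {x y} (d : δ x y) (k : KX x), QAlg.mk r0 (w d) * QAlg.sc r0 (τ x) (σ x k) =
    QAlg.sc r0 (τ y) (σ y (σδ d k)) * QAlg.mk r0 (w d)

attribute [instance] ExtD.iK

namespace ExtD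
variable {ν : Type} [Fintype ν] [DecidableEq ν] {K : ν → Type} [∀ v, DivisionRing (K v)]
    {α : ν → ν → Type} {r0 : FA K α → FA K α → Prop} {νX : Type} [Fintype νX] [DecidableEq νX]
    (E : ExtD r0 νX)

@[reducible] def KG : ν ⊕ νX → Type
  | .inl v => K v
  | .inr x => E.KX x

instance iKG : ∀ v, DivisionRing (E.KG v)
  | .inl v => inferInstanceAs (DivisionRing (K v))
  | .inr x => inferInstanceAs (DivisionRing (E.KX x))

inductive αG : ν ⊕ νX → ν ⊕ νX → Type
  | old {s t : ν} (a : α s t) : αG (.inl s) (.inl t)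
  | p (x : νX) : αG (.inl (E.τ x)) (.inr x)
  | new {x y : νX} (d : E.δ x y) : αG (.inr x) (.inr y)

def embG : QG K α → FA E.KG E.αG
  | .sc v k => FA.sc (K := E.KG) (.inl v) k
  | .ar a => FA.ar (αG.old a)

noncomputable def emb : FA K α →ₐ[ℤ] FA E.KG E.αG := FreeAlgebra.lift ℤ E.embG

noncomputable def e0 : FA E.KG E.αG := ∑ v : ν, FA.sc (K := E.KG) (.inl v) 1

inductive rG : FA E.KG E.αG → FA E.KG E.αG → Prop
  | old (x y : FA K α) (h : r0 x y) : rG (E.emb x * E.e0) (E.emb y * E.e0)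
  | p (x : νX) (k : E.KX x) : rG (FA.ar (αG.p x) * FA.sc (K := E.KG) (.inl (E.τ x)) (E.σ x k))
      (FA.sc (K := E.KG) (.inr x) k * FA.ar (αG.p x))
  | new {x y : νX} (d : E.δ x y) (k : E.KX x) :
      rG (FA.ar (αG.new d) * FA.sc (K := E.KG) (.inr x) k)
      (FA.sc (K := E.KG) (.inr y) (E.σδ d k) * FA.ar (αG.new d))
  | newp {x y : νX} (d : E.δ x y) : rG (FA.ar (αG.new d) * FA.ar (αG.p x))
      (FA.ar (αG.p y) * E.emb (E.w d) * FA.sc (K := E.KG) (.inl (E.τ x)) 1)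

abbrev ΛG : Type := QAlg E.rG

noncomputable abbrev scl (v : ν) : K v →ₙ+* E.ΛG := QAlg.sc E.rG (.inl v)
noncomputable abbrev scr (x : νX) : E.KX x →ₙ+* E.ΛG := QAlg.sc E.rG (.inr x)
noncomputable abbrev aro {s t : ν} (a : α s t) : E.ΛG := QAlg.ar E.rG (αG.old a)
noncomputable abbrev arp (x : νX) : E.ΛG := QAlg.ar E.rG (αG.p x)
noncomputable abbrev arn {x y : νX} (d : E.δ x y) : E.ΛG := QAlg.ar E.rG (αG.new d)
noncomputable def mkE (x : FA K α) : E.ΛG := QAlg.mk E.rG (E.emb x)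

theorem mkE_sc (v : ν) (k : K v) : E.mkE (FA.sc v k) = E.scl v k := by
  unfold mkE emb; rw [FreeAlgebra.lift_ι_apply]; rfl
theorem mkE_ar {s t : ν} (a : α s t) : E.mkE (FA.ar a) = E.aro a := by
  unfold mkE emb; rw [FreeAlgebra.lift_ι_apply]; rfl
theorem mkE_mul (x y : FA K α) : E.mkE (x * y) = E.mkE x * E.mkE y := by simp [mkE]
theorem mkE_add (x y : FA K α) : E.mkE (x + y) = E.mkE x + E.mkE y := by simp [mkE]
theorem mkE_int (n : ℤ) : E.mkE (algebraMap ℤ _ n) = (n : E.ΛG) := by simp [mkE]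

theorem rel_old {x y : FA K α} (h : r0 x y) :
    E.mkE x * (∑ v, E.scl v 1) = E.mkE y * (∑ v, E.scl v 1) := by
  have := QAlg.cust E.rG (.old x y h)
  rw [map_mul, map_mul, e0, map_sum] at this
  exact this

theorem rel_p (x : νX) (k : E.KX x) : E.arp x * E.scl (E.τ x) (E.σ x k) = E.scr x k * E.arp x := by
  have := QAlg.cust E.rG (.p x k)
  rwa [map_mul, map_mul] at this

theorem rel_new {x y : νX} (d : E.δ x y) (k : E.KX x) :
    E.arn d * E.scr x k = E.scr y (E.σδ d k) * E.arn d := by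
  have := QAlg.cust E.rG (.new d k)
  rwa [map_mul, map_mul] at this

theorem rel_newp {x y : νX} (d : E.δ x y) : E.arn d * E.arp x =
    E.arp y * E.mkE (E.w d) * E.scl (E.τ x) 1 := by
  have := QAlg.cust E.rG (.newp d)
  rwa [map_mul, map_mul, map_mul] at this

/-! the functor U -/
section U
variable (V : Type) [AddCommGroup V] [Module E.ΛG V]

noncomputable def Uact {s t : ν} (a : α s t) : Vt (E.scl s) V →+ Vt (E.scl t) V where
  toFun m := ⟨E.aro a • (m : V), QAlg.ar_mem (r0 := E.rG) (αG.old a) _⟩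
  map_zero' := Subtype.ext (by simp)
  map_add' x y := Subtype.ext (by simp)

theorem Usum (x : FA K α) (m : ∀ v, Vt (E.scl v) V) :
    ∑ v, ((FreeAlgebra.lift ℤ (repρ (fun v => Vt (E.scl v) V) (fun a => E.Uact V a)) x m v
      : Vt (E.scl v) V) : V) = E.mkE x • ∑ v, (m v : V) := by
  induction x using FreeAlgebra.induction generalizing m with
  | grade0 n =>
    rw [mkE_int, Int.cast_smul_eq_zsmul, Finset.smul_sum]
    refine Finset.sum_congr rfl fun v _ => ?_
    rw [AlgHom.commutes]
    have : (algebraMap ℤ (AddMonoid.End (∀ v, Vt (E.scl v) V)) n) m = n • m := by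
      simp
    rw [this]; rfl
  | grade1 g =>
    rw [FreeAlgebra.lift_ι_apply]
    cases g with
    | sc v k =>
      change _ = E.mkE (FA.sc v k) • _
      rw [mkE_sc, Finset.smul_sum, Finset.sum_eq_single v, Finset.sum_eq_single v]
      · change (((Pi.single v (k • m v) : ∀ v, Vt (E.scl v) V) v : Vt (E.scl v) V) : V) = _
        rw [Pi.single_eq_same]; rfl
      · intro w _ hw
        exact QAlg.smul_vt_ne (r0 := E.rG) (v := .inl w) (w := .inl v) (by simpa using hw.symm) k (m w)
      · simp
      · intro w _ hw
        change (((Pi.single v (k • m v) : ∀ v, Vt (E.scl v) V) w : Vt (E.scl w) V) : V) = _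
        rw [Pi.single_eq_of_ne hw]; rfl
      · simp
    | @ar s t a =>
      change _ = E.mkE (FA.ar a) • _
      rw [mkE_ar, Finset.smul_sum, Finset.sum_eq_single t, Finset.sum_eq_single s]
      · change (((Pi.single t (E.Uact V a (m s)) : ∀ v, Vt (E.scl v) V) t : Vt (E.scl t) V) : V) = _
        rw [Pi.single_eq_same]; rfl
      · intro w _ hw
        exact QAlg.ar_vt_ne (r0 := E.rG) (v := .inl w) (by simpa using hw.symm) (αG.old a) (m w)
      · simp
      · intro w _ hw
        change (((Pi.single t (E.Uact V a (m s)) : ∀ v, Vt (E.scl v) V) w : Vt (E.scl w) V) : V) = _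
        rw [Pi.single_eq_of_ne hw]; rfl
      · simp
  | mul x y hx hy =>
    rw [map_mul, mkE_mul, mul_smul, ← hy, ← hx]; rfl
  | add x y hx hy =>
    rw [map_add, mkE_add, add_smul, ← hy, ← hx, ← Finset.sum_add_distrib]; rfl

theorem e_smul (m : ∀ v, Vt (E.scl v) V) (w : ν) : E.scl w 1 • ∑ v, (m v : V) = m w := by
  rw [Finset.smul_sum, Finset.sum_eq_single w]
  · exact Vt.prop _ _
  · intro v _ hv
    exact QAlg.smul_vt_ne (r0 := E.rG) (v := .inl v) (w := .inl w) (by simpa using hv.symm) _ (m v)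
  · simp

theorem eU_inj {m m' : ∀ v, Vt (E.scl v) V} (h : ∑ v, (m v : V) = ∑ v, (m' v : V)) : m = m' := by
  ext w
  rw [← e_smul E V m, ← e_smul E V m', h]

theorem e_sum (m : ∀ v, Vt (E.scl v) V) :
    (∑ w, E.scl w 1) • ∑ v, (m v : V) = ∑ v, (m v : V) := by
  rw [Finset.sum_smul]
  exact Finset.sum_congr rfl fun w _ => e_smul E V m w

noncomputable def U : QRep r0 where
  M v := Vt (E.scl v) V
  act a := E.Uact V a
  rel x y h := by
    refine AddMonoidHom.ext fun m => eU_inj E V ?_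
    refine (E.Usum V x m).trans (Eq.trans ?_ (E.Usum V y m).symm)
    rw [← e_sum E V m, smul_smul, smul_smul, rel_old E h]

/-- underlying element -/
noncomputable def cV (v : ν) : (E.U V).M v →+ V := (Vert (E.scl v) V).subtype

noncomputable def toV : (E.U V).X →+ V where
  toFun m := ∑ v, E.cV V v (m v)
  map_zero' := Finset.sum_eq_zero fun v _ => rfl
  map_add' x y := by rw [← Finset.sum_add_distrib]; rfl

theorem toV_inj : Function.Injective (E.toV V) := fun m m' h => by
  have h : ∑ v, E.cV V v (m v) = ∑ v, E.cV V v (m' v) := h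
  exact eU_inj E V (m := m) (m' := m') h

theorem toV_mk (x : FA K α) (m : (E.U V).X) :
    E.toV V (QAlg.mk r0 x • m) = E.mkE x • E.toV V m := by
  have h := E.Usum V x m
  refine Eq.trans ?_ h
  change E.toV V ((E.U V).toEnd (QAlg.mk r0 x) m) = _
  rw [QRep.toEnd_mk]; rfl

theorem toV_single (v : ν) (m : (E.U V).M v) : E.toV V ((E.U V).single v m) = E.cV V v m := by
  change ∑ w, E.cV V w ((E.U V).single v m w) = _
  rw [Finset.sum_eq_single v]
  · rw [QRep.single_same]
  · intro w _ hw; rw [QRep.single_ne _ hw, map_zero]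
  · simp

theorem toV_comp (m : (E.U V).X) (v : ν) : E.scl v 1 • E.toV V m = E.cV V v (m v) :=
  e_smul E V m v

theorem toV_sc (v : ν) (k : K v) (m : (E.U V).X) :
    E.toV V (QAlg.sc r0 v k • m) = E.scl v k • E.toV V m := by
  rw [← mkE_sc, ← toV_mk]; rfl

theorem toV_ar {s t : ν} (a : α s t) (m : (E.U V).X) :
    E.toV V (QAlg.ar r0 a • m) = E.aro a • E.toV V m := by
  rw [← mkE_ar, ← toV_mk]; rfl

end U
end ExtD

theorem End_ext {A : Type} [AddCommGroup A] {f g : AddMonoid.End A} (h : ∀ n, f n = g n) :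
    f = g := AddMonoidHom.ext h

namespace ExtD
variable {ν : Type} [Fintype ν] [DecidableEq ν] {K : ν → Type} [∀ v, DivisionRing (K v)]
    {α : ν → ν → Type} {r0 : FA K α → FA K α → Prop} {νX : Type} [Fintype νX] [DecidableEq νX]
    (E : ExtD r0 νX)

section T
variable (M : Type) [AddCommGroup M] [Module (QAlg r0) M]

@[reducible] def TM : ν ⊕ νX → Type
  | .inl v => Vt (QAlg.sc r0 v) M
  | .inr x => Vt (QAlg.sc r0 (E.τ x)) M

noncomputable instance TMa : ∀ v, AddCommGroup (E.TM M v)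
  | .inl v => inferInstanceAs (AddCommGroup (Vt (QAlg.sc r0 v) M))
  | .inr x => inferInstanceAs (AddCommGroup (Vt (QAlg.sc r0 (E.τ x)) M))

noncomputable instance TMm : ∀ v, Module (E.KG v) (E.TM M v)
  | .inl v => inferInstanceAs (Module (K v) (Vt (QAlg.sc r0 v) M))
  | .inr x => Module.compHom (Vt (QAlg.sc r0 (E.τ x)) M) (E.σ x)

theorem TM_smul (x : νX) (k : E.KX x) (m : Vt (QAlg.sc r0 (E.τ x)) M) :
    (((E.TMm M (.inr x)).toSMul.smul k m : Vt (QAlg.sc r0 (E.τ x)) M) : M)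
      = QAlg.sc r0 (E.τ x) (E.σ x k) • (m : M) := rfl

variable {M} in
theorem w_mem {x y : νX} (d : E.δ x y) (m : Vt (QAlg.sc r0 (E.τ x)) M) :
    QAlg.mk r0 (E.w d) • (m : M) ∈ Vert (QAlg.sc r0 (E.τ y)) M := by
  change _ • _ = _
  have h := E.hw d 1
  rw [map_one (E.σ x), map_one (E.σδ d), map_one (E.σ y)] at h
  rw [smul_smul, ← h, mul_smul, Vt.prop]

noncomputable def Tact : ∀ {s t : ν ⊕ νX}, E.αG s t → (E.TM M s →+ E.TM M t)
  | _, _, .old a =>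
    { toFun := fun m => ⟨QAlg.ar r0 a • (m : M), QAlg.ar_mem a _⟩
      map_zero' := Subtype.ext (smul_zero _)
      map_add' := fun x y => Subtype.ext (smul_add _ _ _) }
  | _, _, .p x => AddMonoidHom.id (Vt (QAlg.sc r0 (E.τ x)) M)
  | _, _, .new d =>
    { toFun := fun m => ⟨QAlg.mk r0 (E.w d) • (m : M), E.w_mem d m⟩
      map_zero' := Subtype.ext (smul_zero _)
      map_add' := fun x y => Subtype.ext (smul_add _ _ _) }

noncomputable def Tn (m : M) : ∀ v, E.TM M v
  | .inl v => QAlg.pr r0 v m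
  | .inr _ => 0

noncomputable abbrev Tlift : FA E.KG E.αG →ₐ[ℤ] AddMonoid.End (∀ v, E.TM M v) :=
  FreeAlgebra.lift ℤ (repρ (E.TM M) (fun a => E.Tact M a))

theorem Tlift_sc (v : ν ⊕ νX) (k : E.KG v) (n : ∀ v, E.TM M v) :
    E.Tlift M (FA.sc v k) n = Pi.single v (k • n v) := by
  unfold Tlift; rw [FreeAlgebra.lift_ι_apply]; rfl

theorem Tlift_ar {s t : ν ⊕ νX} (a : E.αG s t) (n : ∀ v, E.TM M v) :
    E.Tlift M (FA.ar a) n = Pi.single t (E.Tact M a (n s)) := by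
  unfold Tlift; rw [FreeAlgebra.lift_ι_apply]; rfl

theorem Tlift_mul (x y : FA E.KG E.αG) (n : ∀ v, E.TM M v) :
    E.Tlift M (x * y) n = E.Tlift M x (E.Tlift M y n) := by
  rw [map_mul]; rfl

theorem Tn_vt (v : ν) (m : Vt (QAlg.sc r0 v) M) :
    E.Tn M (m : M) = Pi.single (M := E.TM M) (.inl v) m := by
  funext w
  rcases w with w | x
  · by_cases h : w = v
    · subst h
      rw [Pi.single_eq_same]; exact QAlg.pr_vt _ _
    · rw [Pi.single_eq_of_ne (by simpa using h)]
      exact Subtype.ext (QAlg.smul_vt_ne h 1 m)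
  · rw [Pi.single_eq_of_ne (by simp)]; rfl

theorem Tn_add (m m' : M) : E.Tn M (m + m') = E.Tn M m + E.Tn M m' := by
  funext w
  rcases w with w | x
  · exact map_add (QAlg.pr r0 w) m m'
  · exact (add_zero _).symm

theorem Tn_zero : E.Tn M 0 = 0 := by
  funext w
  rcases w with w | x
  · exact map_zero (QAlg.pr r0 w)
  · rfl

noncomputable def TnH : M →+ ∀ v, E.TM M v where
  toFun := E.Tn M
  map_zero' := E.Tn_zero M
  map_add' := E.Tn_add M

theorem Tlift_emb (x : FA K α) (m : M) :
    E.Tlift M (E.emb x) (E.Tn M m) = E.Tn M (QAlg.mk r0 x • m) := by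
  induction x using FreeAlgebra.induction generalizing m with
  | grade0 n =>
    rw [AlgHom.commutes, AlgHom.commutes]
    have h1 : (algebraMap ℤ (AddMonoid.End (∀ v, E.TM M v)) n) (E.Tn M m) = n • E.Tn M m := by
      simp
    have h2 : QAlg.mk r0 (algebraMap ℤ _ n) = (n : QAlg r0) := by simp
    rw [h1, h2, Int.cast_smul_eq_zsmul]
    exact (map_zsmul (E.TnH M) n m).symm
  | grade1 g =>
    unfold emb
    rw [FreeAlgebra.lift_ι_apply]
    cases g with
    | sc v k =>
      change E.Tlift M (FA.sc (K := E.KG) (.inl v) k) _ = E.Tn M (QAlg.sc r0 v k • m)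
      rw [Tlift_sc]
      refine Eq.trans ?_ (E.Tn_vt M v ⟨_, QAlg.sc_mem v k m⟩).symm
      congr 1
      apply Subtype.ext
      change QAlg.sc r0 v k • QAlg.sc r0 v 1 • m = QAlg.sc r0 v k • m
      rw [smul_smul, ← map_mul, mul_one]
    | @ar s t a =>
      change E.Tlift M (FA.ar (αG.old a)) _ = E.Tn M (QAlg.ar r0 a • m)
      rw [Tlift_ar]
      refine Eq.trans ?_ (E.Tn_vt M t ⟨_, QAlg.ar_mem a m⟩).symm
      congr 1
      apply Subtype.ext
      change QAlg.ar r0 a • QAlg.sc r0 s 1 • m = QAlg.ar r0 a • m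
      rw [smul_smul, QAlg.ar_src]
  | mul x y hx hy =>
    rw [map_mul, Tlift_mul, hy, hx, map_mul, mul_smul]
  | add x y hx hy =>
    rw [map_add, map_add, map_add, add_smul, Tn_add, ← hx, ← hy]; rfl

theorem Tlift_e0 (n : ∀ v, E.TM M v) :
    E.Tlift M E.e0 n = E.Tn M (∑ v : ν, ((n (.inl v) : Vt (QAlg.sc r0 v) M) : M)) := by
  have : E.Tn M (∑ v : ν, ((n (.inl v) : Vt (QAlg.sc r0 v) M) : M))
      = ∑ v : ν, E.Tn M ((n (.inl v) : Vt (QAlg.sc r0 v) M) : M) := map_sum (E.TnH M) _ _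
  rw [this, e0, map_sum]
  refine (AddMonoidHom.finsetSum_apply _ _ _).trans ?_
  refine Finset.sum_congr rfl fun v _ => ?_
  refine (E.Tlift_sc M _ _ _).trans ?_
  rw [Tn_vt, one_smul]

noncomputable def T : QRep E.rG where
  M := E.TM M
  act a := E.Tact M a
  rel x y h := by
    change E.Tlift M x = E.Tlift M y
    refine End_ext fun n => ?_
    cases h with
    | old x y h =>
      rw [Tlift_mul, Tlift_mul, Tlift_e0, Tlift_emb, Tlift_emb, QAlg.cust r0 h]
    | p x k =>
      rw [Tlift_mul, Tlift_mul, Tlift_ar, Tlift_ar, Tlift_sc, Tlift_sc, Pi.single_eq_same,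
        Pi.single_eq_same]
      rfl
    | @new x y d k =>
      rw [Tlift_mul, Tlift_mul, Tlift_ar, Tlift_ar, Tlift_sc, Tlift_sc, Pi.single_eq_same,
        Pi.single_eq_same]
      congr 1
      apply Subtype.ext
      change QAlg.mk r0 (E.w d) • QAlg.sc r0 _ (E.σ x k) •
        ((n (.inr x) : Vt (QAlg.sc r0 (E.τ x)) M) : M) = 
        QAlg.sc r0 _ (E.σ y (E.σδ d k)) • QAlg.mk r0 (E.w d) •
        ((n (.inr x) : Vt (QAlg.sc r0 (E.τ x)) M) : M)
      rw [smul_smul, smul_smul, E.hw]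
    | @newp x y d =>
      rw [Tlift_mul, Tlift_mul, Tlift_mul, Tlift_sc, one_smul, ← Tn_vt, Tlift_emb, Tlift_ar,
        Tlift_ar, Tlift_ar, Pi.single_eq_same]
      congr 1
      apply Subtype.ext
      exact (E.w_mem d (n (.inl (E.τ x)))).symm

end T
end ExtD

namespace QRep
variable {ν : Type} [Fintype ν] [DecidableEq ν] {K : ν → Type} [∀ v, DivisionRing (K v)]
    {α : ν → ν → Type} {r0 : FA K α → FA K α → Prop}

noncomputable def mapX (A B : QRep r0) (g : ∀ v, A.M v →+ B.M v)
    (hsc : ∀ v (k : K v) m, g v (k • m) = k • g v m)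
    (har : ∀ s t (a : α s t) m, g t (A.act a m) = B.act a (g s m)) : A.X →ₗ[QAlg r0] B.X :=
  have hs : ∀ v m, (fun w => g w (A.single v m w) : B.X) = B.single v (g v m) := fun v m => by
    funext w
    by_cases h : w = v
    · subst h; rw [single_same, single_same]
    · rw [single_ne _ h, single_ne _ h, map_zero]
  QAlg.mkLin
    { toFun := fun n v => g v (n v)
      map_zero' := funext fun v => map_zero (g v)
      map_add' := fun x y => funext fun v => map_add (g v) _ _ }
    (by
      intro v k n
      refine Eq.trans ?_ (B.sc_smul v k _).symm
      rw [sc_smul]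
      refine (hs v _).trans ?_
      rw [hsc]; rfl)
    (by
      intro s t a n
      refine Eq.trans ?_ (B.ar_smul a _).symm
      rw [ar_smul]
      refine (hs t _).trans ?_
      rw [har]; rfl)

theorem mapX_apply (A B : QRep r0) (g hsc har) (n : A.X) (v : ν) :
    mapX A B g hsc har n v = g v (n v) := rfl

end QRep

theorem Vt.ex_range {Λ : Type} [Ring Λ] {K : Type} [DivisionRing K] (s : K →ₙ+* Λ)
    {M N : Type} [AddCommGroup M] [Module Λ M] [AddCommGroup N] [Module Λ N] (j : M →ₗ[Λ] N)
    (n : Vt s N) (h : Vt.map s (LinearMap.range j).mkQ n = 0) : ∃ m, Vt.map s j m = n := by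
  have h3 : (LinearMap.range j).mkQ (n : N) = 0 := congrArg Subtype.val h
  rw [Submodule.mkQ_apply, Submodule.Quotient.mk_eq_zero] at h3
  obtain ⟨m, hm⟩ := h3
  refine ⟨⟨s 1 • m, vert_smul s M 1 m⟩, Subtype.ext ?_⟩
  rw [Vt.coe_map, map_smul, hm, Vt.prop]

namespace ExtD
variable {ν : Type} [Fintype ν] [DecidableEq ν] {K : ν → Type} [∀ v, DivisionRing (K v)]
    {α : ν → ν → Type} {r0 : FA K α → FA K α → Prop} {νX : Type} [Fintype νX] [DecidableEq νX]
    (E : ExtD r0 νX)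
    {M N : Type} [AddCommGroup M] [Module (QAlg r0) M] [AddCommGroup N] [Module (QAlg r0) N]

noncomputable def TmapV (f : M →ₗ[QAlg r0] N) : ∀ v, E.TM M v →+ E.TM N v
  | .inl v => (Vt.map (QAlg.sc r0 v) f).toAddMonoidHom
  | .inr x => (Vt.map (QAlg.sc r0 (E.τ x)) f).toAddMonoidHom

noncomputable def Tmap (f : M →ₗ[QAlg r0] N) : (E.T M).X →ₗ[E.ΛG] (E.T N).X :=
  QRep.mapX (E.T M) (E.T N) (E.TmapV f)
    (by
      intro v k m
      rcases v with v | x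
      · exact map_smul (Vt.map (QAlg.sc r0 v) f) k m
      · exact Subtype.ext (map_smul f (QAlg.sc r0 (E.τ x) (E.σ x k)) (Subtype.val m)))
    (by
      intro s t a m
      cases a with
      | old a => exact Subtype.ext (map_smul f _ _)
      | p x => rfl
      | new d => exact Subtype.ext (map_smul f _ _))

theorem Tmap_inj (f : M →ₗ[QAlg r0] N) (hf : Function.Injective f) :
    Function.Injective (E.Tmap f) := by
  intro n n' h
  funext v
  have hv := congrFun h v
  rcases v with v | x
  · exact Vt.map_inj _ f hf hv
  · exact Vt.map_inj _ f hf hv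

theorem Tmap_surj (f : M →ₗ[QAlg r0] N) (hf : Function.Surjective f) :
    Function.Surjective (E.Tmap f) := by
  intro n
  have : ∀ v, ∃ m : E.TM M v, E.TmapV f v m = n v := by
    intro v
    rcases v with v | x
    · exact Vt.map_surj _ f hf (n (.inl v))
    · exact Vt.map_surj _ f hf (n (.inr x))
  choose m hm using this
  exact ⟨m, funext hm⟩

theorem Tmap_ker (f : M →ₗ[QAlg r0] N) :
    LinearMap.ker (E.Tmap (LinearMap.range f).mkQ) = LinearMap.range (E.Tmap f) := by
  ext n
  constructor
  · intro h
    have : ∀ v, ∃ m : E.TM M v, E.TmapV f v m = n v := by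
      intro v
      have hv := congrFun h v
      rcases v with v | x
      · exact Vt.ex_range _ f (n (.inl v)) hv
      · exact Vt.ex_range _ f (n (.inr x)) hv
    choose m hm using this
    exact ⟨m, funext hm⟩
  · rintro ⟨m, rfl⟩
    funext v
    rcases v with v | x
    · exact Subtype.ext ((Submodule.Quotient.mk_eq_zero _).2 ⟨_, rfl⟩)
    · exact Subtype.ext ((Submodule.Quotient.mk_eq_zero _).2 ⟨_, rfl⟩)

noncomputable def Tquot (f : M →ₗ[QAlg r0] N) :
    (E.T (N ⧸ LinearMap.range f)).X ≃ₗ[E.ΛG] (E.T N).X ⧸ LinearMap.range (E.Tmap f) :=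
  ((Submodule.quotEquivOfEq _ _ (E.Tmap_ker f).symm).trans
    ((E.Tmap (LinearMap.range f).mkQ).quotKerEquivOfSurjective
      (E.Tmap_surj _ (Submodule.mkQ_surjective _)))).symm

variable (M) in
noncomputable def Tnx : M →+ (E.T M).X := E.TnH M

theorem Tnx_vt (v : ν) (m : Vt (QAlg.sc r0 v) M) :
    E.Tnx M (m : M) = (E.T M).single (.inl v) m := E.Tn_vt M v m

theorem Tnx_mk (x : FA K α) (m : M) : E.Tnx M (QAlg.mk r0 x • m) = E.mkE x • E.Tnx M m := by
  refine (E.Tlift_emb M x m).symm.trans ?_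
  change _ = (E.T M).toEnd (QAlg.mk E.rG (E.emb x)) _
  rw [QRep.toEnd_mk]; rfl

theorem Tnx_map (f : M →ₗ[QAlg r0] N) (m : M) : E.Tmap f (E.Tnx M m) = E.Tnx N (f m) := by
  funext v
  rcases v with v | x
  · exact Subtype.ext (map_smul f _ _)
  · exact Subtype.ext (map_zero f)

variable {V : Type} [AddCommGroup V] [Module E.ΛG V]

noncomputable def upV (f : M →ₗ[QAlg r0] (E.U V).X) : ∀ v, E.TM M v →+ V
  | .inl v => ((E.toV V).comp f.toAddMonoidHom).comp (Vert (QAlg.sc r0 v) M).subtype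
  | .inr x => (DistribSMul.toAddMonoidHom V (E.arp x)).comp
      (((E.toV V).comp f.toAddMonoidHom).comp (Vert (QAlg.sc r0 (E.τ x)) M).subtype)

noncomputable def up (f : M →ₗ[QAlg r0] (E.U V).X) : (E.T M).X →ₗ[E.ΛG] V :=
  (E.T M).lift (E.upV f)
    (by
      intro v k m
      rcases v with v | x
      · change E.toV V (f (QAlg.sc r0 v k • (Subtype.val m))) = E.scl v k • E.toV V (f (Subtype.val m))
        rw [map_smul, toV_sc]
      · change E.arp x • E.toV V (f (QAlg.sc r0 (E.τ x) (E.σ x k) • (Subtype.val m)))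
          = E.scr x k • E.arp x • E.toV V (f (Subtype.val m))
        rw [map_smul, toV_sc, smul_smul, smul_smul, rel_p])
    (by
      intro s t a m
      cases a with
      | old a =>
        change E.toV V (f (QAlg.ar r0 a • (Subtype.val m))) = E.aro a • E.toV V (f (Subtype.val m))
        rw [map_smul, toV_ar]
      | p x => rfl
      | @new x y d =>
        have h1 : f (Subtype.val m) = QAlg.sc r0 (E.τ x) 1 • f (Subtype.val m) := by
          rw [← map_smul]; exact congrArg f (Vt.prop (QAlg.sc r0 (E.τ x)) m).symm
        change E.arp y • E.toV V (f (QAlg.mk r0 (E.w d) • (Subtype.val m)))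
          = E.arn d • E.arp x • E.toV V (f (Subtype.val m))
        rw [map_smul, toV_mk, smul_smul, smul_smul, rel_newp, mul_smul _ (E.scl (E.τ x) 1), ← toV_sc,
          ← h1])

theorem up_inl (f : M →ₗ[QAlg r0] (E.U V).X) (v : ν) (m : Vt (QAlg.sc r0 v) M) :
    E.up f ((E.T M).single (.inl v) m) = E.toV V (f m) := QRep.lift_single _ _ _ _ _ _

theorem up_inr (f : M →ₗ[QAlg r0] (E.U V).X) (x : νX) (m : Vt (QAlg.sc r0 (E.τ x)) M) :
    E.up f ((E.T M).single (.inr x) m) = E.arp x • E.toV V (f m) := QRep.lift_single _ _ _ _ _ _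

theorem Tnx_sum (m : M) : E.Tnx M m = ∑ v, (E.T M).single (.inl v) (QAlg.pr r0 v m) := by
  conv_lhs => rw [← QAlg.sum_pr (r0 := r0) m]
  rw [map_sum]
  exact Finset.sum_congr rfl fun v _ => E.Tnx_vt v _

theorem up_Tnx (f : M →ₗ[QAlg r0] (E.U V).X) (m : M) : E.up f (E.Tnx M m) = E.toV V (f m) := by
  conv_rhs => rw [← QAlg.sum_pr (r0 := r0) m, map_sum, map_sum]
  rw [Tnx_sum, map_sum]
  exact Finset.sum_congr rfl fun v _ => E.up_inl f v _

noncomputable def down0 (g : (E.T M).X →ₗ[E.ΛG] V) : M →+ (E.U V).X where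
  toFun m v := Vt.map (E.scl v) g (((E.T M).vtEquiv (.inl v)) (QAlg.pr r0 v m))
  map_zero' := funext fun v => by
    rw [map_zero]
    exact (congrArg _ (map_zero ((E.T M).vtEquiv (.inl v)))).trans (map_zero _)
  map_add' x y := funext fun v => by
    rw [map_add]
    exact (congrArg _ (map_add ((E.T M).vtEquiv (.inl v)) _ _)).trans (map_add _ _ _)

theorem toV_down0 (g : (E.T M).X →ₗ[E.ΛG] V) (m : M) : E.toV V (E.down0 g m) = g (E.Tnx M m) := by
  rw [Tnx_sum, map_sum]; rfl

noncomputable def down (g : (E.T M).X →ₗ[E.ΛG] V) : M →ₗ[QAlg r0] (E.U V).X :=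
  QAlg.mkLin (E.down0 g)
    (by
      intro v k m
      apply E.toV_inj V
      rw [toV_down0, toV_sc, toV_down0, ← map_smul, ← mkE_sc, ← Tnx_mk]; rfl)
    (by
      intro s t a m
      apply E.toV_inj V
      rw [toV_down0, toV_ar, toV_down0, ← map_smul, ← mkE_ar, ← Tnx_mk]; rfl)

theorem toV_down (g : (E.T M).X →ₗ[E.ΛG] V) (m : M) : E.toV V (E.down g m) = g (E.Tnx M m) :=
  E.toV_down0 g m

theorem U_loc {cF : ν → ℤ} {cG : ν ⊕ νX → ℤ}
    (hgood : ∀ (M : Type) [AddCommGroup M] [Module (QAlg r0) M], (qRank r0 cF).good M →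
      (qRank E.rG cG).good (E.T M).X)
    (hnull : ∀ (M : Type) [AddCommGroup M] [Module (QAlg r0) M], (qRank r0 cF).Null M →
      (qRank E.rG cG).Null (E.T M).X)
    (hV : (qRank E.rG cG).Loc V) : (qRank r0 cF).Loc (E.U V).X := by
  refine ⟨?_, ?_⟩
  · intro L _ _ hL f
    have h := hV.null _ (hnull L hL) (E.up f)
    ext m
    apply E.toV_inj V
    rw [← up_Tnx, h]; simp
  · intro M M' _ _ _ _ j hM' hj hL f
    obtain ⟨g, hg⟩ := hV.ext _ _ (E.Tmap j) (hgood M' hM') (E.Tmap_inj j hj)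
      ((hnull _ hL).equiv (E.Tquot j)) (E.up f)
    refine ⟨E.down g, ?_⟩
    ext m
    apply E.toV_inj V
    rw [← up_Tnx E f, ← hg, LinearMap.comp_apply, toV_down, LinearMap.comp_apply, Tnx_map]

end ExtD

/-! action of endomorphisms -/
section D
variable {Λ : Type} [Ring Λ] {K : Type} [DivisionRing K] (s : K →ₙ+* Λ)
    {V : Type} [AddCommGroup V] [Module Λ V]

instance Vt.modEnd : Module (Module.End Λ V) (Vt s V) where
  smul d m := Vt.map s d m
  one_smul m := Subtype.ext rfl
  mul_smul d e m := Subtype.ext rfl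
  smul_zero d := map_zero (Vt.map s d)
  smul_add d x y := map_add (Vt.map s d) x y
  add_smul d e m := Subtype.ext rfl
  zero_smul m := Subtype.ext rfl

theorem Vt.coe_end (d : Module.End Λ V) (m : Vt s V) : ((d • m : Vt s V) : V) = d (m : V) := rfl

end D

namespace ExtD
variable {ν : Type} [Fintype ν] [DecidableEq ν] {K : ν → Type} [∀ v, DivisionRing (K v)]
    {α : ν → ν → Type} {r0 : FA K α → FA K α → Prop} {νX : Type} [Fintype νX] [DecidableEq νX]
    (E : ExtD r0 νX) {V : Type} [AddCommGroup V] [Module E.ΛG V]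

noncomputable instance Umod : Module (Module.End E.ΛG V) (E.U V).X :=
  inferInstanceAs (Module (Module.End E.ΛG V) (∀ v, Vt (E.scl v) V))

theorem toV_end (d : Module.End E.ΛG V) (m : (E.U V).X) : E.toV V (d • m) = d (E.toV V m) := by
  change _ = d (∑ v, E.cV V v (m v))
  rw [map_sum]; rfl

instance : SMulCommClass (QAlg r0) (Module.End E.ΛG V) (E.U V).X where
  smul_comm x d m := by
    obtain ⟨x, rfl⟩ := QAlg.mk_surj r0 x
    apply E.toV_inj V
    rw [toV_mk, toV_end, toV_end, toV_mk, map_smul]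

instance : SMulCommClass (Module.End E.ΛG V) (QAlg r0) (E.U V).X := SMulCommClass.symm _ _ _

end ExtD

section Bridge
open MulOpposite
variable {n : ℕ} {F G : Type} [DivisionRing F] [DivisionRing G]
  {Λ : Type} [Ring Λ] {R : RankDat Λ} {I V U : Type} [AddCommGroup I] [Module Λ I]
  [AddCommGroup V] [Module Λ V] [AddCommGroup U] [Module Λ U]
  {D : Type} [Ring D] [Module D U] [SMulCommClass Λ D U]
  {P : Type} [AddCommGroup P] [Module D P]

theorem endP_unit (hP : ∀ p p' : P, p ≠ 0 → ∃ d : D, d • p = p') (θ : Module.End D P) :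
    IsUnit θ ∨ θ = 0 := by
  by_cases h : θ = 0
  · exact Or.inr h
  left
  rw [Module.End.isUnit_iff]
  have hne : ∀ q, q ≠ 0 → θ q ≠ 0 := by
    intro q hq h0
    apply h
    ext p
    obtain ⟨d, rfl⟩ := hP q p hq
    simp [h0]
  constructor
  · rw [injective_iff_map_eq_zero]
    intro q hq
    by_contra hc
    exact hne q hc hq
  · intro p'
    obtain ⟨p, hp⟩ : ∃ p : P, p ≠ 0 := by
      by_contra! hc
      exact h (by ext p; rw [hc p]; simp)
    obtain ⟨d, hd⟩ := hP (θ p) p' (hne p hp)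
    exact ⟨d • p, by rw [map_smul, hd]⟩

variable (D) in
noncomputable def preE (V U : Type) [AddCommGroup V] [Module Λ V] [AddCommGroup U] [Module Λ U]
    [Module D U] [SMulCommClass Λ D U] : (Module.End Λ V)ᵐᵒᵖ →+* Module.End D (V →ₗ[Λ] U) where
  toFun d :=
    { toFun := fun ζ => ζ ∘ₗ unop d
      map_add' := fun _ _ => rfl
      map_smul' := fun _ _ => rfl }
  map_one' := rfl
  map_mul' _ _ := rfl
  map_zero' := by ext ζ v; exact map_zero ζ
  map_add' x y := by ext ζ v; exact map_add ζ _ _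

variable (D) in
noncomputable def resE {i : I →ₗ[Λ] V} (hG : R.Gen i) (hU : R.Loc U) :
    (V →ₗ[Λ] U) ≃ₗ[D] (I →ₗ[Λ] U) :=
  LinearEquiv.ofBijective
    { toFun := fun ζ => ζ ∘ₗ i
      map_add' := fun _ _ => rfl
      map_smul' := fun _ _ => rfl }
    ⟨fun _ _ h => hG.ext hU h, fun g => (hG.univ U hU g).exists⟩

theorem bridge {i : I →ₗ[Λ] V} (hG : R.Gen i) (hU : R.Loc U)
    (hP : ∀ p p' : P, p ≠ 0 → ∃ d : D, d • p = p') [Nontrivial P]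
    (φ : F →+* Matrix (Fin n) (Fin n) G) (hn : 0 < n)
    (ι : G →+* Module.End D P) (c : (I →ₗ[Λ] U) ≃ₗ[D] (Fin n → P))
    (ρ : F →+* (Module.End Λ I)ᵐᵒᵖ)
    (hc : ∀ f h r, c (h ∘ₗ (ρ f).unop) r = ∑ j, ι (φ f r j) (c h j)) :
    ∃ (F' G' : Type) (_ : DivisionRing F') (_ : DivisionRing G') (ιF : F →+* F')
      (β : Module.End D P →+* G') (φ' : F' →+* Matrix (Fin n) (Fin n) G'),
      (∀ f, φ' (ιF f) = (φ f).map (β.comp ι)) ∧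
      ∀ (d : V →ₗ[Λ] V) (S : Fin n → Prop) (B : Matrix (Fin n) (Fin n) (Module.End D P)),
      (∀ r, S r → ∀ ζ : V →ₗ[Λ] U, c (ζ ∘ₗ d ∘ₗ i) r = ∑ j, B r j (c (ζ ∘ₗ i) j)) →
      ∃ x, ∀ r, S r → ∀ j, φ' x r j = β (B r j) := by
  have := hG.nontriv
  have : Nontrivial (Module.End D P) := by
    obtain ⟨p, hp⟩ := exists_ne (0 : P)
    exact ⟨⟨1, 0, fun h => hp (by simpa using LinearMap.congr_fun h p)⟩⟩
  let e := (resE D hG hU).trans c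
  let φ' : (Module.End Λ V)ᵐᵒᵖ →+* Matrix (Fin n) (Fin n) (Module.End D P) :=
    ((endVecRingEquivMatrixEnd (Fin n) D P).toRingHom.comp e.conjRingEquiv.toRingHom).comp
      (preE D V U)
  have key : ∀ (d : V →ₗ[Λ] V) (r : Fin n) (b : Fin n → Module.End D P),
      (∀ ζ : V →ₗ[Λ] U, c (ζ ∘ₗ d ∘ₗ i) r = ∑ j, b j (c (ζ ∘ₗ i) j)) →
      ∀ j, φ' (op d) r j = b j := by
    intro d r b h j
    ext p
    have h1 := h (e.symm (Pi.single j p))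
    have h2 : c (e.symm (Pi.single j p) ∘ₗ i) = Pi.single j p := e.apply_symm_apply _
    rw [h2, Finset.sum_eq_single j, Pi.single_eq_same] at h1
    · rw [← h1]; rfl
    · intro k _ hk; rw [Pi.single_eq_of_ne hk, map_zero]
    · simp
  have hex : ∀ f, ∃ d : V →ₗ[Λ] V, d ∘ₗ i = i ∘ₗ (ρ f).unop := fun f =>
    (hG.univ V hG.loc _).exists
  choose dF hdF using hex
  let ιF : F →+* (Module.End Λ V)ᵐᵒᵖ :=
    { toFun := fun f => op (dF f)
      map_one' := by
        apply unop_injective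
        exact hG.ext hG.loc (by rw [unop_op, hdF, map_one]; rfl)
      map_zero' := by
        apply unop_injective
        exact hG.ext hG.loc (by rw [unop_op, hdF, map_zero]; ext; simp)
      map_add' := fun f g => by
        apply unop_injective
        exact hG.ext hG.loc (by
          rw [unop_op, hdF, map_add, unop_add, LinearMap.comp_add, ← hdF, ← hdF]; rfl)
      map_mul' := fun f g => by
        apply unop_injective
        refine hG.ext hG.loc ?_
        change dF (f * g) ∘ₗ i = (dF g ∘ₗ dF f) ∘ₗ i
        rw [hdF, LinearMap.comp_assoc, hdF, ← LinearMap.comp_assoc, hdF, map_mul]; rfl }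
  let iF : DivisionRing (Module.End Λ V)ᵐᵒᵖ := DivisionRing.ofIsUnitOrEqZero (by
    intro a
    rcases hG.isUnit_or (unop a) with h | h
    · exact Or.inl (by simpa using h.op)
    · exact Or.inr (unop_injective h))
  let iG : DivisionRing (Module.End D P) := DivisionRing.ofIsUnitOrEqZero (endP_unit hP)
  refine ⟨(Module.End Λ V)ᵐᵒᵖ, Module.End D P, iF, iG, ιF, RingHom.id _, φ', ?_, fun d S B hd => ⟨op d, ?_⟩⟩
  · intro f
    ext1 r j
    refine key _ r (fun j => ι (φ f r j)) ?_ j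
    intro ζ
    rw [hdF, ← LinearMap.comp_assoc, hc]
  · intro r hr j
    exact key d r (B r) (hd r hr) j

end Bridge

section Sim
variable {ν : Type} [Fintype ν] [DecidableEq ν] {K : ν → Type} [∀ v, DivisionRing (K v)]
    {α : ν → ν → Type} {r0 : FA K α → FA K α → Prop}

@[reducible] def SimM (v0 : ν) (W : Type) (v : ν) : Type := PLift (v = v0) → W

instance simA (v0 : ν) (W : Type) [AddCommGroup W] (v : ν) : AddCommGroup (SimM v0 W v) :=
  Pi.addCommGroup

instance simMod (v0 : ν) (W : Type) [AddCommGroup W] [Module (K v0) W] (v : ν) :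
    Module (K v) (SimM v0 W v) where
  smul k f := fun h => (cast (congrArg K h.down) k) • f h
  one_smul f := by funext ⟨h⟩; subst h; exact one_smul _ _
  mul_smul k l f := by funext ⟨h⟩; subst h; exact mul_smul _ _ _
  smul_zero k := by funext ⟨h⟩; subst h; exact smul_zero _
  smul_add k f g := by funext ⟨h⟩; subst h; exact smul_add _ _ _
  add_smul k l f := by funext ⟨h⟩; subst h; exact add_smul _ _ _
  zero_smul f := by funext ⟨h⟩; subst h; exact zero_smul _ _

variable (r0) in
def SimRel (v0 : ν) : Prop := ∀ (W : Type) [AddCommGroup W] [Module (K v0) W], ∀ x y, r0 x y →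
  FreeAlgebra.lift ℤ (repρ (K := K) (α := α) (SimM v0 W) (fun _ => 0)) x
    = FreeAlgebra.lift ℤ (repρ (SimM v0 W) (fun _ => 0)) y

def QRep.sim (v0 : ν) (hr : SimRel r0 v0) (W : Type) [AddCommGroup W] [Module (K v0) W] :
    QRep r0 where
  M := SimM v0 W
  act := fun _ => 0
  rel := hr W

variable (v0 : ν) (hr : SimRel r0 v0) (W : Type) [AddCommGroup W] [Module (K v0) W]

def simE : SimM v0 W v0 ≃ₗ[K v0] W where
  toFun f := f ⟨rfl⟩
  invFun w := fun _ => w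
  map_add' _ _ := rfl
  map_smul' _ _ := rfl
  left_inv _ := rfl
  right_inv _ := rfl

theorem sim_subs {v : ν} (h : v ≠ v0) : Subsingleton (SimM v0 W v) :=
  ⟨fun _ _ => funext fun h' => absurd h'.down h⟩

theorem sim_fin [Module.Finite (K v0) W] (v : ν) : Module.Finite (K v) (SimM v0 W v) := by
  by_cases h : v = v0
  · subst h
    exact Module.Finite.equiv (simE v W).symm
  · have := sim_subs v0 W h
    infer_instance

theorem sim_sum (c : ν → ℤ) (X : ∀ v, Submodule (K v) (SimM v0 W v)) :
    ∑ v, c v * (Module.finrank (K v) (X v) : ℤ) = c v0 * (Module.finrank (K v0) (X v0) : ℤ) := by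
  rw [Finset.sum_eq_single v0]
  · intro v _ h
    have := sim_subs v0 W h
    rw [Module.finrank_zero_of_subsingleton]; simp
  · simp

theorem sim_sum' (c : ν → ℤ) :
    ∑ v, c v * (Module.finrank (K v) (SimM v0 W v) : ℤ) = c v0 * (Module.finrank (K v0) W : ℤ) := by
  rw [Finset.sum_eq_single v0, (simE v0 W).finrank_eq]
  · intro v _ h
    have := sim_subs v0 W h
    rw [Module.finrank_zero_of_subsingleton]; simp
  · simp

theorem sim_stab (c : ν → ℤ) (hc : c v0 = 1) :
    (qRank r0 c).Stab (QRep.sim v0 hr (K v0)).X := by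
  refine QRep.stab _ (sim_fin v0 (K v0)) ?_ ?_
  · refine (sim_sum' v0 (K v0) c).trans ?_
    rw [hc, Module.finrank_self]; rfl
  · intro (X : ∀ v, Submodule (K v) (SimM v0 (K v0) v)) _ hX
    refine le_of_le_of_eq ?_ (sim_sum v0 (K v0) c X).symm
    have : Module.Finite (K v0) (SimM v0 (K v0) v0) := sim_fin v0 (K v0) v0
    have h1 : X v0 ≠ ⊥ := by
      obtain ⟨v, hv⟩ := hX
      by_cases h : v = v0
      · subst h; exact hv
      · have := sim_subs v0 (K v0) h
        exact absurd (Subsingleton.elim (X v) ⊥) hv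
    have h2 : 0 < Module.finrank (K v0) (X v0) := by
      rw [Module.finrank_pos_iff]
      exact (Submodule.nontrivial_iff_ne_bot).2 h1
    rw [hc]; omega

noncomputable def simV {V : Type} [AddCommGroup V] [Module (QAlg r0) V]
    (f : W →ₗ[K v0] Vt (QAlg.sc r0 v0) V) (v : ν) : SimM v0 W v →+ V :=
    if h : v = v0 then
      { toFun := fun m => (f (m ⟨h⟩) : V)
        map_zero' := by
          change ((f 0 : Vt (QAlg.sc r0 v0) V) : V) = 0
          rw [map_zero]; rfl
        map_add' := fun x y => by
          change ((f (x ⟨h⟩ + y ⟨h⟩) : Vt (QAlg.sc r0 v0) V) : V) = _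
          rw [map_add]; rfl } else 0

theorem simV_self {V : Type} [AddCommGroup V] [Module (QAlg r0) V]
    (f : W →ₗ[K v0] Vt (QAlg.sc r0 v0) V) (m : SimM v0 W v0) :
    simV v0 W f v0 m = (f (m ⟨rfl⟩) : V) := by
  unfold simV; rw [dif_pos rfl]; rfl

/-- maps out of a simple-type rep at a sink -/
noncomputable def simHom {V : Type} [AddCommGroup V] [Module (QAlg r0) V]
    (hs : ∀ t, IsEmpty (α v0 t)) (f : W →ₗ[K v0] Vt (QAlg.sc r0 v0) V) :
    (QRep.sim v0 hr W).X →ₗ[QAlg r0] V :=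
  (QRep.sim v0 hr W).lift
    (simV v0 W f)
    (by
      intro v k m
      by_cases h : v = v0
      · subst h
        refine (simV_self v W f (k • m)).trans (Eq.trans ?_ (congrArg _ (simV_self v W f m).symm))
        change ((f (k • m ⟨rfl⟩) : Vt (QAlg.sc r0 v) V) : V) = _ • (f (m ⟨rfl⟩) : V)
        rw [map_smul]; rfl
      · have h0 : simV v0 W f v = 0 := dif_neg h
        rw [h0]; exact (smul_zero _).symm)
    (by
      intro s t a m
      by_cases h : s = v0
      · subst h
        exact ((hs t).false a).elim
      · have := sim_subs v0 W h
        have ha : (QRep.sim v0 hr W).act a m = 0 := rfl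
        rw [ha]
        have hm : m = 0 := Subsingleton.elim (α := SimM v0 W s) _ _
        rw [hm]
        exact (map_zero (simV v0 W f t)).trans
          ((smul_zero _).symm.trans (congrArg _ (map_zero (simV v0 W f s)).symm)))

theorem simHom_single {V : Type} [AddCommGroup V] [Module (QAlg r0) V]
    (hs : ∀ t, IsEmpty (α v0 t)) (f : W →ₗ[K v0] Vt (QAlg.sc r0 v0) V) (w : W) :
    simHom v0 hr W hs f ((QRep.sim v0 hr W).single v0 (fun _ => w)) = f w := by
  rw [simHom]
  exact (QRep.lift_single _ _ _ _ _ _).trans (simV_self v0 W f _)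

theorem sim_ext {V : Type} [AddCommGroup V] [Module (QAlg r0) V]
    {f g : (QRep.sim v0 hr W).X →ₗ[QAlg r0] V}
    (h : ∀ w : W, f ((QRep.sim v0 hr W).single v0 (fun _ => w)) =
      g ((QRep.sim v0 hr W).single v0 (fun _ => w))) : f = g := by
  refine QRep.hom_ext _ fun v m => ?_
  by_cases hv : v = v0
  · subst hv; exact h (m ⟨rfl⟩)
  · have := sim_subs v0 W hv
    have hm : m = 0 := Subsingleton.elim (α := SimM v0 W v) _ _
    rw [hm, map_zero, map_zero, map_zero]

end Sim

section SimG
variable {ν : Type} [Fintype ν] [DecidableEq ν] {K : ν → Type} [∀ v, DivisionRing (K v)]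
    {α : ν → ν → Type} {r0 : FA K α → FA K α → Prop} {νX : Type} [Fintype νX] [DecidableEq νX]
    (E : ExtD r0 νX)

theorem repρ_zero_ar (M : ν → Type) [∀ v, AddCommGroup (M v)] [∀ v, Module (K v) (M v)]
    {s t : ν} (a : α s t) : FreeAlgebra.lift ℤ (repρ (K := K) (α := α) M (fun _ => 0)) (FA.ar a) = 0 := by
  rw [FreeAlgebra.lift_ι_apply]
  refine End_ext fun n => ?_
  change Pi.single t 0 = 0
  simp

theorem simRelG (x0 : νX) : SimRel E.rG (.inr x0) := by
  intro W _ _ x y h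
  have h0 : ∀ v : ν, FreeAlgebra.lift ℤ (repρ (K := E.KG) (α := E.αG) (SimM (.inr x0) W)
      (fun _ => 0)) (FA.sc (K := E.KG) (.inl v) 1) = 0 := by
    intro v
    rw [FreeAlgebra.lift_ι_apply]
    refine End_ext fun n => ?_
    have := sim_subs (Sum.inr x0) W (v := Sum.inl v) (by simp)
    change Pi.single (M := SimM (Sum.inr x0) W) (.inl v) _ = 0
    rw [Pi.single_eq_zero_iff]
    exact Subsingleton.elim _ _
  cases h with
  | old x y h => rw [map_mul, map_mul, ExtD.e0, map_sum, Finset.sum_eq_zero (fun v _ => h0 v)]; simp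
  | p x k => rw [map_mul, map_mul, repρ_zero_ar]; simp
  | new d k => rw [map_mul, map_mul, repρ_zero_ar]; simp
  | newp d => rw [map_mul, map_mul, map_mul, repρ_zero_ar, zero_mul, repρ_zero_ar, zero_mul, zero_mul]

end SimG

namespace ExtD
section Coord
variable {ν : Type} [Fintype ν] [DecidableEq ν] {K : ν → Type} [∀ v, DivisionRing (K v)]
    {α : ν → ν → Type} {r0 : FA K α → FA K α → Prop} {νX : Type} [Fintype νX] [DecidableEq νX]
    (E : ExtD r0 νX) (x0 : νX) {n : ℕ}
    {I : Type} [AddCommGroup I] [Module (QAlg r0) I]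
    {V : Type} [AddCommGroup V] [Module E.ΛG V]

abbrev PV (V : Type) [AddCommGroup V] [Module E.ΛG V] : Type := Vt (QAlg.sc E.rG (Sum.inr x0)) V

theorem sink (hs : ∀ y, IsEmpty (E.δ x0 y)) (t : ν ⊕ νX) : IsEmpty (E.αG (Sum.inr x0) t) :=
  ⟨fun a => by cases a with | new d => exact (hs _).false d⟩

variable (e : Fin n → Vt (QAlg.sc r0 (E.τ x0)) I)

noncomputable def eh (i : Fin n) : E.PV x0 (E.T I).X := (E.T I).vtEquiv (Sum.inr x0) (e i)

noncomputable def jm (hs : ∀ y, IsEmpty (E.δ x0 y)) :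
    (QRep.sim (Sum.inr x0) (simRelG E x0) (Fin n → E.KG (Sum.inr x0))).X →ₗ[E.ΛG] (E.T I).X :=
  simHom (Sum.inr x0) (simRelG E x0) _ (E.sink x0 hs)
    (Fintype.linearCombination (E.KG (Sum.inr x0)) (E.eh x0 e))

theorem jm_single (hs : ∀ y, IsEmpty (E.δ x0 y)) (w : Fin n → E.KG (Sum.inr x0)) :
    E.jm x0 e hs ((QRep.sim (Sum.inr x0) (simRelG E x0) _).single (Sum.inr x0) (fun _ => w)) =
      ((∑ i, w i • E.eh x0 e i : E.PV x0 (E.T I).X) : (E.T I).X) := by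
  rw [jm, simHom_single, Fintype.linearCombination_apply]

theorem jm_inj (hs : ∀ y, IsEmpty (E.δ x0 y))
    (hli : ∀ w : Fin n → E.KX x0, ∑ i, QAlg.sc r0 (E.τ x0) (E.σ x0 (w i)) • (e i : I) = 0 → w = 0) :
    Function.Injective (E.jm x0 e hs) := by
  rw [injective_iff_map_eq_zero]
  intro y hy
  rw [← QRep.sum_single _ y] at hy ⊢
  have h1 : ∀ v, v ≠ Sum.inr x0 → (QRep.sim (Sum.inr x0) (simRelG E x0)
      (Fin n → E.KG (Sum.inr x0))).single v (y v) = 0 := by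
    intro v hv
    have := sim_subs (Sum.inr x0) (Fin n → E.KG (Sum.inr x0)) hv
    have h0 : y v = 0 := Subsingleton.elim (α := SimM (Sum.inr x0) (Fin n → E.KG (Sum.inr x0)) v) _ _
    rw [h0, map_zero]
  rw [Finset.sum_eq_single (Sum.inr x0) (fun v _ hv => h1 v hv) (by simp)] at hy ⊢
  set w : Fin n → E.KG (Sum.inr x0) := (y (Sum.inr x0) : SimM (Sum.inr x0) _ (Sum.inr x0)) ⟨rfl⟩ with hw
  have h2 : y (Sum.inr x0) = (fun _ => w) := rfl
  rw [h2] at hy ⊢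
  rw [jm_single] at hy
  have h3 : ∑ i, w i • E.eh x0 e i = 0 := Subtype.ext hy
  let e' : Fin n → (E.T I).M (Sum.inr x0) := e
  have h4 : (E.T I).vtEquiv (Sum.inr x0) (∑ i, w i • e' i) = 0 := by
    rw [map_sum, ← h3]
    refine Finset.sum_congr rfl fun i _ => ?_
    rw [map_smul]; rfl
  rw [LinearEquiv.map_eq_zero_iff] at h4
  have h5 : w = 0 := by
    apply hli
    have h6 := congrArg (Vert (QAlg.sc r0 (E.τ x0)) I).subtype h4
    refine Eq.trans ?_ h6
    refine Eq.trans ?_ (map_sum (Vert (QAlg.sc r0 (E.τ x0)) I).subtype (fun i =>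
      w i • e' i) Finset.univ).symm
    rfl
  rw [h5]
  exact map_zero _

theorem jm_null (hs : ∀ y, IsEmpty (E.δ x0 y)) {cG : ν ⊕ νX → ℤ} (hc : cG (Sum.inr x0) = 1)
    (hli : ∀ w : Fin n → E.KX x0, ∑ i, QAlg.sc r0 (E.τ x0) (E.σ x0 (w i)) • (e i : I) = 0 → w = 0)
    (hg : (qRank E.rG cG).good (E.T I).X) (hχ : (qRank E.rG cG).χ (E.T I).X = n)
    (hW : ∀ W : ∀ v, Submodule (E.KG v) (E.TM I v),
      (∀ s t (a : E.αG s t) m, m ∈ W s → E.Tact I a m ∈ W t) → (∀ i, e i ∈ W (Sum.inr x0)) →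
      (n : ℤ) ≤ ∑ v, cG v * (Module.finrank (E.KG v) (W v) : ℤ)) :
    (qRank E.rG cG).Null ((E.T I).X ⧸ LinearMap.range (E.jm x0 e hs)) := by
  have h0 : (qRank E.rG cG).χ (QRep.sim (Sum.inr x0) (simRelG E x0) (Fin n → E.KG (Sum.inr x0))).X = n := by
    refine (QRep.χ_X _).trans ((sim_sum' _ _ _).trans ?_)
    rw [hc, Module.finrank_fin_fun, one_mul]
  refine RankDat.null_quot _ hg (E.jm_inj x0 e hs hli) (by rw [hχ, h0]) ?_
  intro s hs'
  rw [h0, QRep.χ_sub]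
  refine hW ((E.T I).part s) (fun _ _ a m hm => (E.T I).part_act s a m hm) ?_
  intro i
  change (E.T I).single (Sum.inr x0) (e i) ∈ s
  apply hs'
  refine ⟨(QRep.sim (Sum.inr x0) (simRelG E x0) _).single (Sum.inr x0) (fun _ => Pi.single i 1), ?_⟩
  rw [jm_single, Finset.sum_eq_single i]
  · rw [Pi.single_eq_same, one_smul]; rfl
  · intro k _ hk; rw [Pi.single_eq_of_ne hk, zero_smul]
  · simp

noncomputable def κ0 (m : I) (h : I →ₗ[QAlg r0] (E.U V).X) : E.PV x0 V :=
  ⟨E.arp x0 • E.toV V (h m), QAlg.ar_mem (r0 := E.rG) (αG.p x0) _⟩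

noncomputable def κl : (I →ₗ[QAlg r0] (E.U V).X) →ₗ[Module.End E.ΛG V] (Fin n → E.PV x0 V) where
  toFun h i := E.κ0 x0 (e i : I) h
  map_add' h g := by
    funext i
    apply Subtype.ext
    change E.arp x0 • E.toV V (h (e i : I) + g (e i : I)) =
      E.arp x0 • E.toV V (h (e i : I)) + E.arp x0 • E.toV V (g (e i : I))
    rw [map_add, smul_add]
  map_smul' d h := by
    funext i
    apply Subtype.ext
    change E.arp x0 • E.toV V (d • (h (e i : I))) = d (E.arp x0 • E.toV V (h (e i : I)))
    rw [toV_end, map_smul]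

theorem κl_bij (hs : ∀ y, IsEmpty (E.δ x0 y)) {cG : ν ⊕ νX → ℤ}
    (hg : (qRank E.rG cG).good (E.T I).X)
    (hli : ∀ w : Fin n → E.KX x0, ∑ i, QAlg.sc r0 (E.τ x0) (E.σ x0 (w i)) • (e i : I) = 0 → w = 0)
    (hn : (qRank E.rG cG).Null ((E.T I).X ⧸ LinearMap.range (E.jm x0 e hs)))
    (hV : (qRank E.rG cG).Loc V) : Function.Bijective (E.κl x0 e (V := V)) := by
  have hupj : ∀ (h : I →ₗ[QAlg r0] (E.U V).X) i, E.up h (E.eh x0 e i : (E.T I).X) = E.κl x0 e h i :=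
    fun h i => E.up_inr h x0 (e i)
  constructor
  · rw [injective_iff_map_eq_zero]
    intro h h0
    have : E.up h = 0 := by
      refine hV.uniq (E.jm x0 e hs) hn _ _ (sim_ext _ _ _ fun w => ?_)
      rw [LinearMap.comp_apply, LinearMap.comp_apply, jm_single, LinearMap.zero_apply]
      rw [AddSubgroup.val_finsetSum, map_sum]
      refine Finset.sum_eq_zero fun i _ => ?_
      rw [Vt.coe_smul, map_smul, hupj, h0]
      exact smul_zero _
    ext m
    apply E.toV_inj V
    rw [← up_Tnx, this, LinearMap.zero_apply, LinearMap.zero_apply, map_zero]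
  · intro p
    obtain ⟨g, hg'⟩ := hV.ext _ _ (E.jm x0 e hs) hg (E.jm_inj x0 e hs hli) hn
      (simHom (Sum.inr x0) (simRelG E x0) _ (E.sink x0 hs)
        (Fintype.linearCombination (E.KG (Sum.inr x0)) p))
    refine ⟨E.down g, ?_⟩
    funext i
    apply Subtype.ext
    change E.arp x0 • E.toV V (E.down g (e i : I)) = (p i : V)
    rw [toV_down, ← map_smul, Tnx_vt]
    have h1 : E.arp x0 • (E.T I).single (.inl (E.τ x0)) (e i) = (E.T I).single (Sum.inr x0) (e i) :=
      (E.T I).ar_single (αG.p x0) (e i)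
    rw [h1]
    have h2 := LinearMap.congr_fun hg' ((QRep.sim (Sum.inr x0) (simRelG E x0) _).single (Sum.inr x0)
      (fun _ => Pi.single i 1))
    rw [LinearMap.comp_apply, jm_single, simHom_single, Fintype.linearCombination_apply,
      Finset.sum_eq_single i, Finset.sum_eq_single i, Pi.single_eq_same, one_smul, one_smul] at h2
    · exact h2
    · intro k _ hk; rw [Pi.single_eq_of_ne hk, zero_smul]
    · simp
    · intro k _ hk; rw [Pi.single_eq_of_ne hk, zero_smul]
    · simp

instance : SMulCommClass (E.KG (Sum.inr x0)) (Module.End E.ΛG V) (E.PV x0 V) where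
  smul_comm k d m := Subtype.ext (map_smul d _ _).symm
instance : SMulCommClass (Module.End E.ΛG V) (E.KG (Sum.inr x0)) (E.PV x0 V) := SMulCommClass.symm _ _ _

noncomputable def ιP : E.KX x0 →+* Module.End (Module.End E.ΛG V) (E.PV x0 V) :=
  Module.toModuleEnd (Module.End E.ΛG V) (S := E.KG (Sum.inr x0)) (E.PV x0 V)

theorem ιP_apply (k : E.KX x0) (m : E.PV x0 V) :
    ((E.ιP x0 (V := V) k m : E.PV x0 V) : V) = E.scr x0 k • (m : V) := rfl

/-- the step -/
theorem step {F : Type} [DivisionRing F] (φ : F →+* Matrix (Fin n) (Fin n) (E.KX x0)) (hn : 0 < n)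
    (hs : ∀ y, IsEmpty (E.δ x0 y)) {cF : ν → ℤ} {cG : ν ⊕ νX → ℤ} (hc : cG (Sum.inr x0) = 1)
    (hgood : ∀ (M : Type) [AddCommGroup M] [Module (QAlg r0) M], (qRank r0 cF).good M →
      (qRank E.rG cG).good (E.T M).X)
    (hnull : ∀ (M : Type) [AddCommGroup M] [Module (QAlg r0) M], (qRank r0 cF).Null M →
      (qRank E.rG cG).Null (E.T M).X)
    (hli : ∀ w : Fin n → E.KX x0, ∑ i, QAlg.sc r0 (E.τ x0) (E.σ x0 (w i)) • (e i : I) = 0 → w = 0)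
    (hχ : (qRank E.rG cG).χ (E.T I).X = n)
    (hW : ∀ W : ∀ v, Submodule (E.KG v) (E.TM I v),
      (∀ s t (a : E.αG s t) m, m ∈ W s → E.Tact I a m ∈ W t) → (∀ i, e i ∈ W (Sum.inr x0)) →
      (n : ℤ) ≤ ∑ v, cG v * (Module.finrank (E.KG v) (W v) : ℤ))
    (ρ : F →+* (Module.End (QAlg r0) I)ᵐᵒᵖ)
    (hρ : ∀ f r, (ρ f).unop (e r : I) = ∑ j, QAlg.sc r0 (E.τ x0) (E.σ x0 (φ f r j)) • (e j : I))
    {VF : Type} [AddCommGroup VF] [Module (QAlg r0) VF] {iF : I →ₗ[QAlg r0] VF}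
    (hGF : (qRank r0 cF).Gen iF)
    {iG : (QRep.sim (Sum.inr x0) (simRelG E x0) (E.KG (Sum.inr x0))).X →ₗ[E.ΛG] V} (hGG : (qRank E.rG cG).Gen iG) :
    ∃ (F' G' : Type) (_ : DivisionRing F') (_ : DivisionRing G') (ιF : F →+* F')
      (β : Module.End (Module.End E.ΛG V) (E.PV x0 V) →+* G')
      (φ' : F' →+* Matrix (Fin n) (Fin n) G'),
      (∀ f, φ' (ιF f) = (φ f).map (β.comp (E.ιP x0))) ∧
      ∀ (d : VF →ₗ[QAlg r0] VF) (S : Fin n → Prop)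
        (B : Matrix (Fin n) (Fin n) (Module.End (Module.End E.ΛG V) (E.PV x0 V))),
      (∀ r, S r → ∀ ζ : VF →ₗ[QAlg r0] (E.U V).X, E.arp x0 • E.toV V (ζ (d (iF (e r)))) =
        ((∑ j, B r j (E.κ0 x0 (iF (e j)) ζ) : E.PV x0 V) : V)) →
      ∃ x, ∀ r, S r → ∀ j, φ' x r j = β (B r j) := by
  have hg : (qRank E.rG cG).good (E.T I).X := hgood I hGF.stab.good
  have hnul := E.jm_null x0 e hs hc hli hg hχ hW
  have hV := hGG.loc
  have hst : (qRank E.rG cG).Stab (QRep.sim (Sum.inr x0) (simRelG E x0) (E.KG (Sum.inr x0))).X :=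
    sim_stab _ _ _ hc
  have hP : ∀ p p' : E.PV x0 V, p ≠ 0 → ∃ d : Module.End E.ΛG V, d • p = p' := by
    intro p p' hp
    have h1 : ∀ q : E.PV x0 V, simHom (Sum.inr x0) (simRelG E x0) _ (E.sink x0 hs)
        (LinearMap.toSpanSingleton (E.KG (Sum.inr x0)) (E.PV x0 V) q)
        ((QRep.sim (Sum.inr x0) (simRelG E x0) _).single (Sum.inr x0) (fun _ => 1)) = (q : V) := by
      intro q; rw [simHom_single, LinearMap.toSpanSingleton_apply, one_smul]
    obtain ⟨d, hd⟩ := hGG.one_dim hst (simHom (Sum.inr x0) (simRelG E x0) _ (E.sink x0 hs)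
      (LinearMap.toSpanSingleton (E.KG (Sum.inr x0)) (E.PV x0 V) p))
      (simHom (Sum.inr x0) (simRelG E x0) _ (E.sink x0 hs)
      (LinearMap.toSpanSingleton (E.KG (Sum.inr x0)) (E.PV x0 V) p')) (by
        intro h0
        apply hp
        apply Subtype.ext
        rw [← h1 p, h0]; rfl)
    refine ⟨d, Subtype.ext ?_⟩
    rw [Vt.coe_end, ← h1 p, ← h1 p', ← hd]; rfl
  have hPn : Nontrivial (E.PV x0 V) := by
    let u : SimM (ν := ν ⊕ νX) (Sum.inr x0) (E.KG (Sum.inr x0)) (Sum.inr x0) := fun _ => 1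
    refine ⟨⟨Vt.map _ iG ((QRep.sim (Sum.inr x0) (simRelG E x0) (E.KG (Sum.inr x0))).vtEquiv
      (Sum.inr x0) u), 0, ?_⟩⟩
    intro h0
    rw [← map_zero (Vt.map (QAlg.sc E.rG (Sum.inr x0)) iG)] at h0
    have h1 := Vt.map_inj _ iG hGG.inj h0
    have h1' : u = 0 := ((QRep.sim (Sum.inr x0) (simRelG E x0) (E.KG (Sum.inr x0))).vtEquiv
      (Sum.inr x0)).injective (h1.trans (map_zero _).symm)
    have h2 : (1 : E.KG (Sum.inr x0)) = 0 := congrFun h1' ⟨rfl⟩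
    exact one_ne_zero h2
  obtain ⟨F', G', i1, i2, ιF, β, φ', h1, h2⟩ := bridge hGF (E.U_loc hgood hnull hV) hP φ hn (E.ιP x0)
    (LinearEquiv.ofBijective (E.κl x0 e) (E.κl_bij x0 e hs hg hli hnul hV)) ρ (by
      intro f h r
      apply Subtype.ext
      change E.arp x0 • E.toV V (h ((ρ f).unop (e r : I))) = _
      rw [hρ, map_sum, map_sum, Finset.smul_sum, AddSubgroup.val_finsetSum]
      refine Finset.sum_congr rfl fun j _ => ?_
      rw [map_smul, toV_sc, smul_smul, rel_p, mul_smul, ιP_apply]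
      rfl)
  refine ⟨F', G', i1, i2, ιF, β, φ', h1, fun d S B hd => h2 d S B ?_⟩
  intro r hr ζ
  apply Subtype.ext
  exact hd r hr ζ

end Coord
end ExtD

namespace A1
inductive N | q | y
deriving DecidableEq

instance : Fintype N := ⟨{.q, .y}, fun v => by cases v <;> decide⟩

theorem sum_N {A : Type} [AddCommMonoid A] (f : N → A) : ∑ v, f v = f .q + f .y := by
  have : (Finset.univ : Finset N) = {.q, .y} := rfl
  rw [this, Finset.sum_pair (by decide)]

variable {n : ℕ} {F G : Type} [DivisionRing F] [DivisionRing G]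

@[reducible] def K (F G : Type) : N → Type
  | .q => F
  | .y => G

instance iK : ∀ v, DivisionRing (K F G v)
  | .q => inferInstanceAs (DivisionRing F)
  | .y => inferInstanceAs (DivisionRing G)

inductive α (n : ℕ) : N → N → Type
  | ε (i : Fin n) : α n .q .y

variable (φ : F →+* Matrix (Fin n) (Fin n) G)

inductive r0 : FA (K F G) (α n) → FA (K F G) (α n) → Prop
  | mk (i : Fin n) (f : F) : r0 (FA.ar (α.ε i) * FA.sc (K := K F G) .q f)
      (∑ j, FA.sc (K := K F G) .y (φ f i j) * FA.ar (α.ε j))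

noncomputable def E : ExtD (r0 φ) Unit where
  KX _ := G
  τ _ := .y
  σ _ := RingHom.id G
  δ _ _ := Empty
  σδ d := d.elim
  w d := d.elim
  hw d := d.elim

def cF (n : ℕ) : N → ℤ
  | .q => -(n - 1)
  | .y => 1

def cG (n : ℕ) : N ⊕ Unit → ℤ
  | .inl .q => -(n * (n - 1))
  | .inl .y => n - 1
  | .inr _ => 1

theorem hgood (M : Type) [AddCommGroup M] [Module (QAlg (r0 φ)) M]
    (h : (qRank (r0 φ) (cF n)).good M) : (qRank (E φ).rG (cG n)).good ((E φ).T M).X := by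
  rw [QRep.good_iff]
  rw [qRank_good] at h
  rintro (v | x)
  · exact h v
  · exact h .y

theorem hnull (M : Type) [AddCommGroup M] [Module (QAlg (r0 φ)) M]
    (h : (qRank (r0 φ) (cF n)).Null M) : (qRank (E φ).rG (cG n)).Null ((E φ).T M).X := by
  have hg := hgood φ M h.good
  rw [QRep.good_iff] at hg
  refine QRep.null _ hg ?_ ?_
  · have h0 := h.zero
    rw [qRank_χ, sum_N] at h0
    rw [Fintype.sum_sum_type, sum_N, Fintype.sum_unique]
    change -((n : ℤ) * (n - 1)) * (Module.finrank F (Vt (QAlg.sc (r0 φ) .q) M) : ℤ)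
      + ((n : ℤ) - 1) * (Module.finrank G (Vt (QAlg.sc (r0 φ) .y) M) : ℤ)
      + 1 * (Module.finrank G (Vt (QAlg.sc (r0 φ) .y) M) : ℤ) = 0
    change -((n : ℤ) - 1) * (Module.finrank F (Vt (QAlg.sc (r0 φ) .q) M) : ℤ)
      + 1 * (Module.finrank G (Vt (QAlg.sc (r0 φ) .y) M) : ℤ) = 0 at h0
    linear_combination (n : ℤ) * h0
  · intro W hW
    have h1 := null_sub h (fun v => W (.inl v)) (fun s t a m hm => hW _ _ (ExtD.αG.old a) m hm)
    rw [sum_N] at h1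
    rw [Fintype.sum_sum_type, sum_N, Fintype.sum_unique]
    have hfin := hg (.inr ())
    let W1 : Submodule G (Vt (QAlg.sc (r0 φ) .y) M) := W (.inl .y)
    let W2 : Submodule G (Vt (QAlg.sc (r0 φ) .y) M) := W (.inr ())
    let W0 : Submodule F (Vt (QAlg.sc (r0 φ) .q) M) := W (.inl .q)
    have h2 : W1 ≤ W2 := fun m hm => hW _ _ (ExtD.αG.p ()) m hm
    have hfin' : Module.Finite G (Vt (QAlg.sc (r0 φ) .y) M) := hfin
    have h3 : Module.finrank G W1 ≤ Module.finrank G W2 := Submodule.finrank_mono h2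
    change 0 ≤ -((n : ℤ) * (n - 1)) * (Module.finrank F W0 : ℤ)
      + ((n : ℤ) - 1) * (Module.finrank G W1 : ℤ) + 1 * (Module.finrank G W2 : ℤ)
    change 0 ≤ -((n : ℤ) - 1) * (Module.finrank F W0 : ℤ) + 1 * (Module.finrank G W1 : ℤ) at h1
    have h3' : (Module.finrank G W1 : ℤ) ≤ (Module.finrank G W2 : ℤ) := by exact_mod_cast h3
    have h4 := mul_nonneg (Int.natCast_nonneg n) h1
    linarith

/-- the base object -/
@[reducible] def IM (n : ℕ) (F G : Type) : N → Type
  | .q => F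
  | .y => Fin n → G

instance IMa : ∀ v, AddCommGroup (IM n F G v)
  | .q => inferInstanceAs (AddCommGroup F)
  | .y => inferInstanceAs (AddCommGroup (Fin n → G))

instance IMm : ∀ v, Module (K F G v) (IM n F G v)
  | .q => inferInstanceAs (Module F F)
  | .y => inferInstanceAs (Module G (Fin n → G))

def Iact : ∀ {s t : N}, α n s t → (IM n F G s →+ IM n F G t)
  | _, _, .ε i =>
    { toFun := fun f => φ f i
      map_zero' := by rw [map_zero]; rfl
      map_add' := fun x y => by rw [map_add]; rfl }

noncomputable def I : QRep (r0 φ) where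
  M := IM n F G
  act a := Iact φ a
  rel x y h := by
    cases h with
    | mk i f =>
      rw [map_mul, map_sum]
      refine End_ext fun m => ?_
      refine Eq.trans ?_ (AddMonoidHom.finsetSum_apply _ _ _).symm
      simp only [map_mul, FreeAlgebra.lift_ι_apply]
      change Pi.single (M := IM n F G) .y (φ ((Pi.single (M := IM n F G) .q (f * (m .q : F)) : ∀ v, IM n F G v) .q) i)
        = ∑ j, Pi.single (M := IM n F G) .y (φ f i j • (Pi.single (M := IM n F G) .y
          (φ (m .q) j) : ∀ v, IM n F G v) .y)
      simp only [Pi.single_eq_same]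
      have h1 : φ (f * (m .q : F)) i = ∑ j, φ f i j • φ (m .q) j := by
        funext k
        rw [map_mul, Matrix.mul_apply, Finset.sum_apply]; rfl
      rw [h1]
      exact map_sum (AddMonoidHom.single (IM n F G) N.y) (fun j => φ f i j • φ (m .q) j) Finset.univ

theorem I_fin (v : N) : Module.Finite (K F G v) ((I φ).M v) := by
  cases v with
  | q => exact inferInstanceAs (Module.Finite F F)
  | y => exact inferInstanceAs (Module.Finite G (Fin n → G))

theorem I_sub (W : ∀ v, Submodule (K F G v) ((I φ).M v))
    (hW : ∀ s t (a : α n s t) m, m ∈ W s → (I φ).act a m ∈ W t) :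
    (Module.finrank (K F G .q) (W .q) = 0 ∧ W .q = ⊥) ∨
    (Module.finrank (K F G .q) (W .q) = 1 ∧ Module.finrank (K F G .y) (W .y) = n) := by
  let W0 : Submodule F F := W .q
  let W1 : Submodule G (Fin n → G) := W .y
  change (Module.finrank F W0 = 0 ∧ W0 = ⊥) ∨ (Module.finrank F W0 = 1 ∧ Module.finrank G W1 = n)
  by_cases h : W0 = ⊥
  · left; rw [h]; simp
  · right
    have h0 : W0 = ⊤ := (eq_bot_or_eq_top W0).resolve_left h
    have h1 : W1 = ⊤ := by
      rw [eq_top_iff, ← (Pi.basisFun G (Fin n)).span_eq, Submodule.span_le]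
      rintro _ ⟨i, rfl⟩
      have h2 : (1 : F) ∈ W0 := by rw [h0]; trivial
      have h3 : φ 1 i ∈ W1 := hW _ _ (α.ε i) _ h2
      rw [map_one] at h3
      have h4 : (1 : Matrix (Fin n) (Fin n) G) i = Pi.basisFun G (Fin n) i := by
        rw [Pi.basisFun_apply]
        funext j
        rw [Matrix.one_apply, Pi.single_apply]; simp [eq_comm]
      rw [h4] at h3; exact h3
    rw [h0, h1]; simp

theorem I_stab : (qRank (r0 φ) (cF n)).Stab (I φ).X := by
  refine QRep.stab _ (I_fin φ) ?_ ?_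
  · rw [sum_N]
    change -((n : ℤ) - 1) * (Module.finrank F F : ℤ) + 1 * (Module.finrank G (Fin n → G) : ℤ) = 1
    rw [Module.finrank_self, Module.finrank_fin_fun]; push_cast; ring
  · intro W hW hne
    rw [sum_N]
    change 1 ≤ -((n : ℤ) - 1) * (Module.finrank (K F G .q) (W .q) : ℤ)
      + 1 * (Module.finrank (K F G .y) (W .y) : ℤ)
    rcases I_sub φ W hW with ⟨h, h'⟩ | ⟨h, h'⟩
    · rw [h]
      have h2 : W .y ≠ ⊥ := by
        obtain ⟨v, hv⟩ := hne
        cases v with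
        | q => exact absurd h' hv
        | y => exact hv
      have := I_fin φ .y
      have h3 : 1 ≤ Module.finrank (K F G .y) (W .y) := by
        rw [Nat.one_le_iff_ne_zero, Ne, Submodule.finrank_eq_zero]; exact h2
      have : (1 : ℤ) ≤ (Module.finrank (K F G .y) (W .y) : ℤ) := by exact_mod_cast h3
      simpa using this
    · rw [h, h']; push_cast; linarith

noncomputable def ρ0 (f : F) : (I φ).X →ₗ[QAlg (r0 φ)] (I φ).X :=
  QRep.mapX (I φ) (I φ)
    (fun v => match v with
      | .q => (AddMonoidHom.mulRight f : F →+ F)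
      | .y => ((Matrix.vecMulLinear (φ f)).toAddMonoidHom : (Fin n → G) →+ (Fin n → G)))
    (by
      intro v k m
      cases v with
      | q => exact mul_assoc (k : F) (m : F) f
      | y => exact Matrix.smul_vecMul (R := G) k (m : Fin n → G) (φ f))
    (by
      intro s t a m
      cases a with
      | ε i =>
        let m' : F := m
        change Matrix.vecMul (φ m' i) (φ f) = φ (m' * f) i
        rw [map_mul]
        rfl)

noncomputable def ρ : F →+* (Module.End (QAlg (r0 φ)) (I φ).X)ᵐᵒᵖ where
  toFun f := MulOpposite.op (ρ0 φ f)
  map_one' := by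
    rw [← MulOpposite.op_one]
    congr 1
    refine LinearMap.ext fun m => funext fun v => ?_
    let mq : F := m .q
    let my : Fin n → G := m .y
    cases v with
    | q => exact mul_one mq
    | y =>
      change Matrix.vecMul my (φ 1) = my
      rw [map_one]; exact Matrix.vecMul_one my
  map_mul' f g := by
    rw [← MulOpposite.op_mul]
    congr 1
    refine LinearMap.ext fun m => funext fun v => ?_
    let mq : F := m .q
    let my : Fin n → G := m .y
    cases v with
    | q => exact (mul_assoc mq f g).symm
    | y =>
      change Matrix.vecMul my (φ (f * g)) =
        Matrix.vecMul (Matrix.vecMul my (φ f)) (φ g)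
      rw [map_mul, Matrix.vecMul_vecMul]
  map_zero' := by
    rw [← MulOpposite.op_zero]
    congr 1
    refine LinearMap.ext fun m => funext fun v => ?_
    let mq : F := m .q
    let my : Fin n → G := m .y
    cases v with
    | q => exact mul_zero mq
    | y =>
      change Matrix.vecMul my (φ 0) = 0
      rw [map_zero]; exact Matrix.vecMul_zero my
  map_add' f g := by
    rw [← MulOpposite.op_add]
    congr 1
    refine LinearMap.ext fun m => funext fun v => ?_
    let mq : F := m .q
    let my : Fin n → G := m .y
    cases v with
    | q => exact mul_add mq f g
    | y =>
      change Matrix.vecMul my (φ (f + g)) =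
        Matrix.vecMul my (φ f) + Matrix.vecMul my (φ g)
      rw [map_add]; exact Matrix.vecMul_add (φ f) (φ g) my

noncomputable def e (i : Fin n) : Vt (QAlg.sc (r0 φ) .y) (I φ).X :=
  (I φ).vtEquiv .y (Pi.single i 1 : Fin n → G)

theorem sum_e (w : Fin n → G) : ∑ i, QAlg.sc (r0 φ) .y (w i) • (e φ i : (I φ).X) =
    (I φ).single .y w := by
  have h1 : ∀ i, QAlg.sc (r0 φ) .y (w i) • (e φ i : (I φ).X) = (I φ).single .y (Pi.single i (w i) : Fin n → G) := by
    intro i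
    refine ((I φ).sc_single .y (w i) (Pi.single i 1 : Fin n → G)).trans ?_
    congr 1
    change w i • (Pi.single i 1 : Fin n → G) = _
    rw [← Pi.single_smul, smul_eq_mul, mul_one]
  rw [Finset.sum_congr rfl fun i _ => h1 i]
  refine (map_sum ((I φ).single .y) (fun i => (Pi.single i (w i) : Fin n → G)) Finset.univ).symm.trans ?_
  exact congrArg ((I φ).single .y) (Finset.univ_sum_single w)

theorem ρ_e (f : F) (r : Fin n) : (ρ φ f).unop (e φ r : (I φ).X) =
    ∑ j, QAlg.sc (r0 φ) .y (φ f r j) • (e φ j : (I φ).X) := by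
  rw [sum_e]
  funext v
  cases v with
  | q =>
    refine Eq.trans ?_ (QRep.single_ne _ (by decide) _).symm
    exact zero_mul f
  | y =>
    refine Eq.trans ?_ (QRep.single_same _ _ _).symm
    change Matrix.vecMul (Pi.single r 1 : Fin n → G) (φ f) = φ f r
    exact Matrix.single_one_vecMul r (φ f)

theorem simRel : SimRel (r0 φ) .y := by
  intro W _ _ x y h
  cases h with
  | mk i f =>
    rw [map_mul, map_sum, repρ_zero_ar, zero_mul, Finset.sum_eq_zero]
    intro j _
    rw [map_mul, repρ_zero_ar, mul_zero]

theorem hW (hn : 0 < n) (W : ∀ v, Submodule ((E φ).KG v) ((E φ).TM (I φ).X v))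
    (hW : ∀ s t (a : (E φ).αG s t) m, m ∈ W s → (E φ).Tact (I φ).X a m ∈ W t)
    (he : ∀ i, e φ i ∈ W (Sum.inr ())) :
    (n : ℤ) ≤ ∑ v, cG n v * (Module.finrank ((E φ).KG v) (W v) : ℤ) := by
  let W0 : Submodule F (Vt (QAlg.sc (r0 φ) .q) (I φ).X) := W (.inl .q)
  let W1 : Submodule G (Vt (QAlg.sc (r0 φ) .y) (I φ).X) := W (.inl .y)
  let W2 : Submodule G (Vt (QAlg.sc (r0 φ) .y) (I φ).X) := W (.inr ())
  rw [Fintype.sum_sum_type, sum_N, Fintype.sum_unique]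
  change (n : ℤ) ≤ -((n : ℤ) * (n - 1)) * (Module.finrank F W0 : ℤ)
      + ((n : ℤ) - 1) * (Module.finrank G W1 : ℤ) + 1 * (Module.finrank G W2 : ℤ)
  have h2 : W2 = ⊤ := by
    rw [eq_top_iff]
    rintro x -
    have h3 : x = ∑ i, ((I φ).vtEquiv .y).symm x i • e φ i := by
      apply Subtype.ext
      rw [AddSubgroup.val_finsetSum]
      refine Eq.trans ?_ (sum_e φ (((I φ).vtEquiv .y).symm x)).symm
      exact (congrArg Subtype.val (((I φ).vtEquiv .y).apply_symm_apply x)).symm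
    rw [h3]
    exact Submodule.sum_mem _ fun i _ => Submodule.smul_mem _ _ (he i)
  have h3 : Module.finrank G W2 = n := by
    rw [h2, finrank_top, ← ((I φ).vtEquiv .y).finrank_eq]
    exact Module.finrank_fin_fun G
  have h4 := I_sub φ (fun v => (W (.inl v)).comap ((I φ).vtEquiv v).toLinearMap) (by
    intro s t a m hm
    have := hW _ _ (ExtD.αG.old a) _ hm
    refine Eq.mp ?_ this
    congr 1
    apply Subtype.ext
    exact (I φ).ar_single a m)
  have h5 : ∀ v, Module.finrank (K F G v) ((W (.inl v)).comap ((I φ).vtEquiv v).toLinearMap) =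
      Module.finrank (K F G v) (W (.inl v)) := by
    intro v
    exact (LinearEquiv.ofSubmodule' ((I φ).vtEquiv v) (W (.inl v))).finrank_eq
  rw [h5, h5] at h4
  rw [h3]
  rcases h4 with ⟨h, -⟩ | ⟨h, h'⟩
  · have h6 : Module.finrank F W0 = 0 := h
    rw [h6]
    have : 0 ≤ ((n : ℤ) - 1) * (Module.finrank G W1 : ℤ) :=
      mul_nonneg (by omega) (by positivity)
    push_cast; linarith
  · have h6 : Module.finrank F W0 = 1 := h
    have h7 : Module.finrank G W1 = n := h'
    rw [h6, h7]; push_cast; linarith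

theorem hχ : (qRank (E φ).rG (cG n)).χ ((E φ).T (I φ).X).X = n := by
  rw [QRep.χ_X, Fintype.sum_sum_type, sum_N, Fintype.sum_unique]
  change -((n : ℤ) * (n - 1)) * (Module.finrank F (Vt (QAlg.sc (r0 φ) .q) (I φ).X) : ℤ)
      + ((n : ℤ) - 1) * (Module.finrank G (Vt (QAlg.sc (r0 φ) .y) (I φ).X) : ℤ)
      + 1 * (Module.finrank G (Vt (QAlg.sc (r0 φ) .y) (I φ).X) : ℤ) = n
  have h1 : Module.finrank F (Vt (QAlg.sc (r0 φ) .q) (I φ).X) = 1 :=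
    ((I φ).vtEquiv .q).finrank_eq.symm.trans (Module.finrank_self F)
  have h2 : Module.finrank G (Vt (QAlg.sc (r0 φ) .y) (I φ).X) = n :=
    ((I φ).vtEquiv .y).finrank_eq.symm.trans (Module.finrank_fin_fun G)
  rw [h1, h2]; push_cast; ring

theorem main (hn : 0 < n) : ∃ (F' G' : Type) (_ : DivisionRing F') (_ : DivisionRing G')
    (ιF : F →+* F') (ιG : G →+* G') (φ' : F' →+* Matrix (Fin n) (Fin n) G'),
    (∀ f, φ' (ιF f) = (φ f).map ιG) ∧ ∀ w : Fin n → G, ∃ x, ∀ j, φ' x ⟨0, hn⟩ j = ιG (w j) := by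
  obtain ⟨VF, _, _, iF, hGF⟩ := RankDat.exists_gen (I_stab φ)
  obtain ⟨V, _, _, iG, hGG⟩ := RankDat.exists_gen (sim_stab (r0 := (E φ).rG) (Sum.inr ())
    (_root_.simRelG (E φ) ()) (cG n) rfl)
  obtain ⟨F', G', i1, i2, ιF, β, φ', h1, h2⟩ := ExtD.step (E φ) () (e φ) φ hn
    (fun _ => inferInstanceAs (IsEmpty Empty)) (cF := cF n) (cG := cG n) rfl (hgood φ) (hnull φ)
    (by
      intro w hw
      have h3 := (sum_e φ w).symm.trans hw
      exact (I φ).single_inj .y (h3.trans (map_zero _).symm))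
    (hχ φ) (hW φ hn) (ρ φ)
    (by
      intro f r
      exact ρ_e φ f r) hGF hGG
  refine ⟨F', G', i1, i2, ιF, β.comp ((E φ).ιP ()), φ', h1, fun w => ?_⟩
  have hs : ∀ t, IsEmpty (α n .y t) := fun t => ⟨fun a => by cases a⟩
  let x (m : Fin n → G) : Vt (QAlg.sc (r0 φ) .y) VF := Vt.map _ iF ((I φ).vtEquiv .y m)
  let hm (m : Fin n → G) : (QRep.sim N.y (simRel φ) (K F G .y)).X →ₗ[QAlg (r0 φ)] VF :=
    simHom (K := K F G) N.y (simRel φ) (K F G .y) hs (LinearMap.toSpanSingleton (K F G .y) _ (x m))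
  have hm1 : ∀ m, hm m ((QRep.sim N.y (simRel φ) (K F G .y)).single N.y (fun _ => 1)) =
      iF ((I φ).single .y m) := by
    intro m
    refine (simHom_single _ _ _ _ _ _).trans ?_
    rw [LinearMap.toSpanSingleton_apply, one_smul]; rfl
  obtain ⟨d, hd⟩ := hGF.one_dim (sim_stab (r0 := r0 φ) .y (simRel φ) (cF n) rfl)
    (hm (Pi.single ⟨0, hn⟩ 1)) (hm w) (by
      intro h0
      have h3 := hm1 (Pi.single ⟨0, hn⟩ 1)
      rw [h0, LinearMap.zero_apply] at h3
      have h4 := (I φ).single_inj .y ((hGF.inj (h3.symm.trans (map_zero iF).symm)).trans (map_zero _).symm)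
      have h5 : (1 : G) = 0 := by
        have := congrFun h4 ⟨0, hn⟩
        rwa [Pi.single_eq_same] at this
      exact one_ne_zero h5)
  have hd' : d (iF (e φ ⟨0, hn⟩ : (I φ).X)) = iF ((I φ).single .y w) := by
    rw [← hm1 w, ← hd, LinearMap.comp_apply, hm1]; rfl
  obtain ⟨x, hx⟩ := h2 d (fun r => r = ⟨0, hn⟩) (fun _ j => (E φ).ιP () (w j)) (by
    rintro _ rfl ζ
    rw [hd', ← sum_e, map_sum, map_sum, map_sum, Finset.smul_sum, AddSubgroup.val_finsetSum]
    refine Finset.sum_congr rfl fun j _ => ?_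
    rw [map_smul, map_smul, ExtD.toV_sc, smul_smul]
    have := (E φ).rel_p () (w j)
    refine (congrArg (· • (E φ).toV V (ζ (iF (e φ j : (I φ).X)))) this).trans ?_
    exact mul_smul _ _ _)
  exact ⟨x, fun j => hx _ rfl j⟩

end A1

namespace Om
theorem colim (R : ℕ → Type) [∀ k, DivisionRing (R k)] (ι : ∀ k, R k →+* R (k + 1)) :
    ∃ (L : Type) (_ : DivisionRing L) (of : ∀ k, R k →+* L),
      (∀ k x, of (k + 1) (ι k x) = of k x) ∧ (∀ y : L, ∃ k x, of k x = y) ∧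
      (∀ k k' x, k ≤ k' → ∃ x', of k' x' = of k x) ∧
      ∀ (P : Type) [Ring P] (g : ∀ k, R k →+* P), (∀ k x, g (k + 1) (ι k x) = g k x) →
        ∃ h : L →+* P, ∀ k x, h (of k x) = g k x := by
  let f : ∀ i j : ℕ, i ≤ j → (R i →+* R j) := fun i j h =>
    Nat.leRec (motive := fun m _ => R i →+* R m) (RingHom.id _) (fun m _ g => (ι m).comp g) h
  have f1 : ∀ i x, f i i le_rfl x = x := by
    intro i x
    change (Nat.leRec (motive := fun m _ => R i →+* R m) (RingHom.id _)
      (fun m _ g => (ι m).comp g) _) x = x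
    rw [Nat.leRec_self]; rfl
  have f2 : ∀ i j (h : i ≤ j) x, f i (j + 1) (Nat.le_succ_of_le h) x = ι j (f i j h x) := by
    intro i j h x
    change (Nat.leRec (motive := fun m _ => R i →+* R m) (RingHom.id _)
      (fun m _ g => (ι m).comp g) _) x = _
    rw [Nat.leRec_succ _ _ h]; rfl
  have f3 : ∀ i j k (hij : i ≤ j) (hjk : j ≤ k) x, f j k hjk (f i j hij x) = f i k (hij.trans hjk) x := by
    intro i j k hij hjk x
    induction hjk with
    | refl => exact f1 _ _
    | @step m h ih =>
      have a1 := f2 j m h (f i j hij x)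
      have a2 := f2 i m (hij.trans h) x
      rw [ih] at a1
      exact a1.trans a2.symm
  haveI : DirectedSystem R (fun i j h => f i j h) := ⟨f1, fun i j k hij hjk x => f3 _ _ _ hij hjk x⟩
  have f4 : ∀ k x, f k (k + 1) (Nat.le_succ k) x = ι k x := by
    intro k x
    have := f2 k k le_rfl x
    rw [f1] at this
    exact this
  refine ⟨DirectLimit R f, inferInstance, DirectLimit.Ring.of R f, ?_, ?_, ?_, ?_⟩
  · intro k x
    rw [← f4 k x]
    exact DirectLimit.Ring.of_f (Nat.le_succ k) x
  · intro y
    induction y using DirectLimit.induction with | _ i x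
    exact ⟨i, x, rfl⟩
  · intro k k' x h
    exact ⟨f k k' h x, DirectLimit.Ring.of_f h x⟩
  · intro P _ g hg
    have h5 : ∀ i j (hij : i ≤ j) x, g j (f i j hij x) = g i x := by
      intro i j hij x
      induction hij with
      | refl => rw [f1]
      | @step m h ih => 
        have := f2 i m h x
        refine (congrArg _ this).trans ?_
        rw [hg, ih]
    exact ⟨DirectLimit.Ring.lift R f P g h5, fun k x => rfl⟩

structure Tr (n : ℕ) where
  F : Type
  G : Type
  [iF : DivisionRing F]
  [iG : DivisionRing G]
  φ : F →+* Matrix (Fin n) (Fin n) G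

attribute [instance] Tr.iF Tr.iG

structure Hm {n : ℕ} (hn : 0 < n) (X Y : Tr n) where
  ιF : X.F →+* Y.F
  ιG : X.G →+* Y.G
  compat : ∀ f, Y.φ (ιF f) = (X.φ f).map ιG
  row : ∀ w : Fin n → X.G, ∃ x, ∀ j, Y.φ x ⟨0, hn⟩ j = ιG (w j)

variable {n : ℕ} (hn : 0 < n)

theorem ex_next (X : Tr n) : Nonempty (Σ Y, Hm hn X Y) := by
  obtain ⟨F', G', _, _, ιF, ιG, φ', h1, h2⟩ := A1.main X.φ hn
  exact ⟨⟨⟨F', G', φ'⟩, ⟨ιF, ιG, h1, h2⟩⟩⟩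

noncomputable def next (X : Tr n) : Σ Y, Hm hn X Y := Classical.choice (ex_next hn X)

noncomputable def seq (X : Tr n) : ℕ → Tr n
  | 0 => X
  | k + 1 => (next hn (seq X k)).1

noncomputable def mp (X : Tr n) (k : ℕ) : Hm hn (seq hn X k) (seq hn X (k + 1)) :=
  (next hn (seq hn X k)).2

theorem main {F G : Type} [DivisionRing F] [DivisionRing G] (φ : F →+* Matrix (Fin n) (Fin n) G) :
    ∃ (F' G' : Type) (_ : DivisionRing F') (_ : DivisionRing G')
    (ιF : F →+* F') (ιG : G →+* G') (φ' : F' →+* Matrix (Fin n) (Fin n) G'),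
    (∀ f, φ' (ιF f) = (φ f).map ιG) ∧ Function.Bijective (fun x => φ' x ⟨0, hn⟩) := by
  let X : Tr n := ⟨F, G, φ⟩
  obtain ⟨L, iL, ofF, hF1, hF2, hF2', hF3⟩ := colim (fun k => (seq hn X k).F) (fun k => (mp hn X k).ιF)
  obtain ⟨M, iM, ofG, hG1, hG2, hG2', hG3⟩ := colim (fun k => (seq hn X k).G) (fun k => (mp hn X k).ιG)
  obtain ⟨φ', hφ'⟩ := hF3 (Matrix (Fin n) (Fin n) M)
    (fun k => (RingHom.mapMatrix (ofG k)).comp (seq hn X k).φ) (by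
      intro k x
      simp only [RingHom.comp_apply, RingHom.mapMatrix_apply]
      rw [(mp hn X k).compat]
      ext i j
      exact hG1 k _)
  refine ⟨L, M, iL, iM, ofF 0, ofG 0, φ', fun f => hφ' 0 f, ?_, ?_⟩
  · intro x y hxy
    by_contra hne
    have h1 : x - y ≠ 0 := sub_ne_zero.2 hne
    have h2 : φ' (x - y) * φ' (x - y)⁻¹ = 1 := by rw [← map_mul, mul_inv_cancel₀ h1, map_one]
    have h3 := congrFun (congrFun h2 ⟨0, hn⟩) ⟨0, hn⟩
    rw [Matrix.mul_apply, Matrix.one_apply_eq, map_sub] at h3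
    rw [Finset.sum_eq_zero] at h3
    · exact zero_ne_one h3
    · intro j _
      have h4 : φ' x ⟨0, hn⟩ j = φ' y ⟨0, hn⟩ j := congrFun hxy j
      rw [Matrix.sub_apply, h4, sub_self, zero_mul]
  · intro w
    have h1 : ∃ k, ∀ j, ∃ x, ofG k x = w j := by
      choose k x hx using fun j => hG2 (w j)
      refine ⟨Finset.univ.sup k, fun j => ?_⟩
      obtain ⟨x', hx'⟩ := hG2' (k j) (Finset.univ.sup k) (x j) (Finset.le_sup (Finset.mem_univ j))
      exact ⟨x', hx'.trans (hx j)⟩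
    obtain ⟨k, hk⟩ := h1
    choose w' hw' using hk
    obtain ⟨x, hx⟩ := (mp hn X k).row w'
    refine ⟨ofF (k + 1) x, funext fun j => ?_⟩
    change φ' (ofF (k + 1) x) ⟨0, hn⟩ j = w j
    rw [hφ', ← hw', ← hG1, ← hx]; rfl
end Om

namespace A2
variable {n : ℕ} {L G : Type} [DivisionRing L] [DivisionRing G]

theorem fr_mul (γ : G →+* L) (R : L ≃+ (Fin n → G)) (hR : ∀ g u, R (γ g * u) = g • R u)
    (hn : 0 < n)
    {Q : Type} [AddCommGroup Q] [Module L Q] [Module G Q] (hQ : ∀ (g : G) (q : Q), g • q = γ g • q) :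
    Module.finrank G Q = n * Module.finrank L Q ∧ (Module.Finite L Q → Module.Finite G Q) := by
  letI : Module G L := Module.compHom L γ
  have hs : ∀ (g : G) (u : L), g • u = γ g * u := fun _ _ => rfl
  haveI : IsScalarTower G L Q := ⟨fun g u q => by rw [hs, hQ, mul_smul]⟩
  let e : L ≃ₗ[G] (Fin n → G) := { R with map_smul' := fun g u => hR g u }
  haveI : Module.Finite G L := Module.Finite.equiv e.symm
  have h1 : Module.finrank G L = n := e.finrank_eq.trans (Module.finrank_fin_fun G)
  refine ⟨?_, fun _ => Module.Finite.trans L Q⟩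
  rw [← Module.finrank_mul_finrank G L Q, h1]

theorem nullcalc (γ : G →+* L) (R : L ≃+ (Fin n → G)) (hR : ∀ g u, R (γ g * u) = g • R u)
    (hn : 0 < n)
    {Y Q1 Q P : Type} [AddCommGroup Q] [Module L Q] [AddCommGroup P] [Module G P]
    (eP : P ≃+ Q) (hQ : ∀ (g : G) (q : P), eP (g • q) = γ g • eP q)
    [AddCommGroup Y] [Module G Y] [AddCommGroup Q1] [Module L Q1]
    [Module.Finite G Y] [Module.Finite L Q1] [Module.Finite L Q]
    (f : Y →ₗ[G] P) (g : Q1 →ₗ[L] Q)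
    (Y0 : Submodule G Y) (b : Submodule L Q1) (QS : Submodule L Q) (p : Submodule G P)
    (hp : ∀ x ∈ Y0, f x ∈ p) (hq : ∀ x : P, eP x ∈ QS → x ∈ p) (qP : Submodule G P)
    (hqP : ∀ x, x ∈ qP ↔ eP x ∈ QS) :
    (Module.finrank G Y0 : ℤ) - Module.finrank G (Y0 ⊓ qP.comap f : Submodule G Y)
      ≤ Module.finrank G p - n * Module.finrank L QS ∧
    (Module.finrank L b : ℤ) - Module.finrank L (b ⊓ QS.comap g : Submodule L Q1) =
      Module.finrank L (b.map g ⊔ QS : Submodule L Q) - Module.finrank L QS := by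
  have hfP : Module.Finite G P := by
    letI : Module G Q := Module.compHom Q γ
    have := (fr_mul γ R hR hn (Q := Q) (fun _ _ => rfl)).2 inferInstance
    let e : P ≃ₗ[G] Q := { eP with map_smul' := fun g u => hQ g u }
    exact Module.Finite.equiv e.symm
  have h1 : Module.finrank G qP = n * Module.finrank L QS := by
    letI : Module G QS := Module.compHom QS γ
    rw [← (fr_mul γ R hR hn (Q := QS) (fun _ _ => rfl)).1]
    let e : qP ≃ₗ[G] QS :=
      { toFun := fun x => ⟨eP x, (hqP _).1 x.2⟩
        invFun := fun x => ⟨eP.symm x, (hqP _).2 (by rw [AddEquiv.apply_symm_apply]; exact x.2)⟩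
        map_add' := fun x y => Subtype.ext (map_add eP _ _)
        map_smul' := fun g x => Subtype.ext (hQ g x)
        left_inv := fun x => Subtype.ext (eP.symm_apply_apply _)
        right_inv := fun x => Subtype.ext (eP.apply_symm_apply _) }
    exact e.finrank_eq
  constructor
  · have h2 : qP ≤ p := fun x hx => hq x ((hqP x).1 hx)
    have h3 := LinearMap.finrank_range_add_finrank_ker ((qP.mkQ ∘ₗ f).domRestrict Y0)
    have h4 := Submodule.finrank_quotient_add_finrank (qP.comap p.subtype)
    have h5 : Module.finrank G (qP.comap p.subtype) = Module.finrank G qP :=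
      (Submodule.comapSubtypeEquivOfLe h2).finrank_eq
    have h6 : Module.finrank G (LinearMap.ker ((qP.mkQ ∘ₗ f).domRestrict Y0)) =
        Module.finrank G (Y0 ⊓ qP.comap f : Submodule G Y) := by
      have : LinearMap.ker ((qP.mkQ ∘ₗ f).domRestrict Y0) = (Y0 ⊓ qP.comap f).comap Y0.subtype := by
        ext x; simp
      rw [this]
      exact (Submodule.comapSubtypeEquivOfLe inf_le_left).finrank_eq
    have h7 : Module.finrank G (LinearMap.range ((qP.mkQ ∘ₗ f).domRestrict Y0)) ≤
        Module.finrank G (p ⧸ qP.comap p.subtype) := by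
      have h8 : LinearMap.range ((qP.mkQ ∘ₗ f).domRestrict Y0) ≤
          LinearMap.range ((qP.comap p.subtype).mapQ qP p.subtype le_rfl) := by
        rintro _ ⟨x, rfl⟩
        exact ⟨Submodule.Quotient.mk ⟨f x, hp _ x.2⟩, rfl⟩
      exact (Submodule.finrank_mono h8).trans (LinearMap.finrank_range_le _)
    omega
  · have h3 := LinearMap.finrank_range_add_finrank_ker ((QS.mkQ ∘ₗ g).domRestrict b)
    have h6 : Module.finrank L (LinearMap.ker ((QS.mkQ ∘ₗ g).domRestrict b)) =
        Module.finrank L (b ⊓ QS.comap g : Submodule L Q1) := by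
      have : LinearMap.ker ((QS.mkQ ∘ₗ g).domRestrict b) = (b ⊓ QS.comap g).comap b.subtype := by
        ext x; simp
      rw [this]
      exact (Submodule.comapSubtypeEquivOfLe inf_le_left).finrank_eq
    have h4 := LinearMap.finrank_range_add_finrank_ker
      (QS.mkQ.domRestrict (b.map g ⊔ QS : Submodule L Q))
    have h5 : Module.finrank L (LinearMap.ker (QS.mkQ.domRestrict (b.map g ⊔ QS : Submodule L Q))) =
        Module.finrank L QS := by
      have : LinearMap.ker (QS.mkQ.domRestrict (b.map g ⊔ QS : Submodule L Q)) =
          QS.comap (b.map g ⊔ QS : Submodule L Q).subtype := by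
        ext x; simp
      rw [this]
      exact (Submodule.comapSubtypeEquivOfLe le_sup_right).finrank_eq
    have h7 : LinearMap.range (QS.mkQ.domRestrict (b.map g ⊔ QS : Submodule L Q)) =
        LinearMap.range ((QS.mkQ ∘ₗ g).domRestrict b) := by
      rw [LinearMap.range_domRestrict, LinearMap.range_domRestrict, Submodule.map_sup,
        Submodule.map_comp]
      have : QS.map QS.mkQ = ⊥ := Submodule.mkQ_map_self QS
      rw [this, sup_bot_eq]
    rw [h7] at h4
    omega

/-- the structural map `G³ → L²` -/
def hN (γ : G →+* L) (y z : L) : (Fin 3 → G) →+ L × L where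
  toFun a := (γ (a 0) + γ (a 2) * z, γ (a 1) - γ (a 2) * y)
  map_zero' := by simp
  map_add' a b := by
    simp only [Pi.add_apply, map_add, Prod.mk_add_mk, Prod.mk.injEq]
    constructor
    · rw [add_mul]; abel
    · rw [add_mul]; abel

theorem hN_smul (γ : G →+* L) (y z : L) (g : G) (a : Fin 3 → G) :
    hN γ y z (g • a) = γ g • hN γ y z a := by
  simp [hN, mul_add, mul_sub, mul_assoc]

theorem hN_dim (γ : G →+* L) (y z : L) (hy : ∀ g, y ≠ γ g) (hz : ∀ c d, z ≠ y * γ c + γ d)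
    (Y : Submodule G (Fin 3 → G)) (W : Submodule L (L × L)) (hW : ∀ a ∈ Y, hN γ y z a ∈ W)
    (hY : Y ≠ ⊥) : Module.finrank G Y + 1 ≤ 2 * Module.finrank L W := by
  have hY3 : Module.finrank G Y ≤ 3 := (Submodule.finrank_le Y).trans (by simp)
  rcases Nat.lt_or_ge 1 (Module.finrank L W) with h | h
  · omega
  obtain ⟨a, ha, ha0⟩ := Submodule.exists_mem_ne_zero_of_ne_bot hY
  have hinj : hN γ y z a ≠ 0 := by
    intro h0
    have h1 : γ (a 0) + γ (a 2) * z = 0 := congrArg Prod.fst h0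
    have h2 : γ (a 1) - γ (a 2) * y = 0 := congrArg Prod.snd h0
    have h3 : a 2 = 0 := by
      by_contra h3
      apply hy ((a 2)⁻¹ * a 1)
      have h4 : γ (a 2) ≠ 0 := by simpa using h3
      rw [map_mul, map_inv₀, sub_eq_zero.1 h2, inv_mul_cancel_left₀ h4]
    rw [h3, map_zero, zero_mul, add_zero, map_eq_zero] at h1
    rw [h3, map_zero, zero_mul, sub_zero, map_eq_zero] at h2
    apply ha0
    funext i; fin_cases i
    · exact h1
    · exact h2
    · exact h3
  obtain ⟨v, hv⟩ := finrank_le_one_iff.1 h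
  have hWne : Nontrivial W := (Submodule.nontrivial_iff_ne_bot).2 (by
    intro h0; apply hinj; have := hW a ha; rw [h0] at this; simpa using this)
  have hpos : 0 < Module.finrank L W := Module.finrank_pos
  -- the right annihilator
  obtain ⟨l, m, hlm, hann⟩ : ∃ l m : L, (l ≠ 0 ∨ m ≠ 0) ∧ ∀ w ∈ W, w.1 * l + w.2 * m = 0 := by
    by_cases hp : (v : L × L).1 = 0
    · refine ⟨1, 0, Or.inl one_ne_zero, fun w hw => ?_⟩
      obtain ⟨t, ht⟩ := hv ⟨w, hw⟩
      have : t • (v : L × L) = w := congrArg Subtype.val ht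
      rw [← this]; simp [hp]
    · refine ⟨-((v : L × L).1⁻¹ * (v : L × L).2), 1, Or.inr one_ne_zero, fun w hw => ?_⟩
      obtain ⟨t, ht⟩ := hv ⟨w, hw⟩
      have : t • (v : L × L) = w := congrArg Subtype.val ht
      rw [← this]; simp [mul_assoc, mul_inv_cancel_left₀ hp]
  letI : Module G L := Module.compHom L γ
  have hs : ∀ (g : G) (u : L), g • u = γ g * u := fun _ _ => rfl
  let T : (Fin 3 → G) →ₗ[G] L :=
    { toFun := fun a => γ (a 0) * l + γ (a 1) * m + γ (a 2) * (z * l - y * m)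
      map_add' := fun a b => by
        simp only [Pi.add_apply, map_add, add_mul]; abel
      map_smul' := fun g a => by
        simp only [Pi.smul_apply, smul_eq_mul, map_mul, RingHom.id_apply, hs, mul_add, mul_assoc] }
  have hT : ∀ a, T a = γ (a 0) * l + γ (a 1) * m + γ (a 2) * (z * l - y * m) := fun _ => rfl
  have hker : Y ≤ LinearMap.ker T := by
    intro a ha
    rw [LinearMap.mem_ker, hT, ← hann _ (hW a ha)]
    simp only [hN, AddMonoidHom.coe_mk, ZeroHom.coe_mk, add_mul, sub_mul, mul_sub, mul_assoc]
    abel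
  by_contra hcon
  have h2 : 2 ≤ Module.finrank G Y := by omega
  have h3 := LinearMap.finrank_range_add_finrank_ker T
  have h4 := Submodule.finrank_mono hker
  rw [Module.finrank_fin_fun] at h3
  obtain ⟨κ, hκ⟩ := finrank_le_one_iff.1 (show Module.finrank G (LinearMap.range T) ≤ 1 by omega)
  have hsp : ∀ a, ∃ c, γ c * (κ : L) = T a := by
    intro a
    obtain ⟨c, hc⟩ := hκ ⟨T a, a, rfl⟩
    exact ⟨c, congrArg Subtype.val hc⟩
  obtain ⟨l', hl'⟩ := hsp (Pi.single 0 1)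
  obtain ⟨m', hm'⟩ := hsp (Pi.single 1 1)
  obtain ⟨k', hk'⟩ := hsp (Pi.single 2 1)
  simp [hT, Pi.single_apply] at hl' hm' hk'
  have hκ0 : (κ : L) ≠ 0 := by
    intro h0
    rw [h0, mul_zero] at hl' hm'
    rcases hlm with h | h
    · exact h hl'.symm
    · exact h hm'.symm
  have hrel : z * γ l' - y * γ m' = γ k' := by
    apply mul_right_cancel₀ hκ0
    rw [hk', ← hl', ← hm', sub_mul, mul_assoc, mul_assoc]
  by_cases hl0 : l' = 0
  · have hm0 : γ m' ≠ 0 := by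
      intro h0
      rw [hl0, map_zero, zero_mul] at hl'
      rw [h0, zero_mul] at hm'
      rcases hlm with h | h
      · exact h hl'.symm
      · exact h hm'.symm
    apply hy (-(k' * m'⁻¹))
    rw [hl0, map_zero, mul_zero, zero_sub] at hrel
    rw [map_neg, map_mul, map_inv₀, ← hrel, neg_mul, neg_neg, mul_inv_cancel_right₀ hm0]
  · have hl0' : γ l' ≠ 0 := by simpa using hl0
    apply hz (m' * l'⁻¹) (k' * l'⁻¹)
    rw [map_mul, map_mul, ← mul_assoc, ← add_mul, map_inv₀, ← hrel, add_sub_cancel,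
      mul_inv_cancel_right₀ hl0']

end A2

namespace A2
inductive N | y1 | q1 | q
deriving DecidableEq
instance : Fintype N := ⟨{.y1, .q1, .q}, fun v => by cases v <;> decide⟩
inductive X | yg | qg | p
deriving DecidableEq
instance : Fintype X := ⟨{.yg, .qg, .p}, fun v => by cases v <;> decide⟩

theorem sum_N {A : Type} [AddCommMonoid A] (f : N → A) : ∑ v, f v = f .y1 + f .q1 + f .q := by
  have : (Finset.univ : Finset N) = {.y1, .q1, .q} := rfl
  rw [this, Finset.sum_insert (by decide), Finset.sum_pair (by decide), add_assoc]
theorem sum_X {A : Type} [AddCommMonoid A] (f : X → A) : ∑ v, f v = f .yg + f .qg + f .p := by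
  have : (Finset.univ : Finset X) = {.yg, .qg, .p} := rfl
  rw [this, Finset.sum_insert (by decide), Finset.sum_pair (by decide), add_assoc]

variable {n : ℕ} {L G : Type} [DivisionRing L] [DivisionRing G]

@[reducible] def K (L G : Type) : N → Type
  | .y1 => G
  | .q1 => L
  | .q => L

instance iK : ∀ v, DivisionRing (K L G v)
  | .y1 => inferInstanceAs (DivisionRing G)
  | .q1 => inferInstanceAs (DivisionRing L)
  | .q => inferInstanceAs (DivisionRing L)

inductive α : N → N → Type
  | u : α .y1 .q1
  | v : α .q1 .q

variable (γ : G →+* L)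

inductive r0 : FA (K L G) α → FA (K L G) α → Prop
  | u (g : G) : r0 (FA.ar α.u * FA.sc (K := K L G) .y1 g) (FA.sc (K := K L G) .q1 (γ g) * FA.ar α.u)
  | v (e : L) : r0 (FA.ar α.v * FA.sc (K := K L G) .q1 e) (FA.sc (K := K L G) .q e * FA.ar α.v)

theorem rel_u (g : G) : QAlg.ar (r0 γ) α.u * QAlg.sc (r0 γ) .y1 g =
    QAlg.sc (r0 γ) .q1 (γ g) * QAlg.ar (r0 γ) α.u := by
  have := QAlg.cust (r0 γ) (.u g)
  rw [map_mul, map_mul] at this; exact this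
theorem rel_v (e : L) : QAlg.ar (r0 γ) α.v * QAlg.sc (r0 γ) .q1 e =
    QAlg.sc (r0 γ) .q e * QAlg.ar (r0 γ) α.v := by
  have := QAlg.cust (r0 γ) (.v e)
  rw [map_mul, map_mul] at this; exact this

@[reducible] def KX (L G : Type) : X → Type
  | .yg => G
  | .qg => L
  | .p => G
instance iKX : ∀ v, DivisionRing (KX L G v)
  | .yg => inferInstanceAs (DivisionRing G)
  | .qg => inferInstanceAs (DivisionRing L)
  | .p => inferInstanceAs (DivisionRing G)
@[reducible] def τ : X → N
  | .yg => .y1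
  | .qg => .q1
  | .p => .q
def σ : ∀ x, KX L G x →+* K L G (τ x)
  | .yg => RingHom.id G
  | .qg => RingHom.id L
  | .p => γ
inductive D : X → X → Type
  | d1 : D .yg .qg
  | d2 : D .yg .p
def σδ : ∀ {x y}, D x y → (KX L G x →+* KX L G y)
  | _, _, .d1 => γ
  | _, _, .d2 => RingHom.id G
noncomputable def w : ∀ {x y}, D x y → FA (K L G) α
  | _, _, .d1 => FA.ar α.u
  | _, _, .d2 => FA.ar α.v * FA.ar α.u

noncomputable def E : ExtD (r0 γ) X where
  KX := KX L G
  τ := τ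
  σ := σ γ
  δ := D
  σδ := σδ γ
  w := w
  hw d k := by
    cases d with
    | d1 => exact rel_u γ k
    | d2 =>
      change QAlg.mk (r0 γ) (FA.ar α.v * FA.ar α.u) * QAlg.sc (r0 γ) N.y1 k =
        QAlg.sc (r0 γ) N.q (γ k) * QAlg.mk (r0 γ) (FA.ar α.v * FA.ar α.u)
      rw [map_mul]
      change QAlg.ar (r0 γ) α.v * QAlg.ar (r0 γ) α.u * QAlg.sc (r0 γ) N.y1 k =
        QAlg.sc (r0 γ) N.q (γ k) * (QAlg.ar (r0 γ) α.v * QAlg.ar (r0 γ) α.u)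
      rw [mul_assoc, rel_u, ← mul_assoc, rel_v, mul_assoc]

def cF : N → ℤ
  | .y1 => -1
  | .q1 => 1
  | .q => 1

def cG (n : ℕ) : N ⊕ X → ℤ
  | .inl .y1 => -(n - 2)
  | .inl .q1 => n - 2
  | .inl .q => 0
  | .inr .yg => -2
  | .inr .qg => 2
  | .inr .p => 1

section
variable (R : L ≃+ (Fin n → G)) (hR : ∀ g u, R (γ g * u) = g • R u) (hn : 0 < n)
  (M : Type) [AddCommGroup M] [Module (QAlg (r0 γ)) M]

def PT : Type := Vt (QAlg.sc (r0 γ) N.q) M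
noncomputable instance : AddCommGroup (PT γ M) := inferInstanceAs (AddCommGroup (Vt (QAlg.sc (r0 γ) N.q) M))
noncomputable instance : Module G (PT γ M) :=
  Module.compHom (Vt (QAlg.sc (r0 γ) N.q) M) γ

theorem hgood (R : L ≃+ (Fin n → G)) (hR : ∀ g u, R (γ g * u) = g • R u) (hn : 0 < n)
    (h : (qRank (r0 γ) cF).good M) : (qRank (E γ).rG (cG n)).good ((E γ).T M).X := by
  rw [QRep.good_iff]
  rw [qRank_good] at h
  rintro (v | x)
  · exact h v
  · cases x with
    | yg => exact h .y1
    | qg => exact h .q1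
    | p =>
      let _ : Module G (Vt (QAlg.sc (r0 γ) .q) M) := Module.compHom _ γ
      exact (fr_mul γ R hR hn (Q := Vt (QAlg.sc (r0 γ) .q) M) (fun _ _ => rfl)).2 (h .q)

theorem finrank_p (R : L ≃+ (Fin n → G)) (hR : ∀ g u, R (γ g * u) = g • R u) (hn : 0 < n) :
    Module.finrank G (PT γ M) = n * Module.finrank L (Vt (QAlg.sc (r0 γ) .q) M) := by
  let _ : Module G (Vt (QAlg.sc (r0 γ) .q) M) := Module.compHom _ γ
  exact (fr_mul γ R hR hn (Q := Vt (QAlg.sc (r0 γ) .q) M) (fun _ _ => rfl)).1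

noncomputable def gm : Vt (QAlg.sc (r0 γ) .q1) M →ₗ[L] Vt (QAlg.sc (r0 γ) .q) M where
  toFun m := ⟨QAlg.ar (r0 γ) α.v • (m : M), QAlg.ar_mem α.v _⟩
  map_add' x y := Subtype.ext (smul_add _ _ _)
  map_smul' k x := Subtype.ext (by
    change QAlg.ar (r0 γ) α.v • QAlg.sc (r0 γ) .q1 k • (x : M) = QAlg.sc (r0 γ) .q k • QAlg.ar (r0 γ) α.v • (x : M)
    rw [smul_smul, smul_smul, rel_v])

noncomputable def fm : Vt (QAlg.sc (r0 γ) .y1) M →ₗ[G] PT γ M where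
  toFun m := (⟨QAlg.ar (r0 γ) α.v • QAlg.ar (r0 γ) α.u • (m : M), QAlg.ar_mem α.v _⟩ : Vt (QAlg.sc (r0 γ) .q) M)
  map_add' x y := Subtype.ext (by
    change QAlg.ar (r0 γ) α.v • QAlg.ar (r0 γ) α.u • ((x : M) + y) = _
    rw [smul_add, smul_add]; rfl)
  map_smul' k x := Subtype.ext (by
    change QAlg.ar (r0 γ) α.v • QAlg.ar (r0 γ) α.u • QAlg.sc (r0 γ) .y1 k • (x : M) =
      QAlg.sc (r0 γ) .q (γ k) • QAlg.ar (r0 γ) α.v • QAlg.ar (r0 γ) α.u • (x : M)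
    rw [smul_smul (QAlg.ar (r0 γ) α.u), rel_u, mul_smul, smul_smul (QAlg.ar (r0 γ) α.v), rel_v, mul_smul])

theorem fm_act (m : Vt (QAlg.sc (r0 γ) .y1) M) :
    fm γ M m = (E γ).Tact M (ExtD.αG.new (E := E γ) D.d2) m := by
  apply Subtype.ext
  change QAlg.ar (r0 γ) α.v • QAlg.ar (r0 γ) α.u • (m : M) =
    QAlg.mk (r0 γ) (FA.ar α.v * FA.ar α.u) • (m : M)
  rw [map_mul, mul_smul]; rfl

theorem hnull (R : L ≃+ (Fin n → G)) (hR : ∀ g u, R (γ g * u) = g • R u) (hn : 1 < n)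
    (h : (qRank (r0 γ) cF).Null M) : (qRank (E γ).rG (cG n)).Null ((E γ).T M).X := by
  have hn0 : 0 < n := by omega
  have hg := hgood γ M R hR hn0 h.good
  rw [QRep.good_iff] at hg
  have hf1 : Module.Finite G (Vt (QAlg.sc (r0 γ) .y1) M) := hg (Sum.inl .y1)
  have hf2 : Module.Finite L (Vt (QAlg.sc (r0 γ) .q1) M) := hg (Sum.inl .q1)
  have hf3 : Module.Finite L (Vt (QAlg.sc (r0 γ) .q) M) := hg (Sum.inl .q)
  refine QRep.null _ hg ?_ ?_
  · have h0 := h.zero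
    rw [qRank_χ, sum_N] at h0
    rw [Fintype.sum_sum_type, sum_N, sum_X]
    have hp := finrank_p γ M R hR hn0
    change (-((n : ℤ) - 2)) * (Module.finrank G (Vt (QAlg.sc (r0 γ) .y1) M) : ℤ)
      + ((n : ℤ) - 2) * (Module.finrank L (Vt (QAlg.sc (r0 γ) .q1) M) : ℤ)
      + 0 * (Module.finrank L (Vt (QAlg.sc (r0 γ) .q) M) : ℤ)
      + (-2 * (Module.finrank G (Vt (QAlg.sc (r0 γ) .y1) M) : ℤ)
      + 2 * (Module.finrank L (Vt (QAlg.sc (r0 γ) .q1) M) : ℤ)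
      + 1 * (Module.finrank G (PT γ M) : ℤ)) = 0
    change (-1) * (Module.finrank G (Vt (QAlg.sc (r0 γ) .y1) M) : ℤ)
      + 1 * (Module.finrank L (Vt (QAlg.sc (r0 γ) .q1) M) : ℤ)
      + 1 * (Module.finrank L (Vt (QAlg.sc (r0 γ) .q) M) : ℤ) = 0 at h0
    rw [hp]; push_cast
    linear_combination (n : ℤ) * h0
  · intro W hW
    let Wy : Submodule G (Vt (QAlg.sc (r0 γ) .y1) M) := W (.inl .y1)
    let Wq1 : Submodule L (Vt (QAlg.sc (r0 γ) .q1) M) := W (.inl .q1)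
    let QS : Submodule L (Vt (QAlg.sc (r0 γ) .q) M) := W (.inl .q)
    let Y0 : Submodule G (Vt (QAlg.sc (r0 γ) .y1) M) := W (.inr .yg)
    let b : Submodule L (Vt (QAlg.sc (r0 γ) .q1) M) := W (.inr .qg)
    let p : Submodule G (PT γ M) := W (.inr .p)
    let qP : Submodule G (PT γ M) :=
      { carrier := {x | (x : Vt (QAlg.sc (r0 γ) .q) M) ∈ QS}
        zero_mem' := QS.zero_mem
        add_mem' := fun hx hy => QS.add_mem hx hy
        smul_mem' := fun g x hx => QS.smul_mem (γ g) hx }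
    obtain ⟨e1, e2⟩ := nullcalc γ R hR hn0 (P := PT γ M)
      (AddEquiv.refl (Vt (QAlg.sc (r0 γ) .q) M))
      (fun _ _ => rfl) (fm γ M) (gm γ M) Y0 b QS p
      (fun x hx => by rw [fm_act]; exact hW _ _ (ExtD.αG.new (E := E γ) D.d2) x hx)
      (fun x hx => hW _ _ (ExtD.αG.p (E := E γ) X.p) x hx) qP (fun x => Iff.rfl)
    have h1 := null_sub h (fun v => W (.inl v)) (fun s t a m hm => hW _ _ (ExtD.αG.old a) m hm)
    have hY0b : ∀ m ∈ Y0, (⟨QAlg.ar (r0 γ) α.u • (m : M), QAlg.ar_mem α.u _⟩ :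
        Vt (QAlg.sc (r0 γ) .q1) M) ∈ b := fun m hm => hW _ _ (ExtD.αG.new (E := E γ) D.d1) m hm
    have h2 := null_sub h (fun v => match v with
      | .y1 => (Y0 ⊓ qP.comap (fm γ M) : Submodule G (Vt (QAlg.sc (r0 γ) .y1) M))
      | .q1 => (b ⊓ QS.comap (gm γ M) : Submodule L (Vt (QAlg.sc (r0 γ) .q1) M))
      | .q => QS) (by
        intro s t a m hm
        cases a with
        | u => exact ⟨hY0b m hm.1, hm.2⟩
        | v => exact hm.2)
    have h3 := null_sub h (fun v => match v with
      | .y1 => Y0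
      | .q1 => b
      | .q => (b.map (gm γ M) ⊔ QS : Submodule L (Vt (QAlg.sc (r0 γ) .q) M))) (by
        intro s t a m hm
        cases a with
        | u => exact hY0b m hm
        | v => exact Submodule.mem_sup_left ⟨m, hm, rfl⟩)
    rw [sum_N] at h1 h2 h3
    rw [Fintype.sum_sum_type, sum_N, sum_X]
    change 0 ≤ (-((n : ℤ) - 2)) * (Module.finrank G Wy : ℤ)
      + ((n : ℤ) - 2) * (Module.finrank L Wq1 : ℤ)
      + 0 * (Module.finrank L QS : ℤ)
      + (-2 * (Module.finrank G Y0 : ℤ)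
      + 2 * (Module.finrank L b : ℤ)
      + 1 * (Module.finrank G p : ℤ))
    change 0 ≤ (-1) * (Module.finrank G Wy : ℤ) + 1 * (Module.finrank L Wq1 : ℤ)
      + 1 * (Module.finrank L QS : ℤ) at h1
    change 0 ≤ (-1) * (Module.finrank G (Y0 ⊓ qP.comap (fm γ M) : Submodule G (Vt (QAlg.sc (r0 γ) .y1) M)) : ℤ)
      + 1 * (Module.finrank L (b ⊓ QS.comap (gm γ M) : Submodule L (Vt (QAlg.sc (r0 γ) .q1) M)) : ℤ)
      + 1 * (Module.finrank L QS : ℤ) at h2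
    change 0 ≤ (-1) * (Module.finrank G Y0 : ℤ) + 1 * (Module.finrank L b : ℤ)
      + 1 * (Module.finrank L (b.map (gm γ M) ⊔ QS : Submodule L (Vt (QAlg.sc (r0 γ) .q) M)) : ℤ) at h3
    have h4 := mul_nonneg (show (0 : ℤ) ≤ (n : ℤ) - 2 by omega) h1
    linarith
end
end A2

namespace A2
variable {n : ℕ} {L G : Type} [DivisionRing L] [DivisionRing G] (γ : G →+* L)

theorem simRel : SimRel (r0 γ) .q := by
  intro W _ _ x y h
  cases h with
  | u g => rw [map_mul, map_mul, repρ_zero_ar, zero_mul, mul_zero]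
  | v g => rw [map_mul, map_mul, repρ_zero_ar, zero_mul, mul_zero]

/-- base object -/
noncomputable def I : QRep (r0 γ) := QRep.sim N.q (simRel γ) (K L G .q)

theorem I_stab : (qRank (r0 γ) cF).Stab (I γ).X := sim_stab _ _ _ rfl

theorem hs (t : N) : IsEmpty (α .q t) := ⟨fun a => by cases a⟩

noncomputable def sg (x : L) : Vt (QAlg.sc (r0 γ) .q) (I γ).X :=
  (I γ).vtEquiv .q (fun _ => x : SimM N.q (K L G .q) N.q)

theorem sg_add (x y : L) : sg γ (x + y) = sg γ x + sg γ y := map_add ((I γ).vtEquiv .q) _ _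
theorem sg_smul (x y : L) : QAlg.sc (r0 γ) .q x • (sg γ y : (I γ).X) = (sg γ (x * y) : (I γ).X) :=
  (I γ).sc_single .q x _

noncomputable def sgH : L →+ (I γ).X :=
  AddMonoidHom.mk' (fun x => (sg γ x : (I γ).X)) (fun x y => congrArg Subtype.val (sg_add γ x y))

theorem sg_inj {x y : L} (h : (sg γ x : (I γ).X) = sg γ y) : x = y := by
  have := (I γ).single_inj .q h
  exact congrFun this ⟨rfl⟩

theorem sg_surj (x : Vt (QAlg.sc (r0 γ) .q) (I γ).X) : ∃ y, x = sg γ y := by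
  let u : SimM N.q (K L G .q) N.q := ((I γ).vtEquiv .q).symm x
  refine ⟨u ⟨rfl⟩, ?_⟩
  exact (((I γ).vtEquiv .q).apply_symm_apply x).symm

/-- maps out of I -/
noncomputable def hom {V : Type} [AddCommGroup V] [Module (QAlg (r0 γ)) V]
    (x : Vt (QAlg.sc (r0 γ) .q) V) : (I γ).X →ₗ[QAlg (r0 γ)] V :=
  simHom (K := K L G) N.q (simRel γ) (K L G .q) hs (LinearMap.toSpanSingleton (K L G .q) _ x)

theorem hom_sg {V : Type} [AddCommGroup V] [Module (QAlg (r0 γ)) V]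
    (x : Vt (QAlg.sc (r0 γ) .q) V) (u : L) : hom γ x (sg γ u : (I γ).X) = QAlg.sc (r0 γ) .q u • (x : V) := by
  exact (simHom_single (K := K L G) N.q (simRel γ) (K L G .q) hs _ u)

theorem I_ext {V : Type} [AddCommGroup V] [Module (QAlg (r0 γ)) V]
    {f g : (I γ).X →ₗ[QAlg (r0 γ)] V} (h : f (sg γ 1 : (I γ).X) = g (sg γ 1 : (I γ).X)) : f = g := by
  refine sim_ext (K := K L G) N.q (simRel γ) (K L G .q) fun w => ?_
  change f (sg γ w : (I γ).X) = g (sg γ w : (I γ).X)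
  have h1 := sg_smul γ w 1
  rw [mul_one] at h1
  rw [← h1, map_smul, map_smul, h]

noncomputable def ρ : L →+* (Module.End (QAlg (r0 γ)) (I γ).X)ᵐᵒᵖ where
  toFun f := MulOpposite.op (hom γ (sg γ f))
  map_one' := by
    rw [← MulOpposite.op_one]; congr 1
    apply I_ext
    rw [hom_sg, sg_smul, mul_one]; rfl
  map_mul' f g := by
    rw [← MulOpposite.op_mul]; congr 1
    apply I_ext
    rw [Module.End.mul_apply, hom_sg, hom_sg, sg_smul, one_mul, sg_smul, one_mul, hom_sg, sg_smul]
  map_zero' := by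
    rw [← MulOpposite.op_zero]; congr 1
    apply I_ext
    rw [hom_sg, sg_smul, mul_zero, LinearMap.zero_apply]
    exact map_zero (sgH γ)
  map_add' f g := by
    rw [← MulOpposite.op_add]; congr 1
    apply I_ext
    rw [LinearMap.add_apply, hom_sg, hom_sg, hom_sg, sg_add, ← smul_add]; rfl

theorem ρ_sg (f u : L) : (ρ γ f).unop (sg γ u : (I γ).X) = sg γ (u * f) := by
  change hom γ (sg γ f) (sg γ u : (I γ).X) = _
  rw [hom_sg, sg_smul]

section R
variable (R : L ≃+ (Fin n → G))

def bs (i : Fin n) : L := R.symm (Pi.single i 1)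

theorem R_sum (hR : ∀ g u, R (γ g * u) = g • R u) (w : Fin n → G) :
    ∑ i, γ (w i) * bs R i = R.symm w := by
  apply R.injective
  rw [map_sum, R.apply_symm_apply]
  simp only [hR, bs, R.apply_symm_apply]
  conv_rhs => rw [← Finset.univ_sum_single w]
  refine Finset.sum_congr rfl fun i _ => ?_
  rw [← Pi.single_smul, smul_eq_mul, mul_one]

noncomputable def e (i : Fin n) : Vt (QAlg.sc (r0 γ) ((E γ).τ X.p)) (I γ).X := sg γ (bs R i)

theorem sum_e (hR : ∀ g u, R (γ g * u) = g • R u) (w : Fin n → G) :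
    ∑ i, QAlg.sc (r0 γ) .q (γ (w i)) • (sg γ (bs R i) : (I γ).X) = sg γ (R.symm w) := by
  rw [← R_sum γ R hR w]
  refine Eq.trans ?_ (map_sum (sgH γ) (fun i => γ (w i) * bs R i) Finset.univ).symm
  exact Finset.sum_congr rfl fun i _ => sg_smul γ _ _

theorem hli (hR : ∀ g u, R (γ g * u) = g • R u) (w : Fin n → (E γ).KX X.p)
    (h : ∑ i, QAlg.sc (r0 γ) ((E γ).τ X.p) ((E γ).σ X.p (w i)) • (e γ R i : (I γ).X) = 0) : w = 0 := by
  have h1 := (sum_e γ R hR w).symm.trans h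
  have h2 := sg_inj γ (h1.trans (map_zero (sgH γ)).symm)
  exact (R.symm.map_eq_zero_iff).1 h2

theorem hρ (hR : ∀ g u, R (γ g * u) = g • R u) (φ : L →+* Matrix (Fin n) (Fin n) G)
    (hφ : ∀ f r, R (bs R r * f) = φ f r) (f : L) (r : Fin n) :
    (ρ γ f).unop (e γ R r : (I γ).X) =
      ∑ j, QAlg.sc (r0 γ) ((E γ).τ X.p) ((E γ).σ X.p (φ f r j)) • (e γ R j : (I γ).X) := by
  refine Eq.trans ?_ (sum_e γ R hR (φ f r)).symm
  rw [← hφ, R.symm_apply_apply]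
  exact ρ_sg γ f (bs R r)

theorem I_sub (v : N) (h : v ≠ .q) : Subsingleton (Vt (QAlg.sc (r0 γ) v) (I γ).X) := by
  have : Subsingleton ((I γ).M v) := sim_subs N.q (K L G .q) h
  exact ((I γ).vtEquiv v).symm.toEquiv.subsingleton

theorem I_fr : Module.finrank L (Vt (QAlg.sc (r0 γ) .q) (I γ).X) = 1 :=
  ((I γ).vtEquiv .q).finrank_eq.symm.trans
    ((simE (K := K L G) N.q (K L G .q)).finrank_eq.trans (Module.finrank_self L))

theorem hW (hR : ∀ g u, R (γ g * u) = g • R u) (hn : 0 < n)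
    (W : ∀ v, Submodule ((E γ).KG v) ((E γ).TM (I γ).X v))
    (he : ∀ i, e γ R i ∈ W (Sum.inr X.p)) :
    (n : ℤ) ≤ ∑ v, cG n v * (Module.finrank ((E γ).KG v) (W v) : ℤ) := by
  have s1 := I_sub γ .y1 (by decide)
  have s2 := I_sub γ .q1 (by decide)
  let Wy : Submodule G (Vt (QAlg.sc (r0 γ) .y1) (I γ).X) := W (.inl .y1)
  let Wq1 : Submodule L (Vt (QAlg.sc (r0 γ) .q1) (I γ).X) := W (.inl .q1)
  let QS : Submodule L (Vt (QAlg.sc (r0 γ) .q) (I γ).X) := W (.inl .q)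
  let Y0 : Submodule G (Vt (QAlg.sc (r0 γ) .y1) (I γ).X) := W (.inr .yg)
  let b : Submodule L (Vt (QAlg.sc (r0 γ) .q1) (I γ).X) := W (.inr .qg)
  let p : Submodule G (PT γ (I γ).X) := W (.inr .p)
  rw [Fintype.sum_sum_type, sum_N, sum_X]
  change (n : ℤ) ≤ (-((n : ℤ) - 2)) * (Module.finrank G Wy : ℤ)
      + ((n : ℤ) - 2) * (Module.finrank L Wq1 : ℤ)
      + 0 * (Module.finrank L QS : ℤ)
      + (-2 * (Module.finrank G Y0 : ℤ)
      + 2 * (Module.finrank L b : ℤ)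
      + 1 * (Module.finrank G p : ℤ))
  have hp : p = ⊤ := by
    rw [eq_top_iff]
    rintro x -
    obtain ⟨y, rfl⟩ := sg_surj γ x
    let e' : Fin n → PT γ (I γ).X := fun i => sg γ (bs R i)
    have h3 : sg γ y = ∑ i, R y i • e' i := by
      apply Subtype.ext
      have h6 := sum_e γ R hR (R y)
      rw [R.symm_apply_apply] at h6
      refine h6.symm.trans ?_
      exact (map_sum (Vert (QAlg.sc (r0 γ) N.q) (I γ).X).subtype (fun i => R y i • e' i) Finset.univ).symm
    have h4 : ∑ i, R y i • e' i ∈ p := Submodule.sum_mem _ fun i _ => Submodule.smul_mem _ _ (he i)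
    rw [← h3] at h4
    exact h4
  have h5 : Module.finrank G p = n := by
    rw [hp, finrank_top, finrank_p γ _ R hR hn, I_fr, mul_one]
  rw [h5, Module.finrank_zero_of_subsingleton (R := G) (M := Wy),
    Module.finrank_zero_of_subsingleton (R := G) (M := Y0),
    Module.finrank_zero_of_subsingleton (R := L) (M := Wq1),
    Module.finrank_zero_of_subsingleton (R := L) (M := b)]
  simp

theorem hχ (hR : ∀ g u, R (γ g * u) = g • R u) (hn : 0 < n) :
    (qRank (E γ).rG (cG n)).χ ((E γ).T (I γ).X).X = n := by
  rw [QRep.χ_X, Fintype.sum_sum_type, sum_N, sum_X]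
  have s1 := I_sub γ .y1 (by decide)
  have s2 := I_sub γ .q1 (by decide)
  change (-((n : ℤ) - 2)) * (Module.finrank G (Vt (QAlg.sc (r0 γ) .y1) (I γ).X) : ℤ)
      + ((n : ℤ) - 2) * (Module.finrank L (Vt (QAlg.sc (r0 γ) .q1) (I γ).X) : ℤ)
      + 0 * (Module.finrank L (Vt (QAlg.sc (r0 γ) .q) (I γ).X) : ℤ)
      + (-2 * (Module.finrank G (Vt (QAlg.sc (r0 γ) .y1) (I γ).X) : ℤ)
      + 2 * (Module.finrank L (Vt (QAlg.sc (r0 γ) .q1) (I γ).X) : ℤ)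
      + 1 * (Module.finrank G (PT γ (I γ).X) : ℤ)) = n
  rw [finrank_p γ _ R hR hn, I_fr, Module.finrank_zero_of_subsingleton,
    Module.finrank_zero_of_subsingleton]
  simp
end R
end A2

section gen
variable {ν : Type} [Fintype ν] [DecidableEq ν] {K : ν → Type} [∀ v, DivisionRing (K v)]
    {α : ν → ν → Type} (M : ν → Type) [∀ v, AddCommGroup (M v)] [∀ v, Module (K v) (M v)]
    (act : ∀ {s t : ν}, α s t → (M s →+ M t))

theorem rep_sc (v : ν) (k : K v) (n : ∀ v, M v) :
    FreeAlgebra.lift ℤ (repρ (K := K) M act) (FA.sc v k) n = Pi.single v (k • n v) := by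
  rw [FreeAlgebra.lift_ι_apply]; rfl
theorem rep_ar {s t : ν} (a : α s t) (n : ∀ v, M v) :
    FreeAlgebra.lift ℤ (repρ (K := K) M act) (FA.ar a) n = Pi.single t (act a (n s)) := by
  rw [FreeAlgebra.lift_ι_apply]; rfl

theorem rep_semi {s t : ν} (a : α s t) (k : K s) (k' : K t) (h : ∀ m, act a (k • m) = k' • act a m) :
    FreeAlgebra.lift ℤ (repρ (K := K) M act) (FA.ar a * FA.sc s k) =
    FreeAlgebra.lift ℤ (repρ (K := K) M act) (FA.sc t k' * FA.ar a) := by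
  rw [map_mul, map_mul]
  refine End_ext fun n => ?_
  refine (congrArg (FreeAlgebra.lift ℤ (repρ (K := K) M act) (FA.ar a)) (rep_sc M act s k n)).trans ?_
  refine Eq.trans ?_ (congrArg (FreeAlgebra.lift ℤ (repρ (K := K) M act) (FA.sc t k')) (rep_ar M act a n)).symm
  rw [rep_ar, rep_sc, Pi.single_eq_same, Pi.single_eq_same, h]

theorem rep_ar0 {s t : ν} (a : α s t) (h : act a = 0) :
    FreeAlgebra.lift ℤ (repρ (K := K) M act) (FA.ar a) = 0 := by
  refine End_ext fun n => ?_
  rw [rep_ar, h, AddMonoidHom.zero_apply, Pi.single_zero]; rfl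
theorem rep_sc0 (v : ν) (k : K v) (h : Subsingleton (M v)) :
    FreeAlgebra.lift ℤ (repρ (K := K) M act) (FA.sc v k) = 0 := by
  refine End_ext fun n => ?_
  rw [rep_sc, Subsingleton.elim (k • n v) 0, Pi.single_zero]; rfl
end gen

namespace A2
variable {n : ℕ} {L G : Type} [DivisionRing L] [DivisionRing G] (γ : G →+* L) (y z : L)

@[reducible] def NM (L G : Type) : N → Type
  | .y1 => Fin 3 → G
  | .q1 => L × L
  | .q => L × L
instance NMa : ∀ v, AddCommGroup (NM L G v)
  | .y1 => inferInstanceAs (AddCommGroup (Fin 3 → G))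
  | .q1 => inferInstanceAs (AddCommGroup (L × L))
  | .q => inferInstanceAs (AddCommGroup (L × L))
instance NMm : ∀ v, Module (K L G v) (NM L G v)
  | .y1 => inferInstanceAs (Module G (Fin 3 → G))
  | .q1 => inferInstanceAs (Module L (L × L))
  | .q => inferInstanceAs (Module L (L × L))

def Nact : ∀ {s t : N}, α s t → (NM L G s →+ NM L G t)
  | _, _, .u => hN γ y z
  | _, _, .v => AddMonoidHom.id (L × L)

noncomputable def NN : QRep (r0 γ) where
  M := NM L G
  act a := Nact γ y z a
  rel x1 y1 h := by
    cases h with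
    | u g => exact rep_semi (K := K L G) (NM L G) (fun a => Nact γ y z a) α.u g (γ g) (fun m => hN_smul γ _ _ g m)
    | v e => exact rep_semi (K := K L G) (NM L G) (fun a => Nact γ y z a) α.v e e (fun m => rfl)

theorem NN_stab (hy : ∀ g, y ≠ γ g) (hz : ∀ c d, z ≠ y * γ c + γ d) :
    (qRank (r0 γ) cF).Stab (NN γ y z).X := by
  refine QRep.stab _ ?_ ?_ ?_
  · intro v
    cases v with
    | y1 => exact inferInstanceAs (Module.Finite G (Fin 3 → G))
    | q1 => exact inferInstanceAs (Module.Finite L (L × L))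
    | q => exact inferInstanceAs (Module.Finite L (L × L))
  · rw [sum_N]
    change (-1) * (Module.finrank G (Fin 3 → G) : ℤ) + 1 * (Module.finrank L (L × L) : ℤ)
      + 1 * (Module.finrank L (L × L) : ℤ) = 1
    rw [Module.finrank_fin_fun, Module.finrank_prod, Module.finrank_self]; norm_num
  · intro W hW hne
    let Y : Submodule G (Fin 3 → G) := W .y1
    let Q1 : Submodule L (L × L) := W .q1
    let Q : Submodule L (L × L) := W .q
    rw [sum_N]
    change 1 ≤ (-1) * (Module.finrank G Y : ℤ) + 1 * (Module.finrank L Q1 : ℤ)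
      + 1 * (Module.finrank L Q : ℤ)
    have hle : Q1 ≤ Q := fun m hm => hW _ _ α.v m hm
    have h1 : Module.finrank L Q1 ≤ Module.finrank L Q := Submodule.finrank_mono hle
    by_cases hY : Y = ⊥
    · have h2 : Module.finrank G Y = 0 := by rw [hY]; exact finrank_bot G _
      have h3 : Q ≠ ⊥ := by
        intro h
        have h4 : Q1 = ⊥ := le_bot_iff.1 (h ▸ hle)
        obtain ⟨v, hv⟩ := hne
        cases v with
        | y1 => exact hv hY
        | q1 => exact hv h4
        | q => exact hv h
      have h4 : 1 ≤ Module.finrank L Q := Submodule.one_le_finrank_iff.2 h3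
      omega
    · have := hN_dim γ y z hy hz Y Q1 (fun a ha => hW _ _ α.u a ha) hY
      omega

@[reducible] def JM (L G : Type) : N ⊕ X → Type
  | .inl _ => PUnit
  | .inr .yg => Fin 3 → G
  | .inr .qg => L × L
  | .inr .p => Fin 3 → G
instance JMa : ∀ v, AddCommGroup (JM L G v)
  | .inl _ => inferInstanceAs (AddCommGroup PUnit)
  | .inr .yg => inferInstanceAs (AddCommGroup (Fin 3 → G))
  | .inr .qg => inferInstanceAs (AddCommGroup (L × L))
  | .inr .p => inferInstanceAs (AddCommGroup (Fin 3 → G))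
noncomputable instance JMm : ∀ v, Module ((E γ).KG v) (JM L G v)
  | .inl v => inferInstanceAs (Module (K L G v) PUnit)
  | .inr .yg => inferInstanceAs (Module G (Fin 3 → G))
  | .inr .qg => inferInstanceAs (Module L (L × L))
  | .inr .p => inferInstanceAs (Module G (Fin 3 → G))

def Jn : ∀ {s t : X}, D s t → (JM L G (.inr s) →+ JM L G (.inr t))
  | _, _, .d1 => hN γ y z
  | _, _, .d2 => AddMonoidHom.id (Fin 3 → G)
noncomputable def Jact : ∀ {s t : N ⊕ X}, (E γ).αG s t → (JM L G s →+ JM L G t)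
  | _, _, .old _ => 0
  | _, _, .p _ => 0
  | _, _, .new d => Jn γ y z d

noncomputable def J : QRep (E γ).rG where
  M := JM L G
  act a := Jact γ y z a
  rel x1 y1 h := by
    cases h with
    | old x1 y1 h =>
      have h0 : FreeAlgebra.lift ℤ (repρ (K := (E γ).KG) (α := (E γ).αG) (JM L G) (fun a => Jact γ y z a)) (E γ).e0 = 0 := by
        rw [ExtD.e0, map_sum]
        exact Finset.sum_eq_zero fun v _ => rep_sc0 _ _ _ _ (inferInstanceAs (Subsingleton PUnit))
      rw [map_mul, map_mul]
      exact (congrArg _ h0).trans ((mul_zero _).trans ((mul_zero _).symm.trans (congrArg _ h0.symm)))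
    | p x k => exact rep_semi (K := (E γ).KG) (JM L G) (fun a => Jact γ y z a) (ExtD.αG.p (E := E γ) x) _ _ (fun m => by
      cases x with
      | yg =>
        let k' : G := k
        exact (smul_zero (A := Fin 3 → G) k').symm
      | qg =>
        let k' : L := k
        exact (smul_zero (A := L × L) k').symm
      | p =>
        let k' : G := k
        exact (smul_zero (A := Fin 3 → G) k').symm)
    | new d k =>
      refine rep_semi (K := (E γ).KG) (JM L G) (fun a => Jact γ y z a) (ExtD.αG.new (E := E γ) d) _ _ (fun m => ?_)
      cases d with
      | d1 => exact hN_smul γ _ _ k m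
      | d2 => rfl
    | @newp x' y' d =>
      have h0 := rep_ar0 (K := (E γ).KG) (JM L G) (fun a => Jact γ y z a) (ExtD.αG.p (E := E γ) x') rfl
      have h1 := rep_ar0 (K := (E γ).KG) (JM L G) (fun a => Jact γ y z a) (ExtD.αG.p (E := E γ) y') rfl
      rw [map_mul, map_mul, map_mul]
      refine (congrArg _ h0).trans ((mul_zero _).trans ?_)
      symm
      rw [mul_assoc]
      exact (congrArg (· * _) h1).trans (zero_mul _)

theorem J_stab (hy : ∀ g, y ≠ γ g) (hz : ∀ c d, z ≠ y * γ c + γ d) :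
    (qRank (E γ).rG (cG n)).Stab (J γ y z).X := by
  refine QRep.stab _ ?_ ?_ ?_
  · intro v
    rcases v with v | v
    · exact inferInstanceAs (Module.Finite (K L G v) PUnit)
    cases v with
    | yg => exact inferInstanceAs (Module.Finite G (Fin 3 → G))
    | qg => exact inferInstanceAs (Module.Finite L (L × L))
    | p => exact inferInstanceAs (Module.Finite G (Fin 3 → G))
  · rw [Fintype.sum_sum_type, sum_N, sum_X]
    change (-((n : ℤ) - 2)) * (Module.finrank G PUnit : ℤ)
      + ((n : ℤ) - 2) * (Module.finrank L PUnit : ℤ)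
      + 0 * (Module.finrank L PUnit : ℤ)
      + (-2 * (Module.finrank G (Fin 3 → G) : ℤ)
      + 2 * (Module.finrank L (L × L) : ℤ)
      + 1 * (Module.finrank G (Fin 3 → G) : ℤ)) = 1
    rw [Module.finrank_fin_fun, Module.finrank_prod, Module.finrank_self,
      Module.finrank_zero_of_subsingleton, Module.finrank_zero_of_subsingleton]; norm_num
  · intro W hW hne
    let Y : Submodule G (Fin 3 → G) := W (.inr .yg)
    let Q : Submodule L (L × L) := W (.inr .qg)
    let P : Submodule G (Fin 3 → G) := W (.inr .p)
    rw [Fintype.sum_sum_type, sum_N, sum_X]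
    have hle : Y ≤ P := fun m hm => hW _ _ (ExtD.αG.new (E := E γ) D.d2) m hm
    have h1 : Module.finrank G Y ≤ Module.finrank G P := Submodule.finrank_mono hle
    have main : 1 ≤ (-2 * (Module.finrank G Y : ℤ)
      + 2 * (Module.finrank L Q : ℤ) + 1 * (Module.finrank G P : ℤ)) := by
      by_cases hY : Y = ⊥
      · have h2 : Module.finrank G Y = 0 := by rw [hY]; exact finrank_bot G _
        have h3 : Q ≠ ⊥ ∨ P ≠ ⊥ := by
          by_contra! h
          obtain ⟨v, hv⟩ := hne
          rcases v with v | v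
          · apply hv
            let W' : Submodule (K L G v) PUnit := W (.inl v)
            exact Subsingleton.elim W' ⊥
          cases v with
          | yg => exact hv hY
          | qg => exact hv h.1
          | p => exact hv h.2
        rcases h3 with h3 | h3
        · have h4 : 1 ≤ Module.finrank L Q := Submodule.one_le_finrank_iff.2 h3
          omega
        · have h4 : 1 ≤ Module.finrank G P := Submodule.one_le_finrank_iff.2 h3
          omega
      · have := hN_dim γ y z hy hz Y Q (fun a ha => hW _ _ (ExtD.αG.new (E := E γ) D.d1) a ha) hY
        omega
    let W1 : Submodule G PUnit := W (.inl .y1)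
    let W2 : Submodule L PUnit := W (.inl .q1)
    let W3 : Submodule L PUnit := W (.inl .q)
    change 1 ≤ (-((n : ℤ) - 2)) * (Module.finrank G W1 : ℤ) + ((n : ℤ) - 2) * (Module.finrank L W2 : ℤ)
      + 0 * (Module.finrank L W3 : ℤ) + (-2 * (Module.finrank G Y : ℤ)
      + 2 * (Module.finrank L Q : ℤ) + 1 * (Module.finrank G P : ℤ))
    rw [Module.finrank_zero_of_subsingleton (R := G) (M := W1),
      Module.finrank_zero_of_subsingleton (R := L) (M := W2)]
    simpa using main
end A2

theorem RankDat.Gen.stab_inj {Λ : Type} [Ring Λ] {R : RankDat Λ} {I V M : Type} [AddCommGroup I] [Module Λ I]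
    [AddCommGroup V] [Module Λ V] [AddCommGroup M] [Module Λ M] {i : I →ₗ[Λ] V} (h : R.Gen i)
    (hM : R.Stab M) (a : M →ₗ[Λ] V) (ha : a ≠ 0) : Function.Injective a := by
  have := R.fin hM.good
  obtain ⟨N, hN, hs⟩ := h.cov (LinearMap.range a) (by
    rw [LinearMap.range_eq_map]; exact (Module.Finite.fg_top).map a)
  let a' : M →ₗ[Λ] N := a.codRestrict N (fun c => hN ⟨c, rfl⟩)
  have h1 := hM.inj hs a' (by
    intro h0
    apply ha
    ext x
    exact congrArg Subtype.val (LinearMap.congr_fun h0 x))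
  intro x y hxy
  exact h1 (Subtype.ext hxy)

theorem ExtD.PV_dim {ν : Type} [Fintype ν] [DecidableEq ν] {K : ν → Type} [∀ v, DivisionRing (K v)]
    {α : ν → ν → Type} {r0 : FA K α → FA K α → Prop} {νX : Type} [Fintype νX] [DecidableEq νX]
    (E : ExtD r0 νX) (x0 : νX) {V : Type} [AddCommGroup V] [Module E.ΛG V]
    (hs : ∀ y, IsEmpty (E.δ x0 y)) {cG : ν ⊕ νX → ℤ} (hc : cG (Sum.inr x0) = 1)
    {iG : (QRep.sim (Sum.inr x0) (simRelG E x0) (E.KG (Sum.inr x0))).X →ₗ[E.ΛG] V} (hGG : (qRank E.rG cG).Gen iG)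
    (p p' : E.PV x0 V) (hp : p ≠ 0) : ∃ d : Module.End E.ΛG V, d • p = p' := by
  have hst : (qRank E.rG cG).Stab (QRep.sim (Sum.inr x0) (simRelG E x0) (E.KG (Sum.inr x0))).X :=
    sim_stab _ _ _ hc
  have h1 : ∀ q : E.PV x0 V, simHom (Sum.inr x0) (simRelG E x0) _ (E.sink x0 hs)
      (LinearMap.toSpanSingleton (E.KG (Sum.inr x0)) (E.PV x0 V) q)
      ((QRep.sim (Sum.inr x0) (simRelG E x0) _).single (Sum.inr x0) (fun _ => 1)) = (q : V) := by
    intro q; rw [simHom_single, LinearMap.toSpanSingleton_apply, one_smul]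
  obtain ⟨d, hd⟩ := hGG.one_dim hst (simHom (Sum.inr x0) (simRelG E x0) _ (E.sink x0 hs)
    (LinearMap.toSpanSingleton (E.KG (Sum.inr x0)) (E.PV x0 V) p))
    (simHom (Sum.inr x0) (simRelG E x0) _ (E.sink x0 hs)
    (LinearMap.toSpanSingleton (E.KG (Sum.inr x0)) (E.PV x0 V) p')) (by
      intro h0
      apply hp
      apply Subtype.ext
      rw [← h1 p, h0]; rfl)
  refine ⟨d, Subtype.ext ?_⟩
  rw [Vt.coe_end, ← h1 p, ← h1 p', ← hd]; rfl

namespace A2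
variable {n : ℕ} {L G : Type} [DivisionRing L] [DivisionRing G] (γ : G →+* L) (y z : L)

noncomputable def jV : ∀ v, JM L G v →+ (E γ).TM (NN γ y z).X v
  | .inl _ => 0
  | .inr .yg => ((NN γ y z).vtEquiv .y1).toLinearMap.toAddMonoidHom
  | .inr .qg => ((NN γ y z).vtEquiv .q1).toLinearMap.toAddMonoidHom
  | .inr .p => ((NN γ y z).vtEquiv .q).toLinearMap.toAddMonoidHom.comp (hN γ y z)

noncomputable def jT : (J γ y z).X →ₗ[(E γ).ΛG] ((E γ).T (NN γ y z).X).X :=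
  QRep.mapX (J γ y z) ((E γ).T (NN γ y z).X) (jV γ y z)
    (by
      intro v k m
      rcases v with v | v
      · let k' : K L G v := k
        exact (smul_zero (A := Vt (QAlg.sc (r0 γ) v) (NN γ y z).X) k').symm
      cases v with
      | yg =>
        let k' : G := k
        let m' : Fin 3 → G := m
        exact map_smul ((NN γ y z).vtEquiv .y1) k' m'
      | qg =>
        let k' : L := k
        let m' : L × L := m
        exact map_smul ((NN γ y z).vtEquiv .q1) k' m'
      | p =>
        let k' : G := k
        let m' : Fin 3 → G := m
        refine Eq.trans (congrArg ((NN γ y z).vtEquiv .q) (hN_smul γ y z k' m')) ?_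
        exact map_smul ((NN γ y z).vtEquiv .q) (γ k') (hN γ y z m'))
    (by
      intro s t a m
      cases a with
      | old a => exact (map_zero ((E γ).Tact _ (ExtD.αG.old a))).symm
      | p x => exact (map_zero (jV γ y z (.inr x))).trans (map_zero ((E γ).Tact _ (ExtD.αG.p x))).symm
      | new d =>
        cases d with
        | d1 =>
          apply Subtype.ext
          exact ((NN γ y z).ar_single α.u _).symm
        | d2 =>
          apply Subtype.ext
          let m' : Fin 3 → G := m
          change (NN γ y z).single .q (hN γ y z m') = QAlg.mk (r0 γ) (FA.ar α.v * FA.ar α.u) • (NN γ y z).single .y1 m'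
          rw [map_mul, mul_smul]
          refine Eq.trans ?_ (congrArg (QAlg.ar (r0 γ) α.v • ·) ((NN γ y z).ar_single α.u m').symm)
          exact ((NN γ y z).ar_single α.v _).symm)

theorem jT_p (m : Fin 3 → G) : jT γ y z ((J γ y z).single (.inr .p) m) =
    ((E γ).T (NN γ y z).X).single (.inr .p) ((NN γ y z).vtEquiv .q (hN γ y z m)) := by
  funext v
  by_cases h : v = .inr .p
  · subst h
    refine Eq.trans ?_ (QRep.single_same _ _ _).symm
    refine (QRep.mapX_apply _ _ _ _ _ _ _).trans ?_
    exact congrArg (jV γ y z (.inr .p)) (QRep.single_same (J γ y z) (.inr .p) m)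
  · refine Eq.trans ?_ (QRep.single_ne _ h _).symm
    refine (QRep.mapX_apply _ _ _ _ _ _ _).trans ?_
    exact (congrArg (jV γ y z v) (QRep.single_ne (J γ y z) h m)).trans (map_zero _)

theorem hsE (x : X) : IsEmpty ((E γ).δ .p x) := ⟨fun d => by cases (d : D .p x)⟩

section
variable {V : Type} [AddCommGroup V] [Module (E γ).ΛG V]

noncomputable def θ (h : (NN γ y z).X →ₗ[QAlg (r0 γ)] ((E γ).U V).X) : (J γ y z).X →ₗ[(E γ).ΛG] V :=
  (E γ).up h ∘ₗ jT γ y z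

noncomputable def κN (m : Fin 3 → G) (h : (NN γ y z).X →ₗ[QAlg (r0 γ)] ((E γ).U V).X) : (E γ).PV .p V :=
  (E γ).κ0 X.p ((NN γ y z).single .q (hN γ y z m)) h

theorem θ_p (h : (NN γ y z).X →ₗ[QAlg (r0 γ)] ((E γ).U V).X) (m : Fin 3 → G) :
    θ γ y z h ((J γ y z).single (.inr .p) m) = (κN γ y z m h : V) := by
  refine (congrArg ((E γ).up h) (jT_p γ y z m)).trans ?_
  exact (E γ).up_inr h X.p _

theorem rel (hy : ∀ g, y ≠ γ g) (hz : ∀ c d, z ≠ y * γ c + γ d)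
    {iG : (QRep.sim (Sum.inr X.p) (simRelG (E γ) X.p) ((E γ).KG (Sum.inr X.p))).X →ₗ[(E γ).ΛG] V}
    (hGG : (qRank (E γ).rG (cG n)).Gen iG) (m0 m : Fin 3 → G) (hm0 : m0 ≠ 0) :
    ∃ c : Module.End (Module.End (E γ).ΛG V) ((E γ).PV .p V),
      ∀ h : (NN γ y z).X →ₗ[QAlg (r0 γ)] ((E γ).U V).X, κN γ y z m h = c (κN γ y z m0 h) := by
  by_cases hall : ∀ h : (NN γ y z).X →ₗ[QAlg (r0 γ)] ((E γ).U V).X, θ γ y z h = 0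
  · refine ⟨0, fun h => Subtype.ext ?_⟩
    rw [← θ_p, hall h]; rfl
  push Not at hall
  obtain ⟨h0, hh0⟩ := hall
  have hinj := hGG.stab_inj (J_stab γ y z hy hz) _ hh0
  have hp0 : κN γ y z m0 h0 ≠ 0 := by
    intro h1
    have h2 := congrArg Subtype.val h1
    rw [← θ_p] at h2
    have h3 := hinj (h2.trans (map_zero (θ γ y z h0)).symm)
    exact hm0 ((J γ y z).single_inj (.inr .p) (h3.trans (map_zero _).symm))
  let s := LinearMap.toSpanSingleton (Module.End (E γ).ΛG V) ((E γ).PV .p V) (κN γ y z m0 h0)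
  have hb : Function.Bijective s := by
    constructor
    · rw [injective_iff_map_eq_zero]
      intro d hd
      rcases hGG.isUnit_or d with ⟨u, rfl⟩ | h
      · exfalso
        apply hp0
        change (u : Module.End (E γ).ΛG V) • κN γ y z m0 h0 = 0 at hd
        rw [← one_smul (Module.End (E γ).ΛG V) (κN γ y z m0 h0), ← u.inv_mul, mul_smul, hd, smul_zero]
      · exact h
    · intro p
      exact (E γ).PV_dim X.p (hsE γ) rfl hGG _ p hp0
  refine ⟨(LinearMap.toSpanSingleton (Module.End (E γ).ΛG V) ((E γ).PV .p V) (κN γ y z m h0)) ∘ₗ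
    (LinearEquiv.ofBijective s hb).symm.toLinearMap, fun h => ?_⟩
  obtain ⟨d, hd⟩ := hGG.one_dim (J_stab γ y z hy hz) (θ γ y z h0) (θ γ y z h) hh0
  let d' : Module.End (E γ).ΛG V := d
  have hk : ∀ m, κN γ y z m h = d' • κN γ y z m h0 := by
    intro m
    apply Subtype.ext
    rw [← θ_p, ← hd, Vt.coe_end, ← θ_p]; rfl
  have h5 : (LinearEquiv.ofBijective s hb).symm (κN γ y z m0 h) = d' := by
    rw [LinearEquiv.symm_apply_eq, hk]; rfl
  rw [LinearMap.comp_apply, hk]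
  exact (congrArg (· • κN γ y z m h0) h5).symm
end
end A2

namespace A2
variable {n : ℕ} {L G : Type} [DivisionRing L] [DivisionRing G] (γ : G →+* L) 

section
variable {V : Type} [AddCommGroup V] [Module (E γ).ΛG V]
  {W : Type} [AddCommGroup W] [Module (QAlg (r0 γ)) W]

noncomputable def kh (ζ : W →ₗ[QAlg (r0 γ)] ((E γ).U V).X) : W →+ (E γ).PV .p V :=
  AddMonoidHom.mk' (fun m => (E γ).κ0 X.p m ζ) (fun a b => Subtype.ext (by
    change (E γ).arp X.p • (E γ).toV V (ζ (a + b)) = (E γ).arp X.p • (E γ).toV V (ζ a) +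
      (E γ).arp X.p • (E γ).toV V (ζ b)
    rw [map_add, map_add, smul_add]))

theorem kh_sc (ζ : W →ₗ[QAlg (r0 γ)] ((E γ).U V).X) (g : G) (m : W) :
    kh γ ζ (QAlg.sc (r0 γ) .q (γ g) • m) = (E γ).ιP X.p g (kh γ ζ m) := by
  apply Subtype.ext
  change (E γ).arp X.p • (E γ).toV V (ζ (QAlg.sc (r0 γ) .q (γ g) • m)) =
    (E γ).scr X.p g • (E γ).arp X.p • (E γ).toV V (ζ m)
  rw [map_smul, ExtD.toV_sc, smul_smul]
  have := (E γ).rel_p X.p g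
  refine (congrArg (· • (E γ).toV V (ζ m)) this).trans ?_
  exact mul_smul _ _ _
end

theorem stepc (R : L ≃+ (Fin n → G)) (hR : ∀ g u, R (γ g * u) = g • R u) (hn : 1 < n)
    (φ : L →+* Matrix (Fin n) (Fin n) G) (hφ : ∀ f r, R (bs R r * f) = φ f r)
    (i0 i1 : Fin n) (h01 : i1 ≠ i0) (hb0 : bs R i0 = 1) (z : L) (hy : ∀ g, bs R i1 ≠ γ g)
    (hz : ∀ c d, z ≠ bs R i1 * γ c + γ d) :
    ∃ (F' G' : Type) (_ : DivisionRing F') (_ : DivisionRing G')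
      (ιF : L →+* F') (ιG : G →+* G') (φ' : F' →+* Matrix (Fin n) (Fin n) G'),
      (∀ f, φ' (ιF f) = (φ f).map ιG) ∧ ∃ x, (∀ j, j ≠ i0 → φ' x i0 j = 0) ∧
        ∀ j, j ≠ i0 → φ' x i1 j = ιG (R z j) := by
  have hn0 : 0 < n := by omega
  obtain ⟨VF, _, _, iF, hGF⟩ := RankDat.exists_gen (I_stab γ)
  obtain ⟨V, _, _, iG, hGG⟩ := RankDat.exists_gen (sim_stab (r0 := (E γ).rG) (Sum.inr X.p)
    (_root_.simRelG (E γ) X.p) (cG n) rfl)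
  obtain ⟨F', G', i1', i2', ιF, β, φ', h1, h2⟩ := ExtD.step (E γ) X.p (e γ R) φ hn0
    (hsE γ) (cF := cF) (cG := cG n) rfl (fun M _ _ h => hgood γ M R hR hn0 h)
    (fun M _ _ h => hnull γ M R hR hn h) (hli γ R hR) (hχ γ R hR hn0) 
    (fun W _ he => hW γ R hR hn0 W he) (ρ γ) (hρ γ R hR φ hφ) hGF hGG
  refine ⟨F', G', i1', i2', ιF, β.comp ((E γ).ιP X.p), φ', h1, ?_⟩
  set y := bs R i1 with hydef
  -- the object NN and the comparison map
  have hstN := NN_stab γ y z hy hz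
  let s : (I γ).X →ₗ[QAlg (r0 γ)] (NN γ y z).X := hom γ ((NN γ y z).vtEquiv .q ((1, 0) : L × L))
  have hs1 : ∀ u : L, s (sg γ u : (I γ).X) = (NN γ y z).single .q ((u, 0) : L × L) := by
    intro u
    refine (hom_sg γ _ u).trans ?_
    refine ((NN γ y z).sc_single .q u ((1, 0) : L × L)).trans ?_
    refine congrArg ((NN γ y z).single .q) ?_
    change (u * 1, u * 0) = ((u, 0) : L × L)
    rw [mul_one, mul_zero]
  have hs0 : s ≠ 0 := by
    intro h0
    have h3 := hs1 1
    rw [h0, LinearMap.zero_apply] at h3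
    have h4 : ((1, 0) : L × L) = 0 := (NN γ y z).single_inj .q (h3.symm.trans (map_zero _).symm)
    exact one_ne_zero (congrArg Prod.fst h4)
  obtain ⟨ψ, hψ⟩ := hGF.obj _ hstN s hs0
  have hψ0 : ∀ u : L, ψ ((NN γ y z).single .q ((u, 0) : L × L)) = iF (sg γ u : (I γ).X) := by
    intro u
    rw [← hψ, LinearMap.comp_apply, hs1]
  let vm : Vt (QAlg.sc (r0 γ) .q) VF := Vt.map _ ψ ((NN γ y z).vtEquiv .q ((0, 1) : L × L))
  have hvm : ∀ u : L, QAlg.sc (r0 γ) .q u • (vm : VF) = ψ ((NN γ y z).single .q ((0, u) : L × L)) := by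
    intro u
    change QAlg.sc (r0 γ) .q u • ψ ((NN γ y z).single .q ((0, 1) : L × L)) = _
    rw [← map_smul]
    refine congrArg ψ (((NN γ y z).sc_single .q u ((0, 1) : L × L)).trans ?_)
    refine congrArg ((NN γ y z).single .q) ?_
    change (u * 0, u * 1) = ((0, u) : L × L)
    rw [mul_one, mul_zero]
  obtain ⟨d, hd⟩ := hGF.one_dim (I_stab γ) iF (hom γ vm) hGF.i_ne
  have hd' : ∀ u : L, d (iF (sg γ u : (I γ).X)) = ψ ((NN γ y z).single .q ((0, u) : L × L)) := by
    intro u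
    rw [← LinearMap.comp_apply, hd, hom_sg, hvm]
  have m0 : hN γ y z ![1, 0, 0] = (1, 0) := by simp [hN]
  have m1 : hN γ y z ![0, 1, 0] = (0, 1) := by simp [hN]
  have m2 : hN γ y z ![0, 0, 1] = (z, -y) := by simp [hN]
  have hm0 : (![1, 0, 0] : Fin 3 → G) ≠ 0 := fun h => one_ne_zero (congrFun h 0)
  obtain ⟨cG', hcG⟩ := rel γ y z hy hz hGG ![1, 0, 0] ![0, 1, 0] hm0
  obtain ⟨dG, hdG⟩ := rel γ y z hy hz hGG ![1, 0, 0] ![0, 0, 1] hm0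
  have hk0 : ∀ ζ : VF →ₗ[QAlg (r0 γ)] ((E γ).U V).X, κN γ y z ![1, 0, 0] (ζ ∘ₗ ψ) =
      kh γ ζ (iF (sg γ 1 : (I γ).X)) := by
    intro ζ
    unfold κN
    rw [m0, ← hψ0]; rfl
  have hk1 : ∀ ζ : VF →ₗ[QAlg (r0 γ)] ((E γ).U V).X, κN γ y z ![0, 1, 0] (ζ ∘ₗ ψ) =
      kh γ ζ (ψ ((NN γ y z).single .q ((0, 1) : L × L))) := by
    intro ζ
    unfold κN
    rw [m1]; rfl
  have hk2 : ∀ ζ : VF →ₗ[QAlg (r0 γ)] ((E γ).U V).X, κN γ y z ![0, 0, 1] (ζ ∘ₗ ψ) =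
      kh γ ζ (iF (sg γ z : (I γ).X)) - kh γ ζ (ψ ((NN γ y z).single .q ((0, y) : L × L))) := by
    intro ζ
    unfold κN
    rw [m2, ← map_sub, ← hψ0, ← map_sub]
    have h3 : ((z, -y) : L × L) = (z, 0) - (0, y) := by simp
    rw [h3]
    have h4 : (NN γ y z).single .q (((z, 0) - (0, y) : L × L)) = (NN γ y z).single .q ((z, 0) : L × L) -
      (NN γ y z).single .q ((0, y) : L × L) := map_sub ((NN γ y z).single .q) _ _
    rw [h4]; rfl
  have hsum : ∀ ζ : VF →ₗ[QAlg (r0 γ)] ((E γ).U V).X, kh γ ζ (iF (sg γ z : (I γ).X)) =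
      ∑ j, (E γ).ιP X.p (R z j) (kh γ ζ (iF (sg γ (bs R j) : (I γ).X))) := by
    intro ζ
    have h3 := sum_e γ R hR (R z)
    rw [R.symm_apply_apply] at h3
    rw [← h3, map_sum, map_sum]
    refine Finset.sum_congr rfl fun j _ => ?_
    rw [map_smul, kh_sc]
  obtain ⟨x, hx⟩ := h2 d (fun r => r = i0 ∨ r = i1)
    (fun r j => if r = i0 then (if j = i0 then cG' else 0) else
      (E γ).ιP X.p (R z j) - (if j = i0 then dG else 0)) (by
    rintro r hr ζ
    have key : kh γ ζ (d (iF (sg γ (bs R r) : (I γ).X))) = ∑ j, (if r = i0 then (if j = i0 then cG' else 0) else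
      (E γ).ιP X.p (R z j) - (if j = i0 then dG else 0)) (kh γ ζ (iF (sg γ (bs R j) : (I γ).X))) := by
      rw [hd']
      rcases hr with rfl | rfl
      · simp only [if_true]
        rw [Finset.sum_eq_single r]
        · rw [if_pos rfl, hb0, ← hk0, ← hk1, hcG]
        · intro j _ hj; rw [if_neg hj]; rfl
        · simp
      · simp only [if_neg h01, LinearMap.sub_apply]
        rw [Finset.sum_sub_distrib, ← hsum]
        have h3 : ∑ j, (if j = i0 then dG else 0) (kh γ ζ (iF (sg γ (bs R j) : (I γ).X))) =
            dG (kh γ ζ (iF (sg γ 1 : (I γ).X))) := by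
          rw [Finset.sum_eq_single i0]
          · rw [if_pos rfl, hb0]
          · intro j _ hj; rw [if_neg hj]; rfl
          · simp
        rw [h3, ← hk0, ← hdG, hk2, sub_sub_cancel]
    exact congrArg Subtype.val key)
  refine ⟨x, fun j hj => ?_, fun j hj => ?_⟩
  · rw [hx i0 (Or.inl rfl), if_pos rfl, if_neg hj, map_zero]
  · rw [hx i1 (Or.inr rfl), if_neg h01, if_neg hj, sub_zero]; rfl
end A2

namespace A2
theorem main {n : ℕ} {F G : Type} [DivisionRing F] [DivisionRing G] (φ : F →+* Matrix (Fin n) (Fin n) G)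
    (hn : 1 < n) (A : Matrix (Fin n) (Fin n) G) :
    ∃ (F' G' : Type) (_ : DivisionRing F') (_ : DivisionRing G')
    (ιF : F →+* F') (ιG : G →+* G') (φ' : F' →+* Matrix (Fin n) (Fin n) G'),
    (∀ f, φ' (ιF f) = (φ f).map ιG) ∧ ∃ x, ∀ i j : Fin n, (i : ℕ) < 2 → 1 ≤ (j : ℕ) → φ' x i j = ιG (A i j) := by
  have hn0 : 0 < n := by omega
  obtain ⟨L, H, _, _, ιF, ιG, φ1, hc, hb⟩ := Om.main hn0 φ
  let i0 : Fin n := ⟨0, hn0⟩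
  let i1 : Fin n := ⟨1, hn⟩
  have h01 : i1 ≠ i0 := by intro h; have := congrArg Fin.val h; simp [i0, i1] at this
  have hij : ∀ j : Fin n, 1 ≤ (j : ℕ) → j ≠ i0 := by
    intro j hj h; rw [h] at hj; simp [i0] at hj
  have hi : ∀ i : Fin n, (i : ℕ) < 2 → i = i0 ∨ i = i1 := by
    intro i h
    rcases Nat.lt_or_ge (i : ℕ) 1 with h' | h'
    · left; apply Fin.ext; change (i : ℕ) = 0; omega
    · right; apply Fin.ext; change (i : ℕ) = 1; omega
  let R : L ≃+ (Fin n → H) := AddEquiv.ofBijective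
    (AddMonoidHom.mk' (fun x => φ1 x i0) (fun a b => by rw [map_add]; rfl)) hb
  have hRd : ∀ x, R x = φ1 x i0 := fun x => rfl
  have hRm : ∀ x u, R (x * u) = Matrix.vecMul (R x) (φ1 u) := by
    intro x u
    rw [hRd, hRd, map_mul]; rfl
  have hR1 : R 1 = Pi.single i0 1 := by
    rw [hRd, map_one]; funext j
    simp [Matrix.one_apply, Pi.single_apply, eq_comm]
  have hRs : ∀ (g : H) u, R (R.symm (Pi.single i0 g) * u) = g • R u := by
    intro g u
    rw [hRm, R.apply_symm_apply, hRd]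
    funext j
    simp [Matrix.single_vecMul]
  let γ : H →+* L :=
    { toFun := fun g => R.symm (Pi.single i0 g)
      map_one' := by rw [← hR1, R.symm_apply_apply]
      map_zero' := by rw [Pi.single_zero, map_zero]
      map_add' := fun a b => by rw [Pi.single_add, map_add]
      map_mul' := fun a b => by
        apply R.injective
        rw [hRs, R.apply_symm_apply, R.apply_symm_apply, ← Pi.single_smul, smul_eq_mul] }
  have hγ : ∀ g, R (γ g) = Pi.single i0 g := fun g => R.apply_symm_apply _
  have hR : ∀ g u, R (γ g * u) = g • R u := hRs
  have hφ : ∀ f r, R (bs R r * f) = φ1 f r := by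
    intro f r
    rw [hRm, bs, R.apply_symm_apply]
    exact Matrix.single_one_vecMul r (φ1 f)
  have hb0 : bs R i0 = 1 := by rw [bs, ← hR1, R.symm_apply_apply]
  have hy : ∀ g, bs R i1 ≠ γ g := by
    intro g h
    have h2 := congrFun (congrArg R h) i1
    rw [hγ, bs, R.apply_symm_apply, Pi.single_eq_same, Pi.single_eq_of_ne h01] at h2
    exact one_ne_zero h2
  let a0 : Fin n → H := fun j => ιG (A i0 j)
  let a1 : Fin n → H := fun j => ιG (A i1 j)
  let w : L := R.symm a0
  have hw : φ1 w i0 = a0 := R.apply_symm_apply a0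
  let z : L := R.symm (a1 - φ1 w i1)
  have hz' : ∀ j, R z j = a1 j - φ1 w i1 j := fun j => congrFun (R.apply_symm_apply (a1 - φ1 w i1)) j
  by_cases hz : ∀ c d, z ≠ bs R i1 * γ c + γ d
  · obtain ⟨F', G', _, _, κF, κG, φ', h1, x, hx0, hx1⟩ := stepc γ R hR hn φ1 hφ i0 i1 h01 hb0 z hy hz
    refine ⟨F', G', _, _, κF.comp ιF, κG.comp ιG, φ', ?_, κF w + x, ?_⟩
    · intro f
      rw [RingHom.comp_apply, h1, hc]; rfl
    · intro i j h2 h3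
      rw [map_add, Matrix.add_apply, h1, Matrix.map_apply]
      rcases hi i h2 with rfl | rfl
      · rw [hx0 j (hij j h3), add_zero, hw]; rfl
      · rw [hx1 j (hij j h3), ← map_add, hz', add_sub_cancel]; rfl
  · push Not at hz
    obtain ⟨c, d, hcd⟩ := hz
    refine ⟨L, H, _, _, ιF, ιG, φ1, hc, w + γ c, ?_⟩
    intro i j h2 h3
    rw [map_add, Matrix.add_apply]
    rcases hi i h2 with rfl | rfl
    · rw [hw, ← hRd, hγ, Pi.single_eq_of_ne (hij j h3), add_zero]
    · have h4 := hz' j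
      rw [hcd, map_add, hφ, hγ, Pi.add_apply, Pi.single_eq_of_ne (hij j h3), add_zero] at h4
      rw [h4, add_sub_cancel]
end A2

/-- the raw extension property -/
def ExtP (n : ℕ) (F G : Type) [DivisionRing F] [DivisionRing G] (φ : F →+* Matrix (Fin n) (Fin n) G)
    (a : ℕ) (A : Matrix (Fin n) (Fin n) G) : Prop :=
    ∃ (F' G' : Type) (_ : DivisionRing F') (_ : DivisionRing G')
    (ιF : F →+* F') (ιG : G →+* G') (φ' : F' →+* Matrix (Fin n) (Fin n) G'),
    (∀ f, φ' (ιF f) = (φ f).map ιG) ∧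
      ∃ x, ∀ i j : Fin n, (i : ℕ) < a → a ≤ (j : ℕ) + 1 → φ' x i j = ιG (A i j)

open MulOpposite in
/-- anti-transpose -/
def opHom {n : ℕ} {F G : Type} [DivisionRing F] [DivisionRing G] (φ : F →+* Matrix (Fin n) (Fin n) G) :
    Fᵐᵒᵖ →+* Matrix (Fin n) (Fin n) Gᵐᵒᵖ where
  toFun f := Matrix.of fun i j => op (φ f.unop j.rev i.rev)
  map_one' := by
    ext i j
    simp only [unop_one, map_one, Matrix.of_apply, Matrix.one_apply]
    by_cases h : i = j
    · subst h; simp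
    · rw [if_neg h, if_neg]
      · rfl
      · intro h'; exact h (Fin.rev_injective h'.symm)
  map_mul' f g := by
    ext i j
    simp only [unop_mul, map_mul, Matrix.of_apply, Matrix.mul_apply]
    rw [← Equiv.sum_comp Fin.revPerm]
    simp [Finset.op_sum]
  map_zero' := by
    ext i j
    simp
  map_add' f g := by
    ext i j
    simp

open MulOpposite in
theorem ExtP.dual {n : ℕ} {F G : Type} [DivisionRing F] [DivisionRing G] (φ : F →+* Matrix (Fin n) (Fin n) G)
    (a b : ℕ) (hab : a + b = n + 1) (A : Matrix (Fin n) (Fin n) G)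
    (h : ExtP n Fᵐᵒᵖ Gᵐᵒᵖ (opHom φ) b (Matrix.of fun i j => op (A j.rev i.rev))) : ExtP n F G φ a A := by
  obtain ⟨F', G', _, _, ιF, ιG, φ', hc, x, hx⟩ := h
  let φ2 : F'ᵐᵒᵖᵐᵒᵖ →+* Matrix (Fin n) (Fin n) G'ᵐᵒᵖᵐᵒᵖ := opHom (opHom φ')
  refine ⟨F'ᵐᵒᵖ, G'ᵐᵒᵖ, inferInstance, inferInstance,
    (RingHom.op.symm (((RingEquiv.opOp F').toRingHom.comp ιF))),
    (RingHom.op.symm (((RingEquiv.opOp G').toRingHom.comp ιG))), opHom φ', ?_, op x, ?_⟩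
  · intro f
    ext i j
    have := congrFun (congrFun (hc (op f)) j.rev) i.rev
    change op (φ' (ιF (op f)) j.rev i.rev) = op (ιG (op (φ f i j)))
    rw [this]
    change op (ιG (op (φ f i.rev.rev j.rev.rev))) = _
    rw [Fin.rev_rev, Fin.rev_rev]
  · intro i j hi hj
    change op (φ' x j.rev i.rev) = op (ιG (op (A i j)))
    rw [hx]
    · change op (ιG (op (A i.rev.rev j.rev.rev))) = _
      rw [Fin.rev_rev, Fin.rev_rev]
    · rw [Fin.val_rev]; omega
    · rw [Fin.val_rev]; omega

theorem ExtP.one {n : ℕ} (hn : 1 < n) {F G : Type} [DivisionRing F] [DivisionRing G]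
    (φ : F →+* Matrix (Fin n) (Fin n) G) (A : Matrix (Fin n) (Fin n) G) : ExtP n F G φ 1 A := by
  have h0 : 0 < n := by omega
  obtain ⟨F', G', i1, i2, ιF, ιG, φ', hc, h⟩ := A1.main φ h0
  obtain ⟨x, hx⟩ := h (A ⟨0, h0⟩)
  refine ⟨F', G', i1, i2, ιF, ιG, φ', hc, x, ?_⟩
  intro i j hi _
  have : i = ⟨0, h0⟩ := Fin.ext (by simp; omega)
  rw [this, hx]

theorem ExtP.two {n : ℕ} (hn : 1 < n) {F G : Type} [DivisionRing F] [DivisionRing G]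
    (φ : F →+* Matrix (Fin n) (Fin n) G) (A : Matrix (Fin n) (Fin n) G) : ExtP n F G φ 2 A := by
  obtain ⟨F', G', i1, i2, ιF, ιG, φ', hc, x, hx⟩ := A2.main φ hn A
  exact ⟨F', G', i1, i2, ιF, ιG, φ', hc, x, fun i j hi hj => hx i j hi (by omega)⟩

theorem ExtP.all {n : ℕ} (hn : 1 < n) {F G : Type} [DivisionRing F] [DivisionRing G]
    (φ : F →+* Matrix (Fin n) (Fin n) G) (a : ℕ)
    (hcase : a = 1 ∨ a = 2 ∨ a = n - 1 ∨ a = n) (A : Matrix (Fin n) (Fin n) G) :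
    ExtP n F G φ a A := by
  rcases hcase with h | h | h | h
  · subst h; exact ExtP.one hn φ A
  · subst h; exact ExtP.two hn φ A
  · exact ExtP.dual φ a 2 (by omega) A (ExtP.two hn _ _)
  · exact ExtP.dual φ a 1 (by omega) A (ExtP.one hn _ _)

/-- Conjecture A holds for `a ∈ {1, 2, n-1, n}`. -/
theorem stmt5 (n : ℕ) (hn : 1 < n) (F G : Type) [DivisionRing F] [DivisionRing G]
    (φ : F →+* Matrix (Fin n) (Fin n) G) (hφ : Function.Injective φ)
    (a b : ℕ) (ha : 1 ≤ a) (hb : 1 ≤ b) (hab : a + b = n + 1)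
    (hcase : a = 1 ∨ a = 2 ∨ a = n - 1 ∨ a = n)
    (A : Matrix (Fin n) (Fin n) G) :
    Nonempty (ConjAWitness n F G φ a A) := by
  obtain ⟨F', G', i1, i2, ιF, ιG, φ', hc, hx⟩ := ExtP.all hn φ a hcase A
  have : Nonempty (Fin n) := ⟨⟨0, by omega⟩⟩
  exact ⟨{ F' := F', G' := G', instF' := i1, instG' := i2, ιF := ιF, ιG := ιG,
           injF := ιF.injective, injG := ιG.injective, φ' := φ', injφ' := φ'.injective,
           compat := hc, exists_block := hx }⟩
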